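/- arXiv:2003.08581 — 4 statements merged into one kernel-verified Lean document; each statement's English description precedes it below -/
import Mathlib

section
/- Suppose ν₁, ν₂ are non-negative random variables on (Ω,𝓕,ℙ), Λ₁ ≤ Λ₂ are random variables with ℙ(0 < Λ₁ ≤ Λ₂ < ∞) = 1, and for ℙ-a.e. ω ∈ Ω one has Λ₁(τ_x ω)Λ₁(τ_y ω) ≤ ν₁(τ_x ω)ν₂(τ_y ω) + ν₁(τ_y ω)ν₂(τ_x ω) ≤ Λ₂(τ_x ω)Λ₂(τ_y ω) for all x,y ∈ ℝ^d. Then there is a constant C > 0 such that ν₁(ω) ≤ C·Λ₂(ω) and ν₂(ω) ≤ C·Λ₂(ω) for ℙ-a.e. ω. -/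
open MeasureTheory Filter Metric Set
open scoped ENNReal Topology

noncomputable section

/-- Euclidean space `ℝ^d`. -/
abbrev Rd (d : ℕ) : Type := EuclideanSpace ℝ (Fin d)

/-- Almost every orbit meets a measurable set of positive probability. -/
theorem orbit_meets
    {Ω : Type*} [MeasurableSpace Ω] (ℙ : Measure Ω) [IsProbabilityMeasure ℙ]
    (d : ℕ) (τ : Rd d → Ω → Ω)
    (hτadd : ∀ x y, τ x ∘ τ y = τ (x + y))
    (hτmeas : Measurable fun p : Rd d × Ω => τ p.1 p.2)
    (hτstat : ∀ x, MeasurePreserving (τ x) ℙ ℙ)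
    (hτerg : ∀ A : Set Ω, MeasurableSet A → (∀ x, τ x ⁻¹' A = A) → ℙ A = 0 ∨ ℙ A = 1)
    (G : Set Ω) (hG : MeasurableSet G) (hpos : ℙ G ≠ 0) :
    ∀ᵐ ω ∂ℙ, ∃ y, τ y ω ∈ G := by
  have hS : MeasurableSet ((fun p : Rd d × Ω => τ p.1 p.2) ⁻¹' G) := hτmeas hG
  set S := (fun p : Rd d × Ω => τ p.1 p.2) ⁻¹' G with hSdef
  have hm : Measurable fun ω : Ω => (volume : Measure (Rd d)) ((fun y => (y, ω)) ⁻¹' S) :=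
    measurable_measure_prodMk_right hS
  set A : Set Ω := {ω | (volume : Measure (Rd d)) ((fun y => (y, ω)) ⁻¹' S) = 0} with hA
  have hAm : MeasurableSet A := hm (measurableSet_singleton 0)
  have hinv : ∀ x, τ x ⁻¹' A = A := by
    intro x
    ext ω
    have : ((fun y : Rd d => (y, τ x ω)) ⁻¹' S)
        = (fun y => y + x) ⁻¹' ((fun y : Rd d => (y, ω)) ⁻¹' S) := by
      ext y
      have := congrFun (hτadd y x) ω
      simp only [Function.comp] at this
      simp [hSdef, this]
    simp only [hA, mem_preimage, mem_ofPred_eq, this, measure_preimage_add_right]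
  have h01 := hτerg A hAm hinv
  have hA0 : ℙ A = 0 := by
    rcases h01 with h | h
    · exact h
    exfalso
    have hae : ∀ᵐ ω ∂ℙ, (volume : Measure (Rd d)) ((fun y => (y, ω)) ⁻¹' S) = 0 := by
      rw [← prob_compl_eq_zero_iff hAm] at h
      exact h
    have hz : ((volume : Measure (Rd d)).prod ℙ) S = 0 := by
      rw [Measure.prod_apply_symm hS, lintegral_eq_zero_iff hm]
      exact hae
    rw [Measure.prod_apply hS] at hz
    have hc : ∀ y : Rd d, ℙ (Prod.mk y ⁻¹' S) = ℙ G := fun y =>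
      (hτstat y).measure_preimage hG.nullMeasurableSet
    simp only [hc, lintegral_const, mul_eq_zero] at hz
    rcases hz with hz | hz
    · exact hpos hz
    · exact (NeZero.ne (volume : Measure (Rd d))) (Measure.measure_univ_eq_zero.1 hz)
  have : ∀ᵐ ω ∂ℙ, ω ∉ A := measure_eq_zero_iff_ae_notMem.1 hA0
  filter_upwards [this] with ω hω
  obtain ⟨y, hy⟩ := nonempty_of_measure_ne_zero hω
  exact ⟨y, hy⟩

/-- One-sided domination. -/
theorem one_sided
    {Ω : Type*} [MeasurableSpace Ω] (ℙ : Measure Ω) [IsProbabilityMeasure ℙ]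
    (d : ℕ) (τ : Rd d → Ω → Ω)
    (hτ0 : τ 0 = id)
    (hτadd : ∀ x y, τ x ∘ τ y = τ (x + y))
    (hτmeas : Measurable fun p : Rd d × Ω => τ p.1 p.2)
    (hτstat : ∀ x, MeasurePreserving (τ x) ℙ ℙ)
    (hτerg : ∀ A : Set Ω, MeasurableSet A → (∀ x, τ x ⁻¹' A = A) → ℙ A = 0 ∨ ℙ A = 1)
    (f g L : Ω → ℝ) (hgm : Measurable g) (hLm : Measurable L)
    (hf : ∀ ω, 0 ≤ f ω) 
    (hpos : ∀ᵐ ω ∂ℙ, 0 < g ω ∧ 0 < L ω)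
    (hb : ∀ᵐ ω ∂ℙ, ∀ x y : Rd d, f (τ x ω) * g (τ y ω) ≤ L (τ x ω) * L (τ y ω)) :
    ∃ C : ℝ, 0 < C ∧ ∀ᵐ ω ∂ℙ, f ω ≤ C * L ω := by
  let G : ℕ → Set Ω := fun n => {ω | L ω < (n + 1 : ℝ) * g ω} ∩ {ω | 0 < L ω}
  have hGm : ∀ n, MeasurableSet (G n) := fun n =>
    (measurableSet_lt hLm (hgm.const_mul _)).inter (measurableSet_lt measurable_const hLm)
  have hex : ∃ n, ℙ (G n) ≠ 0 := by
    by_contra! h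
    have h1 : ∀ᵐ ω ∂ℙ, ∀ n, ω ∉ G n :=
      ae_all_iff.2 fun n => measure_eq_zero_iff_ae_notMem.1 (h n)
    have : ∀ᵐ ω ∂ℙ, False := by
      filter_upwards [h1, hpos] with ω h1 h2
      obtain ⟨n, hn⟩ := exists_nat_gt (L ω / g ω)
      rw [div_lt_iff₀ h2.1] at hn
      refine h1 n ⟨?_, h2.2⟩
      simp only [mem_ofPred_eq]
      nlinarith [h2.1]
    simp at this
    exact IsProbabilityMeasure.ne_zero ℙ this
  obtain ⟨n, hn⟩ := hex
  refine ⟨n + 1, by positivity, ?_⟩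
  filter_upwards [orbit_meets ℙ d τ hτadd hτmeas hτstat hτerg (G n) (hGm n) hn, hb]
    with ω ⟨y, hy1, hy2⟩ h
  have h0 := h 0 y
  rw [hτ0] at h0
  simp only [id, mem_ofPred_eq] at h0 hy1 hy2
  have h3 : f ω * L (τ y ω) ≤ ((n + 1 : ℝ) * L ω) * L (τ y ω) := by
    calc f ω * L (τ y ω) ≤ f ω * ((n + 1 : ℝ) * g (τ y ω)) :=
          mul_le_mul_of_nonneg_left hy1.le (hf ω)
      _ = (n + 1 : ℝ) * (f ω * g (τ y ω)) := by ring
      _ ≤ (n + 1 : ℝ) * (L ω * L (τ y ω)) := mul_le_mul_of_nonneg_left h0 (by positivity)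
      _ = _ := by ring
  exact le_of_mul_le_mul_right h3 hy2

/-- If the product-form coefficient `ν₁(τ_x ω)ν₂(τ_y ω) + ν₁(τ_y ω)ν₂(τ_x ω)` is
bounded between `Λ₁(τ_x ω)Λ₁(τ_y ω)` and `Λ₂(τ_x ω)Λ₂(τ_y ω)` with
`ℙ(0 < Λ₁ ≤ Λ₂ < ∞) = 1`, then `ν₁` and `ν₂` are a.s. dominated by a constant
multiple of `Λ₂` (ergodicity of the environment is used here). -/
theorem nu_dominated_by_Lambda
    {Ω : Type*} [MeasurableSpace Ω] (ℙ : Measure Ω) [IsProbabilityMeasure ℙ]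
    (d : ℕ) (hd : 0 < d)
    -- the stationary ergodic group of transformations
    (τ : Rd d → Ω → Ω)
    (hτ0 : τ 0 = id)
    (hτadd : ∀ x y, τ x ∘ τ y = τ (x + y))
    (hτmeas : Measurable fun p : Rd d × Ω => τ p.1 p.2)
    (hτstat : ∀ x, MeasurePreserving (τ x) ℙ ℙ)
    (hτerg : ∀ A : Set Ω, MeasurableSet A → (∀ x, τ x ⁻¹' A = A) → ℙ A = 0 ∨ ℙ A = 1)
    -- the nonnegative random variables ν₁, ν₂ and the bounds Λ₁ ≤ Λ₂
    (ν₁ ν₂ : Ω → ℝ) (hν₁meas : Measurable ν₁) (hν₂meas : Measurable ν₂)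
    (hν₁nn : ∀ ω, 0 ≤ ν₁ ω) (hν₂nn : ∀ ω, 0 ≤ ν₂ ω)
    (Λ₁ Λ₂ : Ω → ℝ) (hΛmeas₁ : Measurable Λ₁) (hΛmeas₂ : Measurable Λ₂)
    (hΛ : ∀ᵐ ω ∂ℙ, 0 < Λ₁ ω ∧ Λ₁ ω ≤ Λ₂ ω)
    (hbound : ∀ᵐ ω ∂ℙ, ∀ x y : Rd d,
      Λ₁ (τ x ω) * Λ₁ (τ y ω)
          ≤ ν₁ (τ x ω) * ν₂ (τ y ω) + ν₁ (τ y ω) * ν₂ (τ x ω) ∧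
      ν₁ (τ x ω) * ν₂ (τ y ω) + ν₁ (τ y ω) * ν₂ (τ x ω)
          ≤ Λ₂ (τ x ω) * Λ₂ (τ y ω)) :
    ∃ C : ℝ, 0 < C ∧ ∀ᵐ ω ∂ℙ, ν₁ ω ≤ C * Λ₂ ω ∧ ν₂ ω ≤ C * Λ₂ ω := by
  have hp : ∀ᵐ ω ∂ℙ, 0 < ν₁ ω ∧ 0 < ν₂ ω ∧ 0 < Λ₂ ω := by
    filter_upwards [hΛ, hbound] with ω h1 h2
    have h3 := (h2 0 0).1
    rw [hτ0] at h3
    simp only [id] at h3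
    have h4 : 0 < Λ₁ ω * Λ₁ ω := mul_pos h1.1 h1.1
    have h5 : 0 < ν₁ ω * ν₂ ω := by linarith
    exact ⟨pos_of_mul_pos_left h5 (hν₂nn ω), pos_of_mul_pos_right h5 (hν₁nn ω),
      h1.1.trans_le h1.2⟩
  obtain ⟨C₁, hC₁, h₁⟩ := one_sided ℙ d τ hτ0 hτadd hτmeas hτstat hτerg ν₁ ν₂ Λ₂
    hν₂meas hΛmeas₂ hν₁nn (hp.mono fun ω h => h.2) (by
      filter_upwards [hbound] with ω h x y
      have := mul_nonneg (hν₁nn (τ y ω)) (hν₂nn (τ x ω))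
      linarith [(h x y).2])
  obtain ⟨C₂, hC₂, h₂⟩ := one_sided ℙ d τ hτ0 hτadd hτmeas hτstat hτerg ν₂ ν₁ Λ₂
    hν₁meas hΛmeas₂ hν₂nn (hp.mono fun ω h => ⟨h.1, h.2.2⟩) (by
      filter_upwards [hbound] with ω h x y
      have := mul_nonneg (hν₁nn (τ x ω)) (hν₂nn (τ y ω))
      linarith [(h x y).2])
  refine ⟨C₁ + C₂, by positivity, ?_⟩
  filter_upwards [h₁, h₂, hp] with ω a b c
  have e1 := mul_pos hC₁ c.2.2
  have e2 := mul_pos hC₂ c.2.2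
  constructor <;> linarith

end
end

section
/- There exists a constant c₀ > 0 (depending only on d, α and Γ) such that for all f ∈ C_c¹(ℝ^d): ‖f‖²_{L²(ℝ^d;dx)} ≤ c₀ · E₀(f,f)^{d/(d+α)} · ‖f‖_{L¹(ℝ^d;dx)}^{2α/(d+α)}. -/
open MeasureTheory Filter Metric Set
open scoped ENNReal Topology

noncomputable section

theorem phi_integrable (d : ℕ) (hd : 0 < d) (α : ℝ) (hα0 : 0 < α) (hα2 : α < 2) :
    Integrable (fun h : Rd d => min (‖h‖ ^ 2) 1 / ‖h‖ ^ ((d : ℝ) + α)) := by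
  have : Nonempty (Fin d) := ⟨⟨0, hd⟩⟩
  have key := integrable_fun_norm_addHaar (E := Rd d) (volume : Measure (Rd d))
    (f := fun t : ℝ => min (t ^ 2) 1 / t ^ ((d : ℝ) + α))
  refine key.2 ?_
  have hdim : Module.finrank ℝ (Rd d) = d := by simp
  rw [hdim]
  rw [← Ioc_union_Ioi_eq_Ioi (zero_le_one (α := ℝ))]
  have hpow : ∀ t : ℝ, 0 < t → t ^ (d - 1) = t ^ ((d : ℝ) - 1) := by
    intro t ht
    rw [← Real.rpow_natCast, Nat.cast_sub hd, Nat.cast_one]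
  refine IntegrableOn.union ?_ ?_
  · have h1 : IntegrableOn (fun t : ℝ => t ^ (1 - α)) (Ioc 0 1) := by
      have := intervalIntegral.intervalIntegrable_rpow' (a := 0) (b := 1) (r := 1 - α) (by linarith)
      rwa [intervalIntegrable_iff_integrableOn_Ioc_of_le zero_le_one] at this
    refine h1.congr_fun ?_ measurableSet_Ioc
    intro t ht
    have ht0 : 0 < t := ht.1
    have : min (t ^ 2) 1 = t ^ (2 : ℝ) := by
      rw [Real.rpow_two, min_eq_left]
      exact pow_le_one₀ ht0.le ht.2
    simp only [smul_eq_mul]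
    rw [this, hpow t ht0, ← Real.rpow_sub ht0, ← Real.rpow_add ht0]
    congr 1; ring
  · have h1 := integrableOn_Ioi_rpow_of_lt (a := -1 - α) (c := 1) (by linarith) one_pos
    refine h1.congr_fun ?_ measurableSet_Ioi
    intro t ht
    have ht1 : 1 < t := ht
    have ht0 : 0 < t := by linarith
    have : min (t ^ 2) 1 = 1 := min_eq_right (one_le_pow₀ ht1.le)
    simp only [smul_eq_mul]
    rw [this, hpow t ht0, one_div, ← Real.rpow_neg ht0.le, ← Real.rpow_add ht0]
    congr 1; ring

theorem energy_integrable (d : ℕ) (hd : 0 < d) (α : ℝ) (hα0 : 0 < α) (hα2 : α < 2)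
    (Γ : Set (Rd d)) (hΓopen : IsOpen Γ) (f : Rd d → ℝ) (hf : ContDiff ℝ 1 f)
    (hc : HasCompactSupport f) :
    Integrable (fun p : Rd d × Rd d =>
                (f p.2 - f p.1) ^ 2 * Γ.indicator (fun _ => (1 : ℝ)) (p.1 - p.2)
                  / ‖p.2 - p.1‖ ^ ((d : ℝ) + α)) := by
  have hφ := phi_integrable d hd α hα0 hα2
  set φ : Rd d → ℝ := fun h : Rd d => min (‖h‖ ^ 2) 1 / ‖h‖ ^ ((d : ℝ) + α) with hφdef
  obtain ⟨L, hL⟩ := ContDiff.lipschitzWith_of_hasCompactSupport hc hf one_ne_zero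
  obtain ⟨M, hM⟩ := hc.exists_bound_of_continuous hf.continuous
  set K := tsupport f with hK
  have hKm : MeasurableSet K := (isClosed_tsupport f).measurableSet
  have hKi : Integrable (K.indicator (fun _ => (1 : ℝ))) :=
    (integrable_indicator_iff hKm).2 (integrableOn_const (hc.isCompact.measure_lt_top.ne))
  have e : Integrable (fun p : Rd d × Rd d => K.indicator (fun _ => (1 : ℝ)) p.1 * φ p.2) :=
    hKi.mul_prod hφ
  have e1 : Integrable (fun p : Rd d × Rd d =>
      K.indicator (fun _ => (1 : ℝ)) p.1 * φ (p.2 - p.1)) :=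
    (measurePreserving_prod_sub (volume : Measure (Rd d)) volume).integrable_comp_of_integrable e
  have e2 : Integrable (fun p : Rd d × Rd d =>
      K.indicator (fun _ => (1 : ℝ)) p.2 * φ (p.1 - p.2)) :=
    (measurePreserving_prod_sub_swap (volume : Measure (Rd d))
      volume).integrable_comp_of_integrable e
  set C : ℝ := (L : ℝ) ^ 2 + (2 * M) ^ 2 with hC
  refine ((e1.add e2).const_mul C).mono' ?_ ?_
  · refine Measurable.aestronglyMeasurable ?_
    have hfm := hf.continuous.measurable
    have hi : Measurable (Γ.indicator (fun _ : Rd d => (1 : ℝ))) :=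
      measurable_const.indicator hΓopen.measurableSet
    have hi2 : Measurable (fun p : Rd d × Rd d => Γ.indicator (fun _ => (1 : ℝ)) (p.1 - p.2)) :=
      hi.comp (measurable_fst.sub measurable_snd)
    fun_prop
  · refine Eventually.of_forall fun p => ?_
    obtain ⟨x, y⟩ := p
    simp only [Pi.add_apply]
    have hφs : φ (x - y) = φ (y - x) := by simp [hφdef, norm_sub_rev]
    have hφ0 : 0 ≤ φ (y - x) := by simp only [hφdef]; positivity
    rw [hφs]
    have hi0 : 0 ≤ Γ.indicator (fun _ => (1 : ℝ)) (x - y) :=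
      indicator_nonneg (fun _ _ => zero_le_one) _
    have hi1 : Γ.indicator (fun _ => (1 : ℝ)) (x - y) ≤ 1 :=
      indicator_le_self' (fun _ _ => zero_le_one) _
    have hk : ∀ z, 0 ≤ K.indicator (fun _ => (1 : ℝ)) z :=
      fun z => indicator_nonneg (fun _ _ => zero_le_one) _
    rw [Real.norm_of_nonneg (by positivity)]
    have hC0 : 0 ≤ C := by positivity
    by_cases hxy : x ∈ K ∨ y ∈ K
    · have h1 : 1 ≤ K.indicator (fun _ => (1 : ℝ)) x + K.indicator (fun _ => (1 : ℝ)) y := by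
        rcases hxy with h | h
        · have := hk y
          rw [indicator_of_mem h]; linarith
        · have := hk x
          rw [indicator_of_mem h]; linarith
      have hl : |f y - f x| ≤ L * ‖y - x‖ := by
        have := hL.dist_le_mul y x
        rwa [Real.dist_eq, dist_eq_norm] at this
      have hm : |f y - f x| ≤ 2 * M := by
        have a := hM y
        have b := hM x
        have := norm_sub_le (f y) (f x)
        rw [← Real.norm_eq_abs]; linarith
      have hl2 : (f y - f x) ^ 2 ≤ (L : ℝ) ^ 2 * ‖y - x‖ ^ 2 := by
        rw [← sq_abs, ← mul_pow]; exact pow_le_pow_left₀ (abs_nonneg _) hl 2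
      have hm2 : (f y - f x) ^ 2 ≤ (2 * M) ^ 2 := by
        rw [← sq_abs]; exact pow_le_pow_left₀ (abs_nonneg _) hm 2
      have hmin : (f y - f x) ^ 2 ≤ C * min (‖y - x‖ ^ 2) 1 := by
        rcases min_choice (‖y - x‖ ^ 2) 1 with h | h <;> rw [h]
        · have := mul_nonneg (sq_nonneg (2 * M)) (sq_nonneg ‖y - x‖)
          rw [hC]; linarith
        · have := sq_nonneg (L : ℝ)
          rw [hC]; linarith
      calc (f y - f x) ^ 2 * Γ.indicator (fun _ => (1 : ℝ)) (x - y) / ‖y - x‖ ^ ((d : ℝ) + α)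
          ≤ (C * min (‖y - x‖ ^ 2) 1) / ‖y - x‖ ^ ((d : ℝ) + α) := by
            refine div_le_div_of_nonneg_right ?_ (by positivity)
            exact (mul_le_of_le_one_right (sq_nonneg _) hi1).trans hmin
        _ = C * φ (y - x) := by simp only [hφdef]; ring
        _ ≤ C * ((K.indicator (fun _ => (1 : ℝ)) x + K.indicator (fun _ => (1 : ℝ)) y)
              * φ (y - x)) := by
            gcongr
            exact le_mul_of_one_le_left hφ0 h1
        _ = _ := by ring
    · push Not at hxy
      rw [image_eq_zero_of_notMem_tsupport hxy.1, image_eq_zero_of_notMem_tsupport hxy.2]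
      have := hk x
      have := hk y
      simp only [sub_self]
      rw [zero_pow two_ne_zero, zero_mul, zero_div]
      positivity

set_option maxHeartbeats 1000000 in
theorem nash_r (d : ℕ) (hd : 0 < d) (α : ℝ) (hα0 : 0 < α) (hα2 : α < 2)
    (Γ : Set (Rd d)) (hΓopen : IsOpen Γ) (hΓne : Γ.Nonempty)
    (hΓcone : ∀ x ∈ Γ, ∀ r : ℝ, r ≠ 0 → r • x ∈ Γ) :
    ∃ C₁ C₂ : ℝ, 0 < C₁ ∧ 0 < C₂ ∧ ∀ f : Rd d → ℝ, ContDiff ℝ 1 f → HasCompactSupport f →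
      ∀ r : ℝ, 0 < r → ∫ x, f x ^ 2 ≤
        C₁ * (r ^ α * (∫ p : Rd d × Rd d,
                (f p.2 - f p.1) ^ 2 * Γ.indicator (fun _ => (1 : ℝ)) (p.1 - p.2)
                  / ‖p.2 - p.1‖ ^ ((d : ℝ) + α))) + C₂ * (r ^ (-(d : ℝ)) * (∫ x, |f x|) ^ 2) := by
  obtain ⟨x0, hx0⟩ := hΓne
  obtain ⟨ε, hε, hball⟩ := Metric.isOpen_iff.1 hΓopen x0 hx0
  set R : ℝ := ‖x0‖ + ε with hR
  have hR0 : 0 < R := by positivity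
  set V : ℝ := (volume : Measure (Rd d)).real (ball 0 ε) with hV
  have hV0 : 0 < V := ENNReal.toReal_pos (measure_ball_pos _ _ hε).ne' measure_ball_lt_top.ne
  refine ⟨R ^ ((d : ℝ) + α) / V, 2 / V, by positivity, by positivity, ?_⟩
  intro f hf hc r hr
  have hF := energy_integrable d hd α hα0 hα2 Γ hΓopen f hf hc
  set F : Rd d × Rd d → ℝ := fun p => (f p.2 - f p.1) ^ 2 *
    Γ.indicator (fun _ => (1 : ℝ)) (p.1 - p.2) / ‖p.2 - p.1‖ ^ ((d : ℝ) + α) with hFdef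
  set B : Set (Rd d) := ball (r • x0) (r * ε) with hB
  have hBΓ : B ⊆ Γ := by
    intro h hh
    have : r⁻¹ • h ∈ ball x0 ε := by
      rw [hB, mem_ball_iff_norm] at hh
      rw [mem_ball_iff_norm]
      have e : r⁻¹ • h - x0 = r⁻¹ • (h - r • x0) := by
        rw [smul_sub, smul_smul, inv_mul_cancel₀ hr.ne', one_smul]
      rw [e, norm_smul, Real.norm_of_nonneg (by positivity), inv_mul_lt_iff₀ hr]
      exact hh
    have := hΓcone _ (hball this) r hr.ne'
    rwa [smul_smul, mul_inv_cancel₀ hr.ne', one_smul] at this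
  have hBR : ∀ h ∈ B, ‖h‖ ≤ r * R := by
    intro h hh
    rw [hB, mem_ball_iff_norm] at hh
    have := norm_le_norm_add_norm_sub (r • x0) h
    rw [norm_smul, Real.norm_of_nonneg hr.le, norm_sub_rev] at this
    rw [hR]; nlinarith
  have hBvol : (volume : Measure (Rd d)).real B = r ^ (d : ℝ) * V := by
    rw [hB, Measure.real, Measure.addHaar_ball_mul_of_pos _ _ hr, ENNReal.toReal_mul,
      ENNReal.toReal_ofReal (by positivity), hV, Measure.real, Real.rpow_natCast]
    simp
  have hf1 : Integrable (fun x => |f x|) := (hf.continuous.integrable_of_hasCompactSupport hc).abs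
  have hf2 : Integrable (fun x => f x ^ 2) := by
    have hcs : HasCompactSupport (fun x => f x * f x) := hc.mul_right
    have hcont : Continuous (fun x => f x * f x) := hf.continuous.mul hf.continuous
    simp only [sq]
    exact hcont.integrable_of_hasCompactSupport hcs
  have hBm : MeasurableSet B := measurableSet_ball
  have hBi : Integrable (B.indicator (1 : Rd d → ℝ)) :=
    (integrable_indicator_iff hBm).2 (integrableOn_const measure_ball_lt_top.ne)
  have hmp := measurePreserving_sub_prod (volume : Measure (Rd d)) (volume : Measure (Rd d))
  have g0 : Integrable (fun p : Rd d × Rd d => B.indicator (1 : Rd d → ℝ) p.1 * f p.2 ^ 2) :=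
    hBi.mul_prod hf2
  have g1 : Integrable (fun p : Rd d × Rd d =>
      B.indicator (1 : Rd d → ℝ) (p.1 - p.2) * f p.2 ^ 2) :=
    hmp.integrable_comp_of_integrable g0
  have i1 : ∫ p : Rd d × Rd d, B.indicator (1 : Rd d → ℝ) (p.1 - p.2) * f p.2 ^ 2
      = (r ^ (d : ℝ) * V) * ∫ x, f x ^ 2 := by
    have a := integral_map (μ := (volume : Measure (Rd d)).prod (volume : Measure (Rd d)))
      hmp.measurable.aemeasurable (by rw [hmp.map_eq]; exact g0.aestronglyMeasurable)
    rw [hmp.map_eq] at a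
    rw [← hBvol, ← integral_indicator_one hBm, ← integral_prod_mul]
    exact a.symm
  have g2 : Integrable (fun p : Rd d × Rd d => |f p.1| * |f p.2|) := hf1.mul_prod hf1
  have i2 : ∫ p : Rd d × Rd d, |f p.1| * |f p.2| = (∫ x, |f x|) ^ 2 := by
    rw [sq]; exact integral_prod_mul (fun x => |f x|) (fun x => |f x|)
  have main : ∫ p : Rd d × Rd d, B.indicator (1 : Rd d → ℝ) (p.1 - p.2) * f p.2 ^ 2
      ≤ ∫ p, ((r * R) ^ ((d : ℝ) + α) * F p + 2 * (|f p.1| * |f p.2|)) := by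
    refine integral_mono g1 ((hF.const_mul _).add (g2.const_mul 2)) ?_
    rintro ⟨x, y⟩
    simp only
    by_cases hb : x - y ∈ B
    · rw [indicator_of_mem hb]
      have hle : (f y - f x) ^ 2 ≤ (r * R) ^ ((d : ℝ) + α) * F (x, y) := by
        simp only [hFdef]
        rw [indicator_of_mem (hBΓ hb)]
        by_cases hxy : y = x
        · subst hxy; simp
        · have hpos : 0 < ‖y - x‖ := norm_pos_iff.2 (sub_ne_zero.2 hxy)
          have h1 : ‖y - x‖ ^ ((d : ℝ) + α) ≤ (r * R) ^ ((d : ℝ) + α) := by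
            refine Real.rpow_le_rpow hpos.le ?_ (by positivity)
            rw [norm_sub_rev]; exact hBR _ hb
          rw [mul_one, ← mul_div_assoc, le_div_iff₀ (by positivity), mul_comm]
          exact mul_le_mul_of_nonneg_right h1 (sq_nonneg _)
      have h2 : f x * f y ≤ |f x| * |f y| := by rw [← abs_mul]; exact le_abs_self _
      simp only [Pi.one_apply]
      nlinarith [sq_nonneg (f x)]
    · rw [indicator_of_notMem hb, zero_mul]
      have : 0 ≤ F (x, y) := by
        have hi0 : 0 ≤ Γ.indicator (fun _ => (1 : ℝ)) (x - y) :=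
          indicator_nonneg (fun _ _ => zero_le_one) _
        simp only [hFdef]; positivity
      positivity
  rw [i1, integral_add (hF.const_mul _) (g2.const_mul 2), integral_const_mul, integral_const_mul,
    i2, Real.mul_rpow hr.le hR0.le, Real.rpow_add hr] at main
  have hrd : 0 < r ^ (d : ℝ) := by positivity
  rw [Real.rpow_neg hr.le]
  have : ∫ x, f x ^ 2 = (r ^ (d : ℝ) * V)⁻¹ * ((r ^ (d : ℝ) * V) * ∫ x, f x ^ 2) := by
    field_simp
  rw [this]
  refine (mul_le_mul_of_nonneg_left main (by positivity)).trans (le_of_eq ?_)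
  field_simp

/-- **Lemma 2.4** (Nash-type inequality for the directional fractional Dirichlet form).
For an infinite symmetric cone `Γ` with non-empty interior there is `c₀ > 0` such that
`‖f‖₂² ≤ c₀ E₀(f,f)^{d/(d+α)} ‖f‖₁^{2α/(d+α)}` for all `f ∈ C_c¹(ℝ^d)`. -/
theorem nash_inequality_cone
    (d : ℕ) (hd : 0 < d) (α : ℝ) (hα0 : 0 < α) (hα2 : α < 2)
    (Γ : Set (Rd d)) (hΓopen : IsOpen Γ) (hΓne : Γ.Nonempty)
    (hΓcone : ∀ x ∈ Γ, ∀ r : ℝ, r ≠ 0 → r • x ∈ Γ) :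
    ∃ c₀ : ℝ, 0 < c₀ ∧ ∀ f : Rd d → ℝ, ContDiff ℝ 1 f → HasCompactSupport f →
      ∫ x, f x ^ 2 ≤
        c₀ * (∫ p : Rd d × Rd d,
                (f p.2 - f p.1) ^ 2 * Γ.indicator (fun _ => (1 : ℝ)) (p.1 - p.2)
                  / ‖p.2 - p.1‖ ^ ((d : ℝ) + α)) ^ ((d : ℝ) / ((d : ℝ) + α))
           * (∫ x, |f x|) ^ (2 * α / ((d : ℝ) + α)) := by
  obtain ⟨C₁, C₂, hC₁, hC₂, H⟩ := nash_r d hd α hα0 hα2 Γ hΓopen hΓne hΓcone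
  refine ⟨C₁ + C₂, by positivity, fun f hf hc => ?_⟩
  have h := H f hf hc
  have hE0 : 0 ≤ ∫ p : Rd d × Rd d,
                (f p.2 - f p.1) ^ 2 * Γ.indicator (fun _ => (1 : ℝ)) (p.1 - p.2)
                  / ‖p.2 - p.1‖ ^ ((d : ℝ) + α) := by
    refine integral_nonneg fun p => ?_
    have hi0 : 0 ≤ Γ.indicator (fun _ => (1 : ℝ)) (p.1 - p.2) :=
      indicator_nonneg (fun _ _ => zero_le_one) _
    simp only [Pi.zero_apply]; positivity
  have hN0 : 0 ≤ ∫ x, |f x| := integral_nonneg fun x => abs_nonneg _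
  generalize (∫ p : Rd d × Rd d,
                (f p.2 - f p.1) ^ 2 * Γ.indicator (fun _ => (1 : ℝ)) (p.1 - p.2)
                  / ‖p.2 - p.1‖ ^ ((d : ℝ) + α)) = E at *
  generalize (∫ x, |f x|) = N at *
  generalize (∫ x, f x ^ 2) = A at *
  clear H
  have hd0 : (0 : ℝ) < d := by exact_mod_cast hd
  have hs : 0 < (d : ℝ) + α := by positivity
  rcases hE0.eq_or_lt with hE | hE
  · -- r → ∞
    rw [← hE] at h ⊢
    have ht : Tendsto (fun r : ℝ => C₁ * (r ^ α * 0) + C₂ * (r ^ (-(d : ℝ)) * N ^ 2)) atTop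
        (𝓝 (C₂ * (0 * N ^ 2))) := by
      have := (((tendsto_rpow_neg_atTop hd0).mul_const (N ^ 2)).const_mul C₂)
      simpa using this
    have : A ≤ C₂ * (0 * N ^ 2) := by
      refine ge_of_tendsto ht ?_
      filter_upwards [eventually_gt_atTop 0] with r hr using h r hr
    have h2 : (0 : ℝ) ≤ (C₁ + C₂) * (0 : ℝ) ^ ((d : ℝ) / ((d : ℝ) + α))
        * N ^ (2 * α / ((d : ℝ) + α)) := by positivity
    linarith
  rcases hN0.eq_or_lt with hN | hN
  · -- r → 0
    rw [← hN] at h ⊢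
    have ht : Tendsto (fun r : ℝ => C₁ * (r ^ (-α) * E)) atTop
        (𝓝 (C₁ * (0 * E))) := ((tendsto_rpow_neg_atTop hα0).mul_const E).const_mul C₁
    have : A ≤ C₁ * (0 * E) := by
      refine ge_of_tendsto ht ?_
      filter_upwards [eventually_gt_atTop 0] with r hr
      have := h r⁻¹ (by positivity)
      rw [Real.inv_rpow hr.le, ← Real.rpow_neg hr.le] at this
      simpa using this
    have h2 : (0 : ℝ) ≤ (C₁ + C₂) * E ^ ((d : ℝ) / ((d : ℝ) + α))
        * 0 ^ (2 * α / ((d : ℝ) + α)) := by positivity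
    linarith
  · set r : ℝ := N ^ (2 / ((d : ℝ) + α)) * E ^ (-1 / ((d : ℝ) + α)) with hr
    have hr0 : 0 < r := by positivity
    have h1 : r ^ α * E = E ^ ((d : ℝ) / ((d : ℝ) + α)) * N ^ (2 * α / ((d : ℝ) + α)) := by
      rw [hr, Real.mul_rpow (by positivity) (by positivity), ← Real.rpow_mul hN.le,
        ← Real.rpow_mul hE.le, mul_assoc]
      nth_rewrite 2 [← Real.rpow_one E]
      rw [← Real.rpow_add hE, mul_comm]
      congr 2 <;> field_simp <;> ring
    have h2 : r ^ (-(d : ℝ)) * N ^ 2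
        = E ^ ((d : ℝ) / ((d : ℝ) + α)) * N ^ (2 * α / ((d : ℝ) + α)) := by
      rw [hr, Real.mul_rpow (by positivity) (by positivity), ← Real.rpow_mul hN.le,
        ← Real.rpow_mul hE.le, mul_right_comm, ← Real.rpow_two, ← Real.rpow_add hN, mul_comm]
      congr 2 <;> field_simp <;> ring
    have := h r hr0
    rw [h1, h2] at this
    linarith

end
end

section
/- Assume (A1) holds, and that there is a non-negative random variable Λ on Ω with 𝔼[Λ^p] < ∞ for some p > 1 such that κ(x,y;ω) ≤ Λ(τ_x ω) + Λ(τ_y ω) for every ω ∈ Ω and all x,y ∈ ℝ^d. Then there is a set Ω₁ ⊆ Ω of full ℙ-measure such that for every ω ∈ Ω₁, every η > 0, every locally bounded measurable f on ℝ^d and every bounded measurable compactly supported g on ℝ^d: lim_{ε→0} ∫_{ℝ^d}∫_{{η<|z|<1/η, z∈Γ}} (f(x+z)−f(x))(g(x+z)−g(x))·|z|^{−(d+α)}·κ(x/ε,(x+z)/ε;ω) dz dx = ∫_{ℝ^d}∫_{{η<|z|<1/η, z∈Γ}} (f(x+z)−f(x))(g(x+z)−g(x))·|z|^{−(d+α)}·(ν̄(z)+ν̄(−z))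 dz dx, where ν̄ is the function from (A1). -/
open MeasureTheory Filter Metric Set
open scoped ENNReal Topology

noncomputable section

section Part1

/-- Vitali covering estimate. -/
lemma vitali_est {d : ℕ} (u : Rd d → ℝ≥0∞) (S : Set (Rd d)) (T : ℝ)
    (hST : S ⊆ closedBall 0 T) (lam : ℝ≥0∞)
    (hS : ∀ x ∈ S, ∃ r : ℝ, 0 < r ∧ r ≤ T ∧
      lam * volume (closedBall x r) ≤ ∫⁻ y in closedBall x r, u y) :
    lam * volume S ≤ 5 ^ d * ∫⁻ y in closedBall 0 (2 * T), u y := by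
  classical
  choose! r hr0 hrT hr using hS
  obtain ⟨v, hvS, hvd, hvc⟩ := Vitali.exists_disjoint_subfamily_covering_enlargement_closedBall
    S id r T hrT 5 (by norm_num)
  have hcount : v.Countable := hvd.countable_of_nonempty_interior (fun a ha => by
    rw [interior_closedBall _ (hr0 a (hvS ha)).ne']
    exact ⟨a, mem_ball_self (hr0 a (hvS ha))⟩)
  have hcov : S ⊆ ⋃ b ∈ v, closedBall b (5 * r b) := by
    intro a ha
    obtain ⟨b, hb, hab⟩ := hvc a ha
    simp only [mem_iUnion]
    exact ⟨b, hb, hab (mem_closedBall_self (hr0 a ha).le)⟩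
  have hdil : ∀ b ∈ v, volume (closedBall b (5 * r b)) = 5 ^ d * volume (closedBall b (r b)) := by
    intro b hb
    rw [mul_comm, Measure.addHaar_closedBall' volume b (r := r b * 5)
      (by have := hr0 b (hvS hb); positivity),
      Measure.addHaar_closedBall' volume b (r := r b) (hr0 b (hvS hb)).le]
    simp only [finrank_euclideanSpace, Fintype.card_fin]
    rw [mul_pow, ENNReal.ofReal_mul (by have := hr0 b (hvS hb); positivity),
      ENNReal.ofReal_pow (by norm_num) d (p := 5)]
    simp only [ENNReal.ofReal_ofNat]
    ring
  calc lam * volume S ≤ lam * ∑' b : v, volume (closedBall (b : Rd d) (5 * r b)) := by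
        gcongr
        exact (measure_mono hcov).trans (measure_biUnion_le _ hcount _)
    _ = 5 ^ d * ∑' b : v, lam * volume (closedBall (b : Rd d) (r b)) := by
        rw [← ENNReal.tsum_mul_left, ← ENNReal.tsum_mul_left]
        congr 1; ext b
        rw [hdil b b.2]; ring
    _ ≤ 5 ^ d * ∑' b : v, ∫⁻ y in closedBall (b : Rd d) (r b), u y := by
        gcongr with b
        exact hr b (hvS b.2)
    _ = 5 ^ d * ∫⁻ y in ⋃ b ∈ v, closedBall (b : Rd d) (r b), u y := by
        congr 1
        exact (lintegral_biUnion hcount (fun _ _ => measurableSet_closedBall) hvd _).symm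
    _ ≤ _ := by
        gcongr
        simp only [iUnion_subset_iff]
        intro b hb
        apply closedBall_subset_closedBall'
        have h1 := hrT b (hvS hb)
        have h2 := mem_closedBall.1 (hST (hvS hb))
        linarith

lemma lintegral_shift {d : ℕ} (u : Rd d → ℝ≥0∞) (b : Rd d) (r : ℝ) :
    ∫⁻ y in closedBall 0 r, u (y + b) = ∫⁻ y in closedBall b r, u y := by
  rw [← lintegral_indicator measurableSet_closedBall, ← lintegral_indicator measurableSet_closedBall,
    ← lintegral_add_right_eq_self ((closedBall b r).indicator _) b]
  congr 1; ext y
  simp [indicator, mem_closedBall, dist_eq_norm]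

lemma measurable_avg {Ω : Type*} [MeasurableSpace Ω] {d : ℕ}
    {τ : Rd d → Ω → Ω} (hτmeas : Measurable fun p : Rd d × Ω => τ p.1 p.2)
    {X : Ω → ℝ≥0∞} (hX : Measurable X) (r : ℝ) :
    Measurable fun ω => ∫⁻ y in closedBall (0 : Rd d) r, X (τ y ω) := by
  have : Measurable (fun p : Ω × Rd d => X (τ p.2 p.1)) :=
    hX.comp (hτmeas.comp measurable_swap)
  exact this.lintegral_prod_right'

lemma weak_max {Ω : Type*} [MeasurableSpace Ω] (ℙ : Measure Ω) [IsProbabilityMeasure ℙ]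
    {d : ℕ} {τ : Rd d → Ω → Ω} (hτadd : ∀ x y, τ x ∘ τ y = τ (x + y))
    (hτmeas : Measurable fun p : Rd d × Ω => τ p.1 p.2)
    (hτstat : ∀ x, MeasurePreserving (τ x) ℙ ℙ)
    {X : Ω → ℝ≥0∞} (hX : Measurable X) (lam : ℝ≥0∞) (K : ℕ) :
    lam * ℙ {ω | ∃ k ≤ K, lam * volume (closedBall (0 : Rd d) (2 ^ k)) ≤
      ∫⁻ y in closedBall (0 : Rd d) (2 ^ k), X (τ y ω)} ≤ 10 ^ d * ∫⁻ ω, X ω ∂ℙ := by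
  set A := {ω | ∃ k ≤ K, lam * volume (closedBall (0 : Rd d) (2 ^ k)) ≤
      ∫⁻ y in closedBall (0 : Rd d) (2 ^ k), X (τ y ω)} with hA
  have hAm : MeasurableSet A := by
    have : A = ⋃ k, ⋃ (_ : k ≤ K), {ω | lam * volume (closedBall (0 : Rd d) (2 ^ k)) ≤
      ∫⁻ y in closedBall (0 : Rd d) (2 ^ k), X (τ y ω)} := by
      ext ω; simp [hA]
    rw [this]
    exact MeasurableSet.iUnion fun k => MeasurableSet.iUnion fun _ =>
      measurableSet_le measurable_const (measurable_avg hτmeas hX _)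
  set T : ℝ := 2 ^ K with hT
  have hT0 : 0 < T := by positivity
  have key : ∀ ω, lam * ∫⁻ x in closedBall (0 : Rd d) T, A.indicator 1 (τ x ω) ≤
      5 ^ d * ∫⁻ y in closedBall (0 : Rd d) (2 * T), X (τ y ω) := by
    intro ω
    have hBm : MeasurableSet ((fun x => τ x ω) ⁻¹' A) :=
      (hτmeas.comp (measurable_id.prodMk measurable_const)) hAm
    have h := vitali_est (fun y => X (τ y ω)) (((fun x => τ x ω) ⁻¹' A) ∩ closedBall 0 T) T
      inter_subset_right lam ?_
    · convert! h using 2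
      rw [← Measure.restrict_apply hBm, ← lintegral_indicator_one hBm]
      rfl
    · rintro x ⟨⟨k, hk, hx⟩, -⟩
      refine ⟨2 ^ k, by positivity, pow_le_pow_right₀ (by norm_num) hk, ?_⟩
      rw [← lintegral_shift, Measure.addHaar_closedBall_center]
      refine hx.trans (le_of_eq ?_)
      congr 1; ext y
      rw [← hτadd]; rfl
  have hswap : ∀ (Y : Ω → ℝ≥0∞), Measurable Y → ∀ R : ℝ,
      ∫⁻ ω, (∫⁻ x in closedBall (0 : Rd d) R, Y (τ x ω)) ∂ℙ
      = volume (closedBall (0 : Rd d) R) * ∫⁻ ω, Y ω ∂ℙ := by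
    intro Y hY R
    rw [lintegral_lintegral_swap]
    · simp_rw [fun x => (hτstat x).lintegral_comp hY]
      simp [mul_comm]
    · exact (hY.comp (hτmeas.comp measurable_swap)).aemeasurable
  have h2 : lam * (volume (closedBall (0 : Rd d) T) * ℙ A) ≤
      5 ^ d * (volume (closedBall (0 : Rd d) (2 * T)) * ∫⁻ ω, X ω ∂ℙ) := by
    rw [← hswap X hX, ← lintegral_indicator_one hAm, ← hswap _ (measurable_one.indicator hAm),
      ← lintegral_const_mul _ (measurable_avg hτmeas hX _),
      ← lintegral_const_mul _ (measurable_avg hτmeas (measurable_one.indicator hAm) _)]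
    exact lintegral_mono key
  have hv : volume (closedBall (0 : Rd d) (2 * T)) = 2 ^ d * volume (closedBall (0 : Rd d) T) := by
    rw [Measure.addHaar_closedBall' volume _ (r := 2 * T) (by positivity),
      Measure.addHaar_closedBall' volume _ (r := T) (by positivity)]
    simp only [finrank_euclideanSpace, Fintype.card_fin]
    rw [mul_pow, ENNReal.ofReal_mul (by positivity), ENNReal.ofReal_pow (by norm_num) d (p := 2)]
    simp only [ENNReal.ofReal_ofNat]
    ring
  rw [hv] at h2
  have hv0 : volume (closedBall (0 : Rd d) T) ≠ 0 := (measure_closedBall_pos _ _ hT0).ne'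
  have hvt : volume (closedBall (0 : Rd d) T) ≠ ∞ := measure_closedBall_lt_top.ne
  rw [← ENNReal.mul_le_mul_iff_right hv0 hvt]
  calc _ = lam * (volume (closedBall (0 : Rd d) T) * ℙ A) := by ring
    _ ≤ _ := h2
    _ = (5 * 2) ^ d * (volume (closedBall (0 : Rd d) T) * ∫⁻ ω, X ω ∂ℙ) := by
      rw [mul_pow]; ring
    _ = _ := by norm_num; ring

lemma max_ae {Ω : Type*} [MeasurableSpace Ω] (ℙ : Measure Ω) [IsProbabilityMeasure ℙ]
    {d : ℕ} {τ : Rd d → Ω → Ω} (hτadd : ∀ x y, τ x ∘ τ y = τ (x + y))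
    (hτmeas : Measurable fun p : Rd d × Ω => τ p.1 p.2)
    (hτstat : ∀ x, MeasurePreserving (τ x) ℙ ℙ)
    {X : Ω → ℝ≥0∞} (hX : Measurable X) (hXi : ∫⁻ ω, X ω ∂ℙ ≠ ∞) :
    ∀ᵐ ω ∂ℙ, ∃ C : ℝ≥0∞, C ≠ ∞ ∧ ∀ k : ℕ, ∫⁻ y in closedBall (0 : Rd d) (2 ^ k), X (τ y ω) ≤
      C * volume (closedBall (0 : Rd d) (2 ^ k)) := by
  set B : ℕ → ℕ → Set Ω := fun n K => {ω | ∃ k ≤ K, (n : ℝ≥0∞) * volume (closedBall (0 : Rd d) (2 ^ k)) ≤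
      ∫⁻ y in closedBall (0 : Rd d) (2 ^ k), X (τ y ω)} with hB
  have hmono : ∀ n, Monotone (B n) := by
    rintro n K K' h ω ⟨k, hk, h'⟩
    exact ⟨k, hk.trans h, h'⟩
  have h1 : ∀ n : ℕ, (n : ℝ≥0∞) * ℙ (⋃ K, B n K) ≤ 10 ^ d * ∫⁻ ω, X ω ∂ℙ := by
    intro n
    rw [(hmono n).measure_iUnion, ENNReal.mul_iSup]
    exact iSup_le fun K => weak_max ℙ hτadd hτmeas hτstat hX n K
  have h2 : ℙ (⋂ n, ⋃ K, B n K) = 0 := by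
    by_contra hne
    have hC : (10 : ℝ≥0∞) ^ d * ∫⁻ ω, X ω ∂ℙ ≠ ∞ := ENNReal.mul_ne_top (by simp) hXi
    obtain ⟨n, hn⟩ := ENNReal.exists_nat_mul_gt hne hC
    refine absurd (h1 n) (not_le.2 (hn.trans_le ?_))
    gcongr
    exact iInter_subset _ n
  rw [ae_iff]
  refine measure_mono_null ?_ h2
  intro ω hω
  simp only [mem_ofPred_eq, not_exists, not_and, not_forall, not_le] at hω
  simp only [mem_iInter, mem_iUnion]
  intro n
  obtain ⟨k, hk⟩ := hω n (by simp)
  exact ⟨k, k, le_rfl, hk.le⟩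

end Part1

section Part2

lemma max_scaled {d : ℕ} (u : Rd d → ℝ≥0∞) (hu : Measurable u) (C : ℝ≥0∞) (hC : C ≠ ∞)
    (h : ∀ k : ℕ, ∫⁻ y in closedBall (0 : Rd d) (2 ^ k), u y ≤
      C * volume (closedBall (0 : Rd d) (2 ^ k))) :
    ∃ C' : ℝ≥0∞, C' ≠ ∞ ∧ ∀ R ε : ℝ, 0 < ε → ε ≤ R →
      ∫⁻ x in closedBall (0 : Rd d) R, u (ε⁻¹ • x) ≤ C' * ENNReal.ofReal (R ^ d) := by
  refine ⟨C * 2 ^ d * volume (ball (0 : Rd d) 1),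
    ENNReal.mul_ne_top (ENNReal.mul_ne_top hC (by simp)) measure_ball_lt_top.ne, ?_⟩
  intro R ε hε hεR
  obtain ⟨k, hk1, hk2⟩ := exists_nat_pow_near (x := R / ε) (y := 2) (by rwa [one_le_div hε])
    (by norm_num)
  have h1 : ∫⁻ x in closedBall (0 : Rd d) R, u (ε⁻¹ • x) =
      ENNReal.ofReal (ε ^ d) * ∫⁻ x in closedBall (0 : Rd d) (R / ε), u x := by
    have hm : Measurable ((closedBall (0 : Rd d) (R / ε)).indicator u) :=
      hu.indicator measurableSet_closedBall
    have := lintegral_map (μ := (volume : Measure (Rd d))) (g := fun x => ε⁻¹ • x) hm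
      (measurable_const_smul ε⁻¹)
    rw [← lintegral_indicator measurableSet_closedBall (f := u)]
    rw [Measure.map_addHaar_smul _ (by positivity), lintegral_smul_measure] at this
    simp only [finrank_euclideanSpace, Fintype.card_fin, inv_pow, inv_inv, smul_eq_mul,
      abs_of_pos (pow_pos hε d)] at this
    rw [this, ← lintegral_indicator measurableSet_closedBall]
    congr 1; ext x
    simp only [indicator, mem_closedBall, dist_zero_right, norm_smul, norm_inv, Real.norm_eq_abs,
      abs_of_pos hε]
    congr 1
    rw [le_div_iff₀ hε, mul_comm, mul_inv_cancel_left₀ hε.ne']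
  rw [h1]
  calc _ ≤ ENNReal.ofReal (ε ^ d) * (C * volume (closedBall (0 : Rd d) (2 ^ (k+1)))) := by
        gcongr
        exact (lintegral_mono_set (closedBall_subset_closedBall hk2.le)).trans (h (k+1))
    _ = C * volume (ball (0 : Rd d) 1) * ENNReal.ofReal (ε ^ d * (2 ^ (k+1)) ^ d) := by
        rw [Measure.addHaar_closedBall volume _ (r := 2 ^ (k+1)) (by positivity),
          ENNReal.ofReal_mul (by positivity)]
        simp only [finrank_euclideanSpace, Fintype.card_fin]
        ring
    _ ≤ C * volume (ball (0 : Rd d) 1) * ENNReal.ofReal (2 ^ d * R ^ d) := by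
        have hle : ε ^ d * (2 ^ (k+1)) ^ d ≤ 2 ^ d * R ^ d := by
          rw [← mul_pow, ← mul_pow]
          rw [le_div_iff₀ hε] at hk1
          apply pow_le_pow_left₀ (by positivity)
          rw [pow_succ]; linarith
        gcongr
    _ = _ := by
        rw [ENNReal.ofReal_mul (by positivity), ENNReal.ofReal_pow (by norm_num)]
        simp only [ENNReal.ofReal_ofNat]
        ring

section gen
variable {V : Type*} [NormedAddCommGroup V] [NormedSpace ℝ V] [MeasurableSpace V] [BorelSpace V]
  [FiniteDimensional ℝ V] (μ : Measure V) [μ.IsAddHaarMeasure]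

lemma dense_seq : ∃ Fs : ℕ → V → ℝ, (∀ j, Continuous (Fs j) ∧ HasCompactSupport (Fs j)) ∧
    ∀ F : V → ℝ, Integrable F μ → ∀ δ : ℝ, 0 < δ → ∃ j, ∫ q, |F q - Fs j q| ∂μ ≤ δ := by
  have : Fact ((1 : ℝ≥0∞) ≠ ∞) := ⟨by simp⟩
  have : ProperSpace V := FiniteDimensional.proper ℝ V
  let S : Set (V →₁[μ] ℝ) := {φ | ∃ (g : V → ℝ) (hg : Integrable g μ), Continuous g ∧
    HasCompactSupport g ∧ φ = hg.toL1 g}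
  have : Nonempty S := ⟨⟨(integrable_zero V ℝ μ).toL1 _, 0, integrable_zero V ℝ μ,
    continuous_zero, HasCompactSupport.zero, rfl⟩⟩
  have hS : ∀ j, ∃ (g : V → ℝ) (hg : Integrable g μ), Continuous g ∧
    HasCompactSupport g ∧ (TopologicalSpace.denseSeq S j : V →₁[μ] ℝ) = hg.toL1 g :=
    fun j => (TopologicalSpace.denseSeq S j).2
  choose Fs hFi hFc hFs hF using hS
  refine ⟨Fs, fun j => ⟨hFc j, hFs j⟩, ?_⟩
  intro F hFint δ hδ
  obtain ⟨g, hgs, hgd, hgc, hgi⟩ := hFint.exists_hasCompactSupport_integral_sub_le (half_pos hδ)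
  obtain ⟨j, hj⟩ := (TopologicalSpace.denseRange_denseSeq S).exists_dist_lt
    ⟨hgi.toL1 g, g, hgi, hgc, hgs, rfl⟩ (half_pos hδ)
  refine ⟨j, ?_⟩
  have h1 : ∫ q, |g q - Fs j q| ∂μ < δ / 2 := by
    rw [Subtype.dist_eq, hF j, dist_edist, Integrable.edist_toL1_toL1] at hj
    simp only [edist_dist, Real.dist_eq] at hj
    have hi : Integrable (fun q => |g q - Fs j q|) μ := (hgi.sub (hFi j)).abs
    rwa [integral_eq_lintegral_of_nonneg_ae (ae_of_all _ fun _ => abs_nonneg _)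
      hi.aestronglyMeasurable]
  calc ∫ q, |F q - Fs j q| ∂μ ≤ ∫ q, (‖F q - g q‖ + |g q - Fs j q|) ∂μ := by
        apply integral_mono (hFint.sub (hFi j)).abs
          ((hFint.sub hgi).norm.add (hgi.sub (hFi j)).abs)
        intro q
        exact abs_sub_le _ _ _
    _ = ∫ q, ‖F q - g q‖ ∂μ + ∫ q, |g q - Fs j q| ∂μ :=
        integral_add (hFint.sub hgi).norm (hgi.sub (hFi j)).abs
    _ ≤ δ := by linarith

lemma exists_radius {F : V → ℝ} (hFs : HasCompactSupport F) :
    ∃ R : ℝ, 0 < R ∧ ∀ q, R < ‖q‖ → F q = 0 := by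
  obtain ⟨R, hR⟩ := hFs.isBounded.subset_closedBall (0 : V)
  refine ⟨max R 1, by positivity, fun q hq => ?_⟩
  by_contra hne
  have := hR (subset_tsupport F hne)
  rw [mem_closedBall, dist_zero_right] at this
  exact absurd ((le_max_left R 1).trans_lt hq) (not_lt.2 this)

lemma dil_cont {F : V → ℝ} (hF : Continuous F) (hFs : HasCompactSupport F) (D : ℕ) :
    Tendsto (fun s : ℝ => ∫ q, |s ^ D * F (s • q) - F q| ∂μ) (𝓝 1) (𝓝 0) := by
  have : ProperSpace V := FiniteDimensional.proper ℝ V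
  obtain ⟨R, hR0, hR⟩ := exists_radius hFs
  have hc : Continuous (fun s : ℝ => ∫ q in closedBall (0 : V) (2 * R), |s ^ D * F (s • q) - F q| ∂μ) := by
    apply continuous_parametric_integral_of_continuous _ (isCompact_closedBall _ _)
    simp only [Function.uncurry_def]
    fun_prop
  have h := hc.tendsto 1
  simp only [one_pow, one_mul, one_smul, sub_self, abs_zero, integral_zero] at h
  refine h.congr' ?_
  filter_upwards [lt_mem_nhds (show (1 / 2 : ℝ) < 1 by norm_num)] with s hs
  apply setIntegral_eq_integral_of_forall_compl_eq_zero
  intro q hq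
  rw [mem_closedBall, dist_zero_right, not_le] at hq
  rw [hR q (by linarith), hR (s • q)]
  · simp
  · rw [norm_smul, Real.norm_eq_abs, abs_of_pos (by linarith)]
    nlinarith

lemma interp (ψ : V → ℝ) (hψ : Measurable ψ) (n : ℝ) (hb : ∀ q, |ψ q| ≤ n)
    {F : V → ℝ} (hF : Continuous F) (hFs : HasCompactSupport F) (m : ℕ) (hm : 0 < m)
    (h : Tendsto (fun k : ℕ => ∫ q, F q * ψ (((k : ℝ) ^ m) • q) ∂μ) atTop (𝓝 0)) :
    Tendsto (fun t : ℝ => ∫ q, F q * ψ (t • q) ∂μ) atTop (𝓝 0) := by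
  have hFi : Integrable F μ := hF.integrable_of_hasCompactSupport hFs
  have hint : ∀ (G : V → ℝ), Integrable G μ → ∀ t : ℝ, Integrable (fun q => G q * ψ (t • q)) μ := by
    intro G hG t
    refine hG.mul_bdd (c := n)
      (hψ.comp (measurable_const_smul t)).aestronglyMeasurable (ae_of_all _ fun q => ?_)
    exact hb _
  have hroot : Tendsto (fun t : ℝ => t ^ ((m : ℝ)⁻¹)) atTop atTop :=
    tendsto_rpow_atTop (by positivity)
  set k : ℝ → ℕ := fun t => ⌊t ^ ((m : ℝ)⁻¹)⌋₊ with hk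
  have hkt : Tendsto k atTop atTop := tendsto_nat_floor_atTop.comp hroot
  set s : ℝ → ℝ := fun t => ((k t : ℝ) / t ^ ((m : ℝ)⁻¹)) ^ m with hs
  have hst : Tendsto s atTop (𝓝 1) := by
    have := (tendsto_nat_floor_div_atTop (R := ℝ)).comp hroot
    simpa using this.pow m
  have h0 : Tendsto (fun t => |∫ q, F q * ψ (((k t : ℝ) ^ m) • q) ∂μ| +
      n * ∫ q, |(s t) ^ (Module.finrank ℝ V) * F (s t • q) - F q| ∂μ) atTop (𝓝 0) := by
    have h1 := (h.comp hkt).abs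
    have h2 := ((dil_cont μ hF hFs (Module.finrank ℝ V)).comp hst).const_mul n
    simpa using h1.add h2
  rw [tendsto_zero_iff_abs_tendsto_zero]
  refine squeeze_zero' (Eventually.of_forall fun t => abs_nonneg _) ?_ h0
  filter_upwards [eventually_gt_atTop 0, hkt.eventually_gt_atTop 0] with t ht hkpos
  have hs0 : 0 < s t := by
    simp only [hs]; positivity
  have hts : t * s t = (k t : ℝ) ^ m := by
    simp only [hs]
    rw [div_pow, ← Real.rpow_natCast (t ^ _), ← Real.rpow_mul ht.le, inv_mul_cancel₀ (by positivity),
      Real.rpow_one]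
    field_simp
  have hFsi : Integrable (fun q => (s t) ^ (Module.finrank ℝ V) * F (s t • q)) μ :=
    (hFi.comp_smul hs0.ne').const_mul _
  have heq : ∫ q, F q * ψ (t • q) ∂μ =
      ∫ q, ((s t) ^ (Module.finrank ℝ V) * F (s t • q)) * ψ (((k t : ℝ) ^ m) • q) ∂μ := by
    have := Measure.integral_comp_smul_of_nonneg μ (fun q => F q * ψ (t • q)) (s t) (hR := hs0.le)
    simp only [smul_smul, hts, smul_eq_mul] at this
    simp_rw [mul_assoc]
    rw [integral_const_mul, this, mul_inv_cancel_left₀ (by positivity)]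
  have hsub : ∫ q, F q * ψ (t • q) ∂μ - ∫ q, F q * ψ (((k t : ℝ) ^ m) • q) ∂μ =
      ∫ q, ((s t) ^ (Module.finrank ℝ V) * F (s t • q) - F q) * ψ (((k t : ℝ) ^ m) • q) ∂μ := by
    rw [heq, ← integral_sub (hint _ hFsi _) (hint _ hFi _)]
    simp_rw [sub_mul]
  have hbd : |∫ q, F q * ψ (t • q) ∂μ - ∫ q, F q * ψ (((k t : ℝ) ^ m) • q) ∂μ| ≤
      n * ∫ q, |(s t) ^ (Module.finrank ℝ V) * F (s t • q) - F q| ∂μ := by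
    rw [hsub, ← integral_const_mul]
    refine (abs_integral_le_integral_abs).trans ?_
    apply integral_mono (hint _ (hFsi.sub hFi) _).abs ((hFsi.sub hFi).abs.const_mul n)
    intro q
    simp only [abs_mul]
    rw [mul_comm]
    exact mul_le_mul_of_nonneg_right (hb _) (abs_nonneg _)
  calc |∫ q, F q * ψ (t • q) ∂μ| = |∫ q, F q * ψ (((k t : ℝ) ^ m) • q) ∂μ +
        (∫ q, F q * ψ (t • q) ∂μ - ∫ q, F q * ψ (((k t : ℝ) ^ m) • q) ∂μ)| := by ring_nf
    _ ≤ _ := (abs_add_le _ _).trans (by gcongr)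

/-- extension from the dense family to all integrable functions -/
lemma ext_dense (ψ : V → ℝ) (hψ : Measurable ψ) (n : ℝ) (hb : ∀ q, |ψ q| ≤ n)
    (Fs : ℕ → V → ℝ) (hFs : ∀ j, Continuous (Fs j) ∧ HasCompactSupport (Fs j))
    (hd : ∀ F : V → ℝ, Integrable F μ → ∀ δ : ℝ, 0 < δ → ∃ j, ∫ q, |F q - Fs j q| ∂μ ≤ δ)
    (h : ∀ j, Tendsto (fun t : ℝ => ∫ q, Fs j q * ψ (t • q) ∂μ) atTop (𝓝 0))
    (F : V → ℝ) (hF : Integrable F μ) :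
    Tendsto (fun t : ℝ => ∫ q, F q * ψ (t • q) ∂μ) atTop (𝓝 0) := by
  have hint : ∀ (G : V → ℝ), Integrable G μ → ∀ t : ℝ, Integrable (fun q => G q * ψ (t • q)) μ := by
    intro G hG t
    refine hG.mul_bdd (c := n)
      (hψ.comp (measurable_const_smul t)).aestronglyMeasurable (ae_of_all _ fun q => ?_)
    exact hb _
  have hn : 0 ≤ n := (abs_nonneg _).trans (hb 0)
  rw [Metric.tendsto_nhds]
  intro δ hδ
  obtain ⟨j, hj⟩ := hd F hF (δ / (2 * (n + 1))) (by positivity)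
  have hFj : Integrable (Fs j) μ := (hFs j).1.integrable_of_hasCompactSupport (hFs j).2
  have hj' : n * ∫ q, |F q - Fs j q| ∂μ ≤ δ / 2 := by
    calc _ ≤ (n + 1) * (δ / (2 * (n + 1))) := by gcongr; linarith
      _ = δ / 2 := by field_simp
  filter_upwards [(Metric.tendsto_nhds.1 (h j)) (δ / 2) (by positivity)] with t ht
  rw [Real.dist_eq, sub_zero] at ht ⊢
  have hbd : |∫ q, F q * ψ (t • q) ∂μ - ∫ q, Fs j q * ψ (t • q) ∂μ| ≤
      n * ∫ q, |F q - Fs j q| ∂μ := by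
    rw [← integral_sub (hint _ hF _) (hint _ hFj _), ← integral_const_mul]
    refine (abs_integral_le_integral_abs).trans ?_
    apply integral_mono ((hint _ hF _).sub (hint _ hFj _)).abs ((hF.sub hFj).abs.const_mul n)
    intro q
    simp only [Pi.sub_apply, ← sub_mul, abs_mul]
    rw [mul_comm]
    exact mul_le_mul_of_nonneg_right (hb _) (abs_nonneg _)
  have := abs_sub_abs_le_abs_sub (∫ q, F q * ψ (t • q) ∂μ) (∫ q, Fs j q * ψ (t • q) ∂μ)
  linarith
end gen

end Part2

section Part3

lemma diag_meas {d : ℕ} (hd : 0 < d) (R : ℝ) : ∃ C : ℝ, 0 ≤ C ∧ ∀ ρ : ℝ, 0 < ρ → ρ ≤ 1 →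
    (((volume : Measure (Rd d × Rd d)).restrict (closedBall 0 R)).prod
      ((volume : Measure (Rd d × Rd d)).restrict (closedBall 0 R))).real
      {r | ‖r.2.1 - r.1.1‖ ≤ ρ} ≤ C * ρ := by
  set μ := (volume : Measure (Rd d × Rd d)).restrict (closedBall 0 R) with hμ
  have : IsFiniteMeasure μ := ⟨by
    rw [hμ, Measure.restrict_apply_univ]; exact measure_closedBall_lt_top⟩
  refine ⟨(volume (ball (0 : Rd d) 1) * volume (closedBall (0 : Rd d) R) * μ univ).toReal,
    ENNReal.toReal_nonneg, ?_⟩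
  intro ρ hρ hρ1
  have hm : MeasurableSet {r : (Rd d × Rd d) × (Rd d × Rd d) | ‖r.2.1 - r.1.1‖ ≤ ρ} :=
    measurableSet_le (by fun_prop) measurable_const
  have hC : volume (ball (0 : Rd d) 1) * volume (closedBall (0 : Rd d) R) * μ univ ≠ ∞ :=
    ENNReal.mul_ne_top (ENNReal.mul_ne_top measure_ball_lt_top.ne measure_closedBall_lt_top.ne)
      (measure_ne_top _ _)
  have key : (μ.prod μ) {r | ‖r.2.1 - r.1.1‖ ≤ ρ} ≤
      (volume (ball (0 : Rd d) 1) * volume (closedBall (0 : Rd d) R) * μ univ) * ENNReal.ofReal ρ := by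
    rw [Measure.prod_apply hm]
    calc _ ≤ ∫⁻ _, (ENNReal.ofReal ρ * volume (ball (0 : Rd d) 1)) * volume (closedBall (0 : Rd d) R) ∂μ := by
          apply lintegral_mono
          intro q
          have hsub : (Prod.mk q ⁻¹' {r : (Rd d × Rd d) × (Rd d × Rd d) | ‖r.2.1 - r.1.1‖ ≤ ρ}) ∩
              closedBall 0 R ⊆ closedBall q.1 ρ ×ˢ closedBall 0 R := by
            rintro q' ⟨h1, h2⟩
            refine ⟨?_, ?_⟩
            · simpa [dist_eq_norm] using h1
            · rw [mem_closedBall, dist_zero_right] at h2 ⊢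
              exact (norm_snd_le q').trans h2
          beta_reduce
          rw [hμ, Measure.restrict_apply (measurable_prodMk_left hm)]
          refine (measure_mono hsub).trans ?_
          rw [Measure.volume_eq_prod, Measure.prod_prod,
            Measure.addHaar_closedBall volume _ hρ.le]
          simp only [finrank_euclideanSpace, Fintype.card_fin]
          gcongr
          exact pow_le_of_le_one hρ.le hρ1 hd.ne'
      _ = _ := by
          rw [lintegral_const]; ring
  rw [Measure.real]
  calc _ ≤ ((volume (ball (0 : Rd d) 1) * volume (closedBall (0 : Rd d) R) * μ univ) *
        ENNReal.ofReal ρ).toReal := ENNReal.toReal_mono (ENNReal.mul_ne_top hC (by simp)) key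
    _ = _ := by rw [ENNReal.toReal_mul, ENNReal.toReal_ofReal hρ.le]

lemma var_bound {Ω : Type*} [MeasurableSpace Ω] (ℙ : Measure Ω) [IsProbabilityMeasure ℙ]
    {d : ℕ} (hd : 0 < d) {τ : Rd d → Ω → Ω} (hτadd : ∀ x y, τ x ∘ τ y = τ (x + y))
    (hτmeas : Measurable fun p : Rd d × Ω => τ p.1 p.2)
    (hτstat : ∀ x, MeasurePreserving (τ x) ℙ ℙ)
    (φ : Rd d → Ω → ℝ) (hφ : Measurable fun p : Rd d × Ω => φ p.1 p.2)
    (n : ℝ) (hb : ∀ z ω, |φ z ω| ≤ n) (l : ℝ) (hl : 0 < l) (C : ℝ) (hC : 0 < C)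
    (hcov : ∀ x z₁ z₂ : Rd d, |∫ ω, φ z₁ ω * φ z₂ (τ x ω) ∂ℙ| ≤ C ∧
      (x ≠ 0 → |∫ ω, φ z₁ ω * φ z₂ (τ x ω) ∂ℙ| ≤ C * ‖x‖ ^ (-l)))
    (F : Rd d × Rd d → ℝ) (hF : Measurable F) (M : ℝ) (hM : ∀ q, |F q| ≤ M)
    (R : ℝ) (hR : ∀ q, R < ‖q‖ → F q = 0) :
    ∃ C' : ℝ, 0 ≤ C' ∧ ∀ t : ℝ, 1 ≤ t →
      ∫ ω, (∫ q, F q * φ (t • q.2) (τ (t • q.1) ω)) ^ 2 ∂ℙ ≤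
        C' * t ^ (-(min (1 / 2) (l / 2))) := by
  set μ := (volume : Measure (Rd d × Rd d)).restrict (closedBall 0 R) with hμ
  have : IsFiniteMeasure μ := ⟨by
    rw [hμ, Measure.restrict_apply_univ]; exact measure_closedBall_lt_top⟩
  obtain ⟨C₀, hC₀, hdiag⟩ := diag_meas hd R
  rw [← hμ] at hdiag
  have hM0 : 0 ≤ M := (abs_nonneg _).trans (hM 0)
  refine ⟨M ^ 2 * C * (C₀ + (μ.prod μ).real univ), by positivity, ?_⟩
  intro t ht
  have ht0 : 0 < t := by linarith
  set G : Rd d × Rd d → Ω → ℝ := fun q ω => F q * φ (t • q.2) (τ (t • q.1) ω) with hG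
  have hGm : Measurable (fun p : (Rd d × Rd d) × Ω => G p.1 p.2) := by
    apply (hF.comp measurable_fst).mul
    exact hφ.comp ((by fun_prop : Measurable fun p : (Rd d × Rd d) × Ω => t • p.1.2).prodMk
      (hτmeas.comp ((by fun_prop : Measurable fun p : (Rd d × Rd d) × Ω => t • p.1.1).prodMk
        measurable_snd)))
  have hGb : ∀ q ω, |G q ω| ≤ M * n := by
    intro q ω
    simp only [hG, abs_mul]
    exact mul_le_mul (hM _) (hb _ _) (abs_nonneg _) hM0
  have hn : 0 ≤ n ∨ IsEmpty Ω := by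
    rcases isEmpty_or_nonempty Ω with h | ⟨⟨ω⟩⟩
    · exact Or.inr h
    · exact Or.inl ((abs_nonneg _).trans (hb 0 ω))
  have hI : ∀ ω, (∫ q, F q * φ (t • q.2) (τ (t • q.1) ω)) = ∫ q, G q ω ∂μ := by
    intro ω
    rw [hμ, setIntegral_eq_integral_of_forall_compl_eq_zero]
    intro q hq
    rw [mem_closedBall, dist_zero_right, not_le] at hq
    simp [hG, hR q hq]
  have hH : Measurable (fun p : Ω × ((Rd d × Rd d) × (Rd d × Rd d)) => G p.2.1 p.1 * G p.2.2 p.1) := by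
    apply Measurable.mul
    · exact hGm.comp ((by fun_prop : Measurable fun p : Ω × ((Rd d × Rd d) × (Rd d × Rd d)) => (p.2.1, p.1)))
    · exact hGm.comp ((by fun_prop : Measurable fun p : Ω × ((Rd d × Rd d) × (Rd d × Rd d)) => (p.2.2, p.1)))
  have h1 : ∫ ω, (∫ q, G q ω ∂μ) ^ 2 ∂ℙ =
      ∫ r, (∫ ω, G r.1 ω * G r.2 ω ∂ℙ) ∂(μ.prod μ) := by
    rw [← integral_integral_swap]
    · congr 1; ext ω
      rw [integral_prod_mul (fun q => G q ω) (fun q => G q ω), sq]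
    · refine Integrable.of_bound hH.aestronglyMeasurable ((M * n) * (M * n)) (ae_of_all _ ?_)
      rintro ⟨ω, r⟩
      simp only [Function.uncurry, norm_mul, Real.norm_eq_abs]
      exact mul_le_mul (hGb _ _) (hGb _ _) (abs_nonneg _) ((abs_nonneg _).trans (hGb r.1 ω))
  have hcv : ∀ r : (Rd d × Rd d) × (Rd d × Rd d), |∫ ω, G r.1 ω * G r.2 ω ∂ℙ| ≤
      M ^ 2 * |∫ ω, φ (t • r.1.2) ω * φ (t • r.2.2) (τ (t • (r.2.1 - r.1.1)) ω) ∂ℙ| := by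
    intro r
    have e : ∫ ω, G r.1 ω * G r.2 ω ∂ℙ = (F r.1 * F r.2) *
        ∫ ω, φ (t • r.1.2) ω * φ (t • r.2.2) (τ (t • (r.2.1 - r.1.1)) ω) ∂ℙ := by
      have hmeas : Measurable fun ω => φ (t • r.1.2) ω * φ (t • r.2.2) (τ (t • (r.2.1 - r.1.1)) ω) := by
        apply Measurable.mul
        · exact hφ.comp (measurable_const.prodMk measurable_id)
        · exact hφ.comp (measurable_const.prodMk (hτstat _).measurable)
      rw [← integral_const_mul]
      conv_rhs => rw [← (hτstat (t • r.1.1)).map_eq]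
      rw [integral_map (hτstat _).measurable.aemeasurable (hmeas.const_mul _).aestronglyMeasurable]
      congr 1; ext ω
      have : τ (t • r.2.1) ω = τ (t • (r.2.1 - r.1.1)) (τ (t • r.1.1) ω) := by
        have := congrFun (hτadd (t • (r.2.1 - r.1.1)) (t • r.1.1)) ω
        rw [← smul_add, sub_add_cancel] at this
        exact this.symm
      simp only [hG]
      rw [this]; ring
    rw [e, abs_mul, abs_mul, sq]
    gcongr <;> exact hM _
  set S : Set ((Rd d × Rd d) × (Rd d × Rd d)) := {r | ‖r.2.1 - r.1.1‖ ≤ t ^ (-(1 / 2) : ℝ)} with hS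
  have hSm : MeasurableSet S := measurableSet_le (by fun_prop) measurable_const
  have hpt : ∀ r : (Rd d × Rd d) × (Rd d × Rd d), |∫ ω, G r.1 ω * G r.2 ω ∂ℙ| ≤
      M ^ 2 * C * (S.indicator (fun _ => (1 : ℝ)) r + t ^ (-(l / 2))) := by
    intro r
    refine (hcv r).trans ?_
    rw [mul_assoc]
    gcongr
    by_cases hr : r ∈ S
    · refine (hcov _ _ _).1.trans ?_
      rw [indicator_of_mem hr]
      have : 0 ≤ t ^ (-(l / 2)) := by positivity
      nlinarith
    · rw [indicator_of_notMem hr, zero_add]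
      simp only [hS, mem_ofPred_eq, not_le] at hr
      have hpos : 0 < t ^ (-(1 / 2) : ℝ) := by positivity
      have hne : r.2.1 - r.1.1 ≠ 0 := norm_pos_iff.1 (hpos.trans hr)
      refine ((hcov _ _ _).2 (smul_ne_zero ht0.ne' hne)).trans ?_
      gcongr
      have h2 : t ^ (1 / 2 : ℝ) ≤ ‖t • (r.2.1 - r.1.1)‖ := by
        rw [norm_smul, Real.norm_eq_abs, abs_of_pos ht0]
        calc t ^ (1 / 2 : ℝ) = t * t ^ (-(1 / 2) : ℝ) := by
              rw [← Real.rpow_one_add' ht0.le (by norm_num)]; norm_num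
          _ ≤ _ := by gcongr
      calc _ ≤ (t ^ (1 / 2 : ℝ)) ^ (-l) :=
            Real.rpow_le_rpow_of_nonpos (by positivity) h2 (by linarith)
        _ = _ := by rw [← Real.rpow_mul ht0.le]; ring_nf
  simp_rw [hI]
  rw [h1]
  have hbi : Integrable (fun r => M ^ 2 * C * (S.indicator (fun _ => (1 : ℝ)) r + t ^ (-(l / 2)))) (μ.prod μ) :=
    (((integrable_const (1 : ℝ)).indicator hSm).add (integrable_const _)).const_mul _
  calc _ ≤ ∫ r, |∫ ω, G r.1 ω * G r.2 ω ∂ℙ| ∂(μ.prod μ) :=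
        (le_abs_self _).trans abs_integral_le_integral_abs
    _ ≤ ∫ r, M ^ 2 * C * (S.indicator (fun _ => (1 : ℝ)) r + t ^ (-(l / 2))) ∂(μ.prod μ) :=
        integral_mono_of_nonneg (ae_of_all _ fun _ => abs_nonneg _) hbi (ae_of_all _ hpt)
    _ = M ^ 2 * C * ((μ.prod μ).real S + (μ.prod μ).real univ * t ^ (-(l / 2))) := by
        rw [integral_const_mul, integral_add ((integrable_const (1 : ℝ)).indicator hSm)
          (integrable_const _), integral_indicator hSm, setIntegral_const,
          integral_const, smul_eq_mul, smul_eq_mul, mul_one]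
    _ ≤ M ^ 2 * C * (C₀ * t ^ (-(1 / 2) : ℝ) + (μ.prod μ).real univ * t ^ (-(l / 2))) := by
        gcongr
        exact hdiag _ (by positivity) (Real.rpow_le_one_of_one_le_of_nonpos ht (by norm_num))
    _ ≤ M ^ 2 * C * (C₀ * t ^ (-(min (1 / 2) (l / 2))) +
          (μ.prod μ).real univ * t ^ (-(min (1 / 2) (l / 2)))) := by
        gcongr
        · exact min_le_left _ _
        · exact min_le_right _ _
    _ = _ := by ring

lemma bc_lemma {Ω : Type*} [MeasurableSpace Ω] (ℙ : Measure Ω) [IsProbabilityMeasure ℙ]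
    (I : ℕ → Ω → ℝ) (hI : ∀ k, Measurable (I k)) (B : ℝ) (hB : ∀ k ω, |I k ω| ≤ B)
    (a : ℕ → ℝ) (ha : Summable a) (hk : ∀ k, 1 ≤ k → ∫ ω, (I k ω) ^ 2 ∂ℙ ≤ a k) :
    ∀ᵐ ω ∂ℙ, Tendsto (fun k => I k ω) atTop (𝓝 0) := by
  have hint : ∀ k, Integrable (fun ω => (I k ω) ^ 2) ℙ := by
    intro k
    refine Integrable.of_bound ((hI k).pow_const 2).aestronglyMeasurable (B ^ 2) (ae_of_all _ ?_)
    intro ω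
    rw [Real.norm_eq_abs, abs_pow]
    exact pow_le_pow_left₀ (abs_nonneg _) (hB k ω) 2
  have h1 : ∫⁻ ω, ∑' k, ENNReal.ofReal ((I (k + 1) ω) ^ 2) ∂ℙ ≠ ∞ := by
    rw [lintegral_tsum (fun k => ((hI _).pow_const 2).ennreal_ofReal.aemeasurable)]
    have h2 : ∀ k, ∫⁻ ω, ENNReal.ofReal ((I (k + 1) ω) ^ 2) ∂ℙ ≤ ENNReal.ofReal (a (k + 1)) := by
      intro k
      rw [← ofReal_integral_eq_lintegral_ofReal (hint _) (ae_of_all _ fun _ => sq_nonneg _)]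
      exact ENNReal.ofReal_le_ofReal (hk _ (by omega))
    refine ne_top_of_le_ne_top ?_ (ENNReal.tsum_le_tsum h2)
    exact ((summable_nat_add_iff 1).2 ha).tsum_ofReal_ne_top
  have h3 := ae_lt_top (Measurable.tsum
    (fun k => ((hI (k+1)).pow_const 2).ennreal_ofReal)) h1
  filter_upwards [h3] with ω hω
  have h4 := ENNReal.tendsto_atTop_zero_of_tsum_ne_top hω.ne
  rw [← tendsto_add_atTop_iff_nat 1]
  have h5 : Tendsto (fun k => (I (k + 1) ω) ^ 2) atTop (𝓝 0) := by
    have := (ENNReal.tendsto_toReal ENNReal.zero_ne_top).comp h4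
    simpa [Function.comp_def, ENNReal.toReal_ofReal (sq_nonneg _)] using this
  have h6 := h5.sqrt
  simp only [Real.sqrt_sq_eq_abs, Real.sqrt_zero] at h6
  exact (tendsto_zero_iff_abs_tendsto_zero _).2 h6

end Part3

section Part4

instance instHaarProd (d : ℕ) : (volume : Measure (Rd d × Rd d)).IsAddHaarMeasure :=
  inferInstanceAs (((volume : Measure (Rd d)).prod (volume : Measure (Rd d))).IsAddHaarMeasure)

lemma trunc_ae {Ω : Type*} [MeasurableSpace Ω] (ℙ : Measure Ω) [IsProbabilityMeasure ℙ]
    {d : ℕ} (hd : 0 < d) {τ : Rd d → Ω → Ω} (hτadd : ∀ x y, τ x ∘ τ y = τ (x + y))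
    (hτmeas : Measurable fun p : Rd d × Ω => τ p.1 p.2)
    (hτstat : ∀ x, MeasurePreserving (τ x) ℙ ℙ)
    (φ : Rd d → Ω → ℝ) (hφ : Measurable fun p : Rd d × Ω => φ p.1 p.2)
    (n : ℝ) (hb : ∀ z ω, |φ z ω| ≤ n) (l : ℝ) (hl : 0 < l) (C : ℝ) (hC : 0 < C)
    (hcov : ∀ x z₁ z₂ : Rd d, |∫ ω, φ z₁ ω * φ z₂ (τ x ω) ∂ℙ| ≤ C ∧
      (x ≠ 0 → |∫ ω, φ z₁ ω * φ z₂ (τ x ω) ∂ℙ| ≤ C * ‖x‖ ^ (-l))) :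
    ∀ᵐ ω ∂ℙ, ∀ F : Rd d × Rd d → ℝ, Integrable F →
      Tendsto (fun t : ℝ => ∫ q, F q * φ (t • q.2) (τ (t • q.1) ω)) atTop (𝓝 0) := by
  obtain ⟨Fs, hFs, hdense⟩ := dense_seq (volume : Measure (Rd d × Rd d))
  set γ := min (1 / 2) (l / 2) with hγ
  have hγ0 : 0 < γ := by positivity
  obtain ⟨m, hm⟩ := exists_nat_gt (1 / γ)
  have hm0 : 0 < m := by
    have : (0 : ℝ) < m := lt_trans (by positivity) hm
    exact_mod_cast this
  have hmγ : 1 < m * γ := by rwa [div_lt_iff₀ hγ0] at hm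
  have hψ : ∀ ω, Measurable (fun q : Rd d × Rd d => φ q.2 (τ q.1 ω)) := fun ω =>
    hφ.comp (measurable_snd.prodMk (hτmeas.comp (measurable_fst.prodMk measurable_const)))
  have hstep : ∀ j, ∀ᵐ ω ∂ℙ, Tendsto (fun k : ℕ => ∫ q, Fs j q *
      φ (((k : ℝ) ^ m) • q.2) (τ (((k : ℝ) ^ m) • q.1) ω)) atTop (𝓝 0) := by
    intro j
    obtain ⟨hc, hs⟩ := hFs j
    obtain ⟨M, hM⟩ := hc.bounded_above_of_compact_support hs
    obtain ⟨R, hR0, hR⟩ := exists_radius hs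
    obtain ⟨C', hC'0, hC'⟩ := var_bound ℙ hd hτadd hτmeas hτstat φ hφ n hb l hl C hC hcov (Fs j)
      hc.measurable M hM R hR
    have hFi : Integrable (Fs j) := hc.integrable_of_hasCompactSupport hs
    apply bc_lemma ℙ _ _ (n * ∫ q, |Fs j q|) _ (fun k : ℕ => C' * (((k : ℝ) ^ (m * γ))⁻¹))
    · exact (Real.summable_nat_rpow_inv.2 hmγ).mul_left _
    · intro k hk
      have hk1 : (1 : ℝ) ≤ k := by exact_mod_cast hk
      refine (hC' ((k : ℝ) ^ m) (one_le_pow₀ hk1)).trans (le_of_eq ?_)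
      rw [← Real.rpow_natCast, ← Real.rpow_mul (by positivity), mul_neg,
        Real.rpow_neg (by positivity)]
    · intro k
      have : Measurable (fun p : Ω × (Rd d × Rd d) => Fs j p.2 *
          φ (((k : ℝ) ^ m) • p.2.2) (τ (((k : ℝ) ^ m) • p.2.1) p.1)) := by
        apply (hc.measurable.comp measurable_snd).mul
        exact hφ.comp ((by fun_prop : Measurable fun p : Ω × (Rd d × Rd d) => ((k : ℝ) ^ m) • p.2.2).prodMk
          (hτmeas.comp ((by fun_prop : Measurable fun p : Ω × (Rd d × Rd d) =>
            ((k : ℝ) ^ m) • p.2.1).prodMk measurable_fst)))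
      exact this.stronglyMeasurable.integral_prod_right'.measurable
    · intro k ω
      rw [← integral_const_mul]
      refine abs_integral_le_integral_abs.trans ?_
      apply integral_mono_of_nonneg (ae_of_all _ fun _ => abs_nonneg _) (hFi.abs.const_mul _)
      refine ae_of_all _ fun q => ?_
      simp only [abs_mul]
      rw [mul_comm]
      exact mul_le_mul_of_nonneg_right (hb _ _) (abs_nonneg _)
  filter_upwards [ae_all_iff.2 hstep] with ω hω F hF
  exact ext_dense volume (fun q => φ q.2 (τ q.1 ω)) (hψ ω) n (fun q => hb _ _) Fs hFs hdense
    (fun j => interp volume (fun q => φ q.2 (τ q.1 ω)) (hψ ω) n (fun q => hb _ _) (hFs j).1 (hFs j).2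
      m hm0 (hω j)) F hF

lemma trunc_ae' {Ω : Type*} [MeasurableSpace Ω] (ℙ : Measure Ω) [IsProbabilityMeasure ℙ]
    {d : ℕ} (hd : 0 < d) {τ : Rd d → Ω → Ω} (hτadd : ∀ x y, τ x ∘ τ y = τ (x + y))
    (hτmeas : Measurable fun p : Rd d × Ω => τ p.1 p.2)
    (hτstat : ∀ x, MeasurePreserving (τ x) ℙ ℙ)
    (ν : Rd d → Ω → ℝ) (hνmeas : Measurable fun p : Rd d × Ω => ν p.1 p.2)
    (hνnn : ∀ z ω, 0 ≤ ν z ω)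
    (l : ℝ) (hl : 0 < l) (n : ℝ) (hn : 0 < n)
    (hmix : ∃ C : ℝ, 0 < C ∧ ∀ x z₁ z₂ : Rd d,
      |(∫ ω, min (ν z₁ ω) n * min (ν z₂ (τ x ω)) n ∂ℙ)
          - (∫ ω, min (ν z₁ ω) n ∂ℙ) * (∫ ω, min (ν z₂ ω) n ∂ℙ)| ≤ C ∧
      (x ≠ 0 → |(∫ ω, min (ν z₁ ω) n * min (ν z₂ (τ x ω)) n ∂ℙ)
          - (∫ ω, min (ν z₁ ω) n ∂ℙ) * (∫ ω, min (ν z₂ ω) n ∂ℙ)| ≤ C * ‖x‖ ^ (-l))) :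
    ∀ᵐ ω ∂ℙ, ∀ F : Rd d × Rd d → ℝ, Integrable F →
      Tendsto (fun t : ℝ => ∫ q, F q * (min (ν (t • q.2) (τ (t • q.1) ω)) n -
        ∫ ω', min (ν (t • q.2) ω') n ∂ℙ)) atTop (𝓝 0) := by
  obtain ⟨C, hC, hcov⟩ := hmix
  have hm1 : Measurable fun p : Rd d × Ω => min (ν p.1 p.2) n := hνmeas.min measurable_const
  have hm2 : Measurable fun z : Rd d => ∫ ω', min (ν z ω') n ∂ℙ :=
    hm1.stronglyMeasurable.integral_prod_right'.measurable
  have hbd : ∀ z ω, |min (ν z ω) n| ≤ n := by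
    intro z ω
    rw [abs_of_nonneg (le_min (hνnn _ _) hn.le)]
    exact min_le_right _ _
  have hi : ∀ z, Integrable (fun ω => min (ν z ω) n) ℙ := fun z =>
    Integrable.of_bound (hm1.comp (measurable_const.prodMk measurable_id)).aestronglyMeasurable n
      (ae_of_all _ (hbd z))
  have hA0 : ∀ z, 0 ≤ ∫ ω', min (ν z ω') n ∂ℙ := fun z =>
    integral_nonneg fun ω => le_min (hνnn _ _) hn.le
  have hAn : ∀ z, ∫ ω', min (ν z ω') n ∂ℙ ≤ n := fun z => by
    have := integral_mono (hi z) (integrable_const n) (fun ω => min_le_right (ν z ω) n)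
    simpa using this
  apply trunc_ae ℙ hd hτadd hτmeas hτstat (fun z ω => min (ν z ω) n - ∫ ω', min (ν z ω') n ∂ℙ)
    (hm1.sub (hm2.comp measurable_fst)) n _ l hl C hC
  · intro x z₁ z₂
    have hi2 : Integrable (fun ω => min (ν z₂ (τ x ω)) n) ℙ :=
      (hτstat x).integrable_comp_of_integrable (hi z₂)
    have hi12 : Integrable (fun ω => min (ν z₁ ω) n * min (ν z₂ (τ x ω)) n) ℙ :=
      hi2.bdd_mul (hi z₁).aestronglyMeasurable (ae_of_all _ (hbd z₁))
    have hE2 : ∫ ω, min (ν z₂ (τ x ω)) n ∂ℙ = ∫ ω, min (ν z₂ ω) n ∂ℙ := by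
      conv_rhs => rw [← (hτstat x).map_eq]
      rw [integral_map (hτstat x).measurable.aemeasurable]
      rw [(hτstat x).map_eq]
      exact (hi z₂).aestronglyMeasurable
    have e : ∫ ω, (min (ν z₁ ω) n - ∫ ω', min (ν z₁ ω') n ∂ℙ) *
        (min (ν z₂ (τ x ω)) n - ∫ ω', min (ν z₂ ω') n ∂ℙ) ∂ℙ =
        (∫ ω, min (ν z₁ ω) n * min (ν z₂ (τ x ω)) n ∂ℙ)
          - (∫ ω, min (ν z₁ ω) n ∂ℙ) * (∫ ω, min (ν z₂ ω) n ∂ℙ) := by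
      set A := ∫ ω', min (ν z₁ ω') n ∂ℙ
      set B := ∫ ω', min (ν z₂ ω') n ∂ℙ
      have : ∀ ω, (min (ν z₁ ω) n - A) * (min (ν z₂ (τ x ω)) n - B) =
        (min (ν z₁ ω) n * min (ν z₂ (τ x ω)) n - min (ν z₁ ω) n * B)
          - (A * min (ν z₂ (τ x ω)) n - A * B) := fun ω => by ring
      simp_rw [this]
      have i1 : Integrable (fun ω => min (ν z₁ ω) n * min (ν z₂ (τ x ω)) n - min (ν z₁ ω) n * B) ℙ :=
        hi12.sub ((hi z₁).mul_const _)
      have i2 : Integrable (fun ω => A * min (ν z₂ (τ x ω)) n - A * B) ℙ :=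
        (hi2.const_mul _).sub (integrable_const _)
      rw [integral_sub i1 i2,
        integral_sub hi12 ((hi z₁).mul_const _), integral_sub (hi2.const_mul _) (integrable_const _),
        integral_mul_const, integral_const_mul, hE2]
      simp [A, B]
    rw [e]
    exact hcov x z₁ z₂
  · intro z ω
    rw [abs_le]
    have h1 := hA0 z
    have h2 := hAn z
    have h3 := min_le_right (ν z ω) n
    have h4 := le_min (hνnn z ω) hn.le
    constructor <;> linarith

lemma trunc_pt {a b v N p : ℝ} (ha : 0 ≤ a) (hb : 0 ≤ b) (hv : v ≤ a + b) (hN : 0 < N)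
    (hp : 1 < p) : v - min v (2 * N) ≤ N ^ (1 - p) * (a ^ p + b ^ p) := by
  have key : ∀ a : ℝ, 0 ≤ a → a - N ≤ N ^ (1 - p) * a ^ p := by
    intro a ha
    rcases le_or_gt a N with h | h
    · have : 0 ≤ N ^ (1 - p) * a ^ p := by positivity
      linarith
    · have ha' : 0 < a := hN.trans h
      have h1 : a ^ (1 - p) ≤ N ^ (1 - p) := Real.rpow_le_rpow_of_nonpos hN h.le (by linarith)
      have h2 : a ^ (1 - p) * a ^ p = a := by
        rw [← Real.rpow_add ha']; simp
      have h3 : a ^ (1 - p) * a ^ p ≤ N ^ (1 - p) * a ^ p := by gcongr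
      linarith
  have ka := key a ha
  have kb := key b hb
  rcases le_total v (2 * N) with h | h
  · rw [min_eq_left h, sub_self]; positivity
  · rw [min_eq_right h]; linarith

end Part4

section Part5

lemma U_bound {d : ℕ} (X : Rd d → ℝ) (hXm : Measurable X) (hX0 : ∀ x, 0 ≤ X x)
    (C' : ℝ≥0∞) (hC' : C' ≠ ∞)
    (h : ∀ R ε : ℝ, 0 < ε → ε ≤ R →
      ∫⁻ x in closedBall (0 : Rd d) R, ENNReal.ofReal (X (ε⁻¹ • x)) ≤ C' * ENNReal.ofReal (R ^ d))
    (R : ℝ) (hR : 0 < R) :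
    ∃ C₁ : ℝ, 0 ≤ C₁ ∧ ∀ ε : ℝ, 0 < ε → ε ≤ R →
      IntegrableOn (fun q : Rd d × Rd d => X (ε⁻¹ • q.1) + X (ε⁻¹ • (q.1 + q.2))) (closedBall 0 R) ∧
      ∫ q in closedBall (0 : Rd d × Rd d) R, (X (ε⁻¹ • q.1) + X (ε⁻¹ • (q.1 + q.2))) ≤ C₁ := by
  set v := volume (closedBall (0 : Rd d) R) with hv
  have hvt : v ≠ ∞ := measure_closedBall_lt_top.ne
  set B : ℝ≥0∞ := C' * ENNReal.ofReal (R ^ d) * v + C' * ENNReal.ofReal ((2 * R) ^ d) * v with hB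
  have hBt : B ≠ ∞ := by
    rw [hB]
    exact ENNReal.add_ne_top.2 ⟨ENNReal.mul_ne_top (ENNReal.mul_ne_top hC' (by simp)) hvt,
      ENNReal.mul_ne_top (ENNReal.mul_ne_top hC' (by simp)) hvt⟩
  refine ⟨B.toReal, ENNReal.toReal_nonneg, ?_⟩
  intro ε hε hεR
  have hQ : closedBall (0 : Rd d × Rd d) R = closedBall 0 R ×ˢ closedBall 0 R :=
    (closedBall_prod_same _ _ _).symm
  have hvol : (volume : Measure (Rd d × Rd d)).restrict (closedBall 0 R) =
      (volume.restrict (closedBall (0 : Rd d) R)).prod (volume.restrict (closedBall (0 : Rd d) R)) := by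
    rw [hQ, Measure.prod_restrict, Measure.volume_eq_prod]
  have hm1 : Measurable (fun q : Rd d × Rd d => X (ε⁻¹ • q.1)) :=
    hXm.comp (by fun_prop)
  have hm2 : Measurable (fun q : Rd d × Rd d => X (ε⁻¹ • (q.1 + q.2))) :=
    hXm.comp (by fun_prop)
  have hU0 : ∀ q : Rd d × Rd d, 0 ≤ X (ε⁻¹ • q.1) + X (ε⁻¹ • (q.1 + q.2)) :=
    fun q => add_nonneg (hX0 _) (hX0 _)
  have key : ∫⁻ q in closedBall (0 : Rd d × Rd d) R,
      ENNReal.ofReal (X (ε⁻¹ • q.1) + X (ε⁻¹ • (q.1 + q.2))) ≤ B := by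
    simp_rw [ENNReal.ofReal_add (hX0 _) (hX0 _)]
    rw [lintegral_add_left hm1.ennreal_ofReal, hB, hvol,
      lintegral_prod_symm _ hm1.ennreal_ofReal.aemeasurable,
      lintegral_prod_symm _ hm2.ennreal_ofReal.aemeasurable]
    gcongr
    · calc _ ≤ ∫⁻ z in closedBall (0 : Rd d) R, C' * ENNReal.ofReal (R ^ d) := by
            apply lintegral_mono; intro z; exact h R ε hε hεR
        _ = _ := by rw [setLIntegral_const]
    · calc _ ≤ ∫⁻ z in closedBall (0 : Rd d) R, C' * ENNReal.ofReal ((2 * R) ^ d) := by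
            apply setLIntegral_mono' measurableSet_closedBall
            intro z hz
            refine le_trans ?_ (h (2 * R) ε hε (by linarith))
            rw [lintegral_shift (fun y => ENNReal.ofReal (X (ε⁻¹ • y))) z R]
            apply lintegral_mono_set
            apply closedBall_subset_closedBall'
            have := mem_closedBall.1 hz
            linarith
        _ = _ := by rw [setLIntegral_const]
  have hint : IntegrableOn (fun q : Rd d × Rd d => X (ε⁻¹ • q.1) + X (ε⁻¹ • (q.1 + q.2)))
      (closedBall 0 R) := by
    refine ⟨(hm1.add hm2).aestronglyMeasurable, ?_⟩
    rw [hasFiniteIntegral_iff_ofReal (ae_of_all _ hU0)]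
    exact key.trans_lt hBt.lt_top
  refine ⟨hint, ?_⟩
  rw [integral_eq_lintegral_of_nonneg_ae (ae_of_all _ hU0) (hm1.add hm2).aestronglyMeasurable]
  exact ENNReal.toReal_mono hBt key

lemma nu'_int {d : ℕ} (e : Rd d → ℝ) (hem : Measurable e) (he0 : ∀ z, 0 ≤ e z) (E₀ : ℝ)
    (heE : ∀ z, e z ≤ E₀)
    (ν' : Rd d → ℝ) (hν'meas : Measurable ν') (hν'nn : ∀ z, 0 ≤ ν' z)
    (hconv : ∀ h : Rd d → ℝ, Measurable h → (∃ M, ∀ z, |h z| ≤ M) →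
      HasCompactSupport h →
      Tendsto (fun ε : ℝ => ∫ z, h z * e (ε⁻¹ • z))
        (𝓝[>] (0 : ℝ)) (𝓝 (∫ z, h z * ν' z))) (R : ℝ) :
    IntegrableOn ν' (closedBall 0 R) := by
  set v := volume.real (closedBall (0 : Rd d) R) with hv
  have hE0 : 0 ≤ E₀ := (he0 0).trans (heE 0)
  set S : ℕ → Set (Rd d) := fun n => closedBall 0 R ∩ {z | ν' z ≤ n} with hS
  have hSm : ∀ n, MeasurableSet (S n) := fun n =>
    measurableSet_closedBall.inter (measurableSet_le hν'meas measurable_const)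
  have hSfin : ∀ n, volume (S n) ≠ ∞ := fun n =>
    ((measure_mono inter_subset_left).trans_lt measure_closedBall_lt_top).ne
  have hle : ∀ n, ∫⁻ z in S n, ENNReal.ofReal (ν' z) ≤ ENNReal.ofReal (v * E₀) := by
    intro n
    have hSi : IntegrableOn ν' (S n) := by
      refine Measure.integrableOn_of_bounded (M := n) (hSfin n) hν'meas.aestronglyMeasurable ?_
      refine (ae_restrict_iff' (hSm n)).2 (ae_of_all _ fun z hz => ?_)
      rw [Real.norm_eq_abs, abs_of_nonneg (hν'nn z)]; exact hz.2
    have hind : ∀ G : Rd d → ℝ, ∫ z, (S n).indicator (fun _ => (1 : ℝ)) z * G z = ∫ z in S n, G z := by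
      intro G
      rw [← integral_indicator (hSm n)]
      congr 1; ext z
      by_cases hz : z ∈ S n <;> simp [hz]
    have ht := hconv ((S n).indicator (fun _ => 1)) (measurable_const.indicator (hSm n))
      ⟨1, fun z => by by_cases hz : z ∈ S n <;> simp [hz]⟩
      (HasCompactSupport.intro (isCompact_closedBall 0 R) (fun z hz => by
        rw [indicator_of_notMem]; exact fun h => hz h.1))
    simp only [hind] at ht
    have hlim : ∫ z in S n, ν' z ≤ v * E₀ := by
      refine le_of_tendsto ht (Eventually.of_forall fun ε => ?_)
      have h1 : ∫ z in S n, e (ε⁻¹ • z) ≤ ∫ z in S n, E₀ :=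
        integral_mono_of_nonneg (ae_of_all _ fun _ => he0 _)
          (integrableOn_const (hSfin n)) (ae_of_all _ fun _ => heE _)
      refine h1.trans ?_
      rw [setIntegral_const, smul_eq_mul]
      gcongr
      exact measureReal_mono inter_subset_left measure_closedBall_lt_top.ne
    rw [← ofReal_integral_eq_lintegral_ofReal hSi (ae_of_all _ hν'nn)]
    exact ENNReal.ofReal_le_ofReal hlim
  have hU : closedBall 0 R = ⋃ n, S n := by
    ext z
    simp only [hS, mem_iUnion, mem_inter_iff, mem_ofPred_eq]
    refine ⟨fun h => ?_, fun ⟨n, h⟩ => h.1⟩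
    obtain ⟨n, hn⟩ := exists_nat_ge (ν' z)
    exact ⟨n, h, hn⟩
  have hmono : Monotone S := by
    intro m n hmn z hz
    exact ⟨hz.1, show ν' z ≤ (n : ℝ) from
      le_trans (show ν' z ≤ (m : ℝ) from hz.2) (by exact_mod_cast hmn)⟩
  refine ⟨hν'meas.aestronglyMeasurable, ?_⟩
  rw [hasFiniteIntegral_iff_ofReal (ae_of_all _ hν'nn), hU,
    setLIntegral_iUnion_of_directed _ hmono.directed_le]
  exact (iSup_le hle).trans_lt ENNReal.ofReal_lt_top

end Part5

section Part6

lemma assembly {d : ℕ} (K : Rd d × Rd d → ℝ) (hKm : Measurable K) (hK0 : ∀ q, 0 ≤ K q)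
    (X : Rd d → ℝ) (hXm : Measurable X) (hX0 : ∀ x, 0 ≤ X x)
    (C' : ℝ≥0∞) (hC' : C' ≠ ∞)
    (hmax : ∀ R ε : ℝ, 0 < ε → ε ≤ R →
      ∫⁻ x in closedBall (0 : Rd d) R, ENNReal.ofReal (X (ε⁻¹ • x)) ≤ C' * ENNReal.ofReal (R ^ d))
    (p : ℝ) (hp : 1 < p)
    (hKX : ∀ N : ℝ, 0 < N → ∀ q, K q - min (K q) (2 * N) ≤ N ^ (1 - p) * (X q.1 + X (q.1 + q.2)))
    (e : Rd d → ℝ) (hem : Measurable e) (he0 : ∀ z, 0 ≤ e z) (E₀ : ℝ)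
    (heE : ∀ z, e z ≤ E₀)
    (eN : ℕ → Rd d → ℝ) (heNm : ∀ N, Measurable (eN N)) (heN0 : ∀ N z, 0 ≤ eN N z)
    (heNe : ∀ N z, eN N z ≤ e z) (E₁ : ℝ)
    (hE₁ : ∀ (N : ℕ) z, e z - eN N z ≤ ((N : ℝ) + 1) ^ (1 - p) * E₁)
    (htr : ∀ (N : ℕ), ∀ F : Rd d × Rd d → ℝ, Integrable F →
      Tendsto (fun t : ℝ => ∫ q, F q * (min (K (t • q)) (2 * ((N : ℝ) + 1)) - eN N (t • q.2)))
        atTop (𝓝 0))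
    (ν' : Rd d → ℝ) (hν'meas : Measurable ν') (hν'nn : ∀ z, 0 ≤ ν' z)
    (hconv : ∀ h : Rd d → ℝ, Measurable h → (∃ M, ∀ z, |h z| ≤ M) →
      HasCompactSupport h →
      Tendsto (fun ε : ℝ => ∫ z, h z * e (ε⁻¹ • z))
        (𝓝[>] (0 : ℝ)) (𝓝 (∫ z, h z * ν' z)))
    (F : Rd d × Rd d → ℝ) (hF : Measurable F) (M : ℝ) (hM : ∀ q, |F q| ≤ M)
    (R : ℝ) (hR0 : 0 < R) (hR : ∀ q, R < ‖q‖ → F q = 0) :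
    (∀ ε : ℝ, 0 < ε → ε ≤ R → Integrable (fun q => F q * K (ε⁻¹ • q))) ∧
    Integrable (fun q => F q * ν' q.2) ∧
    Tendsto (fun ε : ℝ => ∫ q, F q * K (ε⁻¹ • q)) (𝓝[>] 0) (𝓝 (∫ q, F q * ν' q.2)) := by
  have hM0 : 0 ≤ M := (abs_nonneg _).trans (hM 0)
  set Q := closedBall (0 : Rd d × Rd d) R with hQdef
  have hQm : MeasurableSet Q := measurableSet_closedBall
  have hQfin : volume Q ≠ ∞ := measure_closedBall_lt_top.ne
  have hFQ : ∀ q, q ∉ Q → F q = 0 := by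
    intro q hq
    rw [hQdef, mem_closedBall, dist_zero_right, not_le] at hq
    exact hR q hq
  have hQ : Q = closedBall 0 R ×ˢ closedBall 0 R := (closedBall_prod_same _ _ _).symm
  have hvol : (volume : Measure (Rd d × Rd d)).restrict Q =
      (volume.restrict (closedBall (0 : Rd d) R)).prod (volume.restrict (closedBall (0 : Rd d) R)) := by
    rw [hQ, Measure.prod_restrict, Measure.volume_eq_prod]
  -- multiplication by F turns local integrability into integrability, with a bound
  have hmul : ∀ G : Rd d × Rd d → ℝ, IntegrableOn G Q → Integrable (fun q => F q * G q) := by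
    intro G hG
    have h1 : IntegrableOn (fun q => F q * G q) Q :=
      Integrable.bdd_mul hG hF.aestronglyMeasurable (ae_of_all _ hM)
    have h2 : (fun q => F q * G q) = Q.indicator (fun q => F q * G q) := by
      ext q
      by_cases hq : q ∈ Q
      · rw [indicator_of_mem hq]
      · rw [indicator_of_notMem hq, hFQ q hq, zero_mul]
    rw [h2]
    exact h1.integrable_indicator hQm
  have hbnd : ∀ G H : Rd d × Rd d → ℝ, IntegrableOn H Q → (∀ q, |G q| ≤ H q) →
      |∫ q, F q * G q| ≤ M * ∫ q in Q, H q := by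
    intro G H hH hGH
    have h1 : ∫ q, F q * G q = ∫ q in Q, F q * G q :=
      (setIntegral_eq_integral_of_forall_compl_eq_zero fun q hq => by rw [hFQ q hq, zero_mul]).symm
    rw [h1, ← integral_const_mul]
    refine abs_integral_le_integral_abs.trans ?_
    apply integral_mono_of_nonneg (ae_of_all _ fun _ => abs_nonneg _) (hH.const_mul M)
    refine ae_of_all _ fun q => ?_
    simp only [abs_mul]
    exact mul_le_mul (hM _) (hGH _) (abs_nonneg _) hM0
  have hFi : Integrable F := by
    have := hmul (fun _ => 1) (integrableOn_const hQfin)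
    simpa using this
  obtain ⟨C₁, hC₁0, hC₁⟩ := U_bound X hXm hX0 C' hC' hmax R hR0
  have hKεm : ∀ ε : ℝ, Measurable (fun q : Rd d × Rd d => K (ε⁻¹ • q)) := fun ε =>
    hKm.comp (measurable_const_smul _)
  -- K integrable on Q
  have hKQ : ∀ ε : ℝ, 0 < ε → ε ≤ R → IntegrableOn (fun q => K (ε⁻¹ • q)) Q := by
    intro ε hε hεR
    refine Integrable.mono' ((integrableOn_const (C := (2 : ℝ)) hQfin).add (hC₁ ε hε hεR).1)
      (hKεm ε).aestronglyMeasurable (ae_of_all _ fun q => ?_)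
    rw [Real.norm_eq_abs, abs_of_nonneg (hK0 _)]
    have h1 := hKX 1 one_pos (ε⁻¹ • q)
    have h2 := min_le_right (K (ε⁻¹ • q)) (2 * 1)
    simp only [Real.one_rpow, one_mul, Prod.smul_fst, Prod.smul_snd, ← smul_add] at h1
    simp only [Pi.add_apply]
    linarith
  have hν'Q : IntegrableOn (fun q : Rd d × Rd d => ν' q.2) Q := by
    have h1 := nu'_int e hem he0 E₀ heE ν' hν'meas hν'nn hconv R
    rw [IntegrableOn, hvol]
    have : IsFiniteMeasure (volume.restrict (closedBall (0 : Rd d) R)) := ⟨by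
      rw [Measure.restrict_apply_univ]; exact measure_closedBall_lt_top⟩
    exact h1.comp_snd _
  have heQ : ∀ ε : ℝ, IntegrableOn (fun q : Rd d × Rd d => e (ε⁻¹ • q.2)) Q := by
    intro ε
    refine Measure.integrableOn_of_bounded (M := E₀) hQfin
      (hem.comp (by fun_prop)).aestronglyMeasurable (ae_of_all _ fun q => ?_)
    rw [Real.norm_eq_abs, abs_of_nonneg (he0 _)]; exact heE _
  have heNQ : ∀ (N : ℕ) (ε : ℝ), IntegrableOn (fun q : Rd d × Rd d => eN N (ε⁻¹ • q.2)) Q := by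
    intro N ε
    refine Measure.integrableOn_of_bounded (M := E₀) hQfin
      ((heNm N).comp (by fun_prop)).aestronglyMeasurable (ae_of_all _ fun q => ?_)
    rw [Real.norm_eq_abs, abs_of_nonneg (heN0 _ _)]; exact (heNe _ _).trans (heE _)
  have hKNQ : ∀ (N : ℕ) (ε : ℝ), IntegrableOn
      (fun q : Rd d × Rd d => min (K (ε⁻¹ • q)) (2 * ((N : ℝ) + 1))) Q := by
    intro N ε
    refine Measure.integrableOn_of_bounded (M := 2 * ((N : ℝ) + 1)) hQfin
      ((hKεm ε).min measurable_const).aestronglyMeasurable (ae_of_all _ fun q => ?_)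
    rw [Real.norm_eq_abs, abs_of_nonneg (le_min (hK0 _) (by positivity))]; exact min_le_right _ _
  refine ⟨fun ε hε hεR => hmul _ (hKQ ε hε hεR), hmul _ hν'Q, ?_⟩
  -- fourth term
  have hfourth : Tendsto (fun ε : ℝ => ∫ q, F q * e (ε⁻¹ • q.2)) (𝓝[>] 0) (𝓝 (∫ q, F q * ν' q.2)) := by
    set h : Rd d → ℝ := fun z => ∫ x, F (x, z) with hh
    have hFub : ∀ G : Rd d → ℝ, Integrable (fun q : Rd d × Rd d => F q * G q.2) →
        ∫ q : Rd d × Rd d, F q * G q.2 = ∫ z, h z * G z := by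
      intro G hG
      rw [Measure.volume_eq_prod, integral_prod_symm _ hG]
      simp only [integral_mul_const, hh]
    rw [hFub _ (hmul _ hν'Q)]
    have hcs : ∀ z x, (R < ‖z‖ ∨ R < ‖x‖) → F (x, z) = 0 := by
      intro z x hzx
      apply hR
      rcases hzx with hz | hx
      · exact hz.trans_le (norm_snd_le (x, z))
      · exact hx.trans_le (norm_fst_le (x, z))
    refine (hconv h ?_ ⟨volume.real (closedBall (0 : Rd d) R) * M, ?_⟩ ?_).congr fun ε => ?_
    · exact (hF.stronglyMeasurable.integral_prod_left').measurable
    · intro z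
      have h1 : h z = ∫ x in closedBall (0 : Rd d) R, F (x, z) :=
        (setIntegral_eq_integral_of_forall_compl_eq_zero fun x hx => by
          rw [mem_closedBall, dist_zero_right, not_le] at hx
          exact hcs z x (Or.inr hx)).symm
      rw [h1, mul_comm]
      exact norm_setIntegral_le_of_norm_le_const (f := fun x => F (x, z)) measure_closedBall_lt_top
        (fun x _ => hM (x, z))
    · refine HasCompactSupport.intro (isCompact_closedBall 0 R) (fun z hz => ?_)
      rw [mem_closedBall, dist_zero_right, not_le] at hz
      simp [hh, hcs z _ (Or.inl hz)]
    · exact (hFub (fun z => e (ε⁻¹ • z)) (hmul _ (heQ ε))).symm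
  set B : ℝ := M * C₁ + M * (volume.real Q * E₁) with hB
  have hpow : Tendsto (fun N : ℕ => ((N : ℝ) + 1) ^ (1 - p) * B) atTop (𝓝 0) := by
    have h1 : Tendsto (fun N : ℕ => (N : ℝ) + 1) atTop atTop :=
      tendsto_atTop_add_const_right _ _ tendsto_natCast_atTop_atTop
    have h2 := (tendsto_rpow_neg_atTop (show 0 < p - 1 by linarith)).comp h1
    have h3 := h2.mul_const B
    simpa [Function.comp_def] using h3
  rw [Metric.tendsto_nhds]
  intro δ hδ
  obtain ⟨N, hN⟩ := (hpow.eventually (gt_mem_nhds (show 0 < δ / 2 by positivity))).exists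
  have hsec := (htr N F hFi).comp tendsto_inv_nhdsGT_zero
  filter_upwards [Metric.tendsto_nhds.1 hfourth (δ / 4) (by positivity),
    Metric.tendsto_nhds.1 hsec (δ / 4) (by positivity), self_mem_nhdsWithin,
    mem_nhdsWithin_of_mem_nhds (Iio_mem_nhds hR0)] with ε h4 h2 hε hεR
  have hε0 : 0 < ε := hε
  have hεR' : ε ≤ R := le_of_lt hεR
  rw [Real.dist_eq] at h4 h2 ⊢
  simp only [Function.comp_def, sub_zero] at h2
  have hN1 : (0 : ℝ) < (N : ℝ) + 1 := by positivity
  have t1 : |∫ q, F q * (K (ε⁻¹ • q) - min (K (ε⁻¹ • q)) (2 * ((N : ℝ) + 1)))| ≤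
      ((N : ℝ) + 1) ^ (1 - p) * (M * C₁) := by
    refine (hbnd _ (fun q => ((N : ℝ) + 1) ^ (1 - p) *
      (X (ε⁻¹ • q.1) + X (ε⁻¹ • (q.1 + q.2)))) ((hC₁ ε hε0 hεR').1.const_mul _) ?_).trans ?_
    · intro q
      rw [abs_of_nonneg (sub_nonneg.2 (min_le_left _ _))]
      have := hKX _ hN1 (ε⁻¹ • q)
      simpa only [Prod.smul_fst, Prod.smul_snd, ← smul_add] using this
    · rw [integral_const_mul]
      have := (hC₁ ε hε0 hεR').2
      calc _ ≤ M * (((N : ℝ) + 1) ^ (1 - p) * C₁) := by gcongr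
        _ = _ := by ring
  have t3 : |∫ q, F q * (eN N (ε⁻¹ • q.2) - e (ε⁻¹ • q.2))| ≤
      ((N : ℝ) + 1) ^ (1 - p) * (M * (volume.real Q * E₁)) := by
    refine (hbnd _ (fun q => ((N : ℝ) + 1) ^ (1 - p) * E₁) (integrableOn_const hQfin) ?_).trans ?_
    · intro q
      rw [abs_sub_comm, abs_of_nonneg (sub_nonneg.2 (heNe _ _))]
      exact hE₁ _ _
    · rw [setIntegral_const, smul_eq_mul]
      apply le_of_eq; ring
  have i1 := hmul _ ((hKQ ε hε0 hεR').sub (hKNQ N ε))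
  have i2 := hmul _ ((hKNQ N ε).sub (heNQ N ε))
  have i3 := hmul _ ((heNQ N ε).sub (heQ ε))
  have i4 := hmul _ (heQ ε)
  simp only [Pi.sub_apply] at i1 i2 i3
  have hsum : ∫ q, F q * K (ε⁻¹ • q) =
      (∫ q, F q * (K (ε⁻¹ • q) - min (K (ε⁻¹ • q)) (2 * ((N : ℝ) + 1)))) +
      (∫ q, F q * (min (K (ε⁻¹ • q)) (2 * ((N : ℝ) + 1)) - eN N (ε⁻¹ • q.2))) +
      (∫ q, F q * (eN N (ε⁻¹ • q.2) - e (ε⁻¹ • q.2))) + ∫ q, F q * e (ε⁻¹ • q.2) := by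
    have i12 := i1.add i2
    have i123 := i12.add i3
    have e1 := integral_add i1 i2
    have e2 := integral_add i12 i3
    have e3 := integral_add i123 i4
    simp only [Pi.add_apply] at e1 e2 e3
    rw [← e1, ← e2, ← e3]
    congr 1; ext q
    ring
  rw [hsum]
  rw [abs_lt] at h4 h2 ⊢
  rw [abs_le] at t1 t3
  have hNB : ((N : ℝ) + 1) ^ (1 - p) * B = ((N : ℝ) + 1) ^ (1 - p) * (M * C₁) +
    ((N : ℝ) + 1) ^ (1 - p) * (M * (volume.real Q * E₁)) := by rw [hB]; ring
  rw [hNB] at hN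
  constructor <;> linarith [t1.1, t1.2, t3.1, t3.2, h4.1, h4.2, h2.1, h2.2]

end Part6

lemma sigma_mp (d : ℕ) : MeasurePreserving (fun q : Rd d × Rd d => (q.1 + q.2, -q.2)) volume volume := by
  have h1 := (measurePreserving_add_prod_neg (volume : Measure (Rd d)) (volume : Measure (Rd d)))
  have h2 : MeasurePreserving (Prod.swap : Rd d × Rd d → Rd d × Rd d)
    ((volume : Measure (Rd d)).prod volume) (volume.prod volume) := Measure.measurePreserving_swap
  rw [Measure.volume_eq_prod]
  exact h1.comp h2

/-- The involution exchanging the two endpoints does not change integrals. -/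
lemma sigma_int {d : ℕ} (F : Rd d × Rd d → ℝ) (hFσ : ∀ q, F (q.1 + q.2, -q.2) = F q)
    (G : Rd d × Rd d → ℝ) (hG : Integrable (fun q => F q * G q)) :
    ∫ q, F q * (G q + G (q.1 + q.2, -q.2)) = 2 * ∫ q, F q * G q := by
  have hemb : MeasurableEmbedding (fun q : Rd d × Rd d => (q.1 + q.2, -q.2)) := by
    refine MeasurableEquiv.measurableEmbedding (⟨⟨fun q => (q.1 + q.2, -q.2),
      fun q => (q.1 + q.2, -q.2), fun q => ?_, fun q => ?_⟩, ?_, ?_⟩ :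
        (Rd d × Rd d) ≃ᵐ (Rd d × Rd d))
    · simp
    · simp
    · exact (sigma_mp d).measurable
    · exact (sigma_mp d).measurable
  have h1 := (sigma_mp d).integral_comp hemb (fun q => F q * G q)
  have h2 := ((sigma_mp d).integrable_comp_emb hemb (g := fun q => F q * G q)).2 hG
  simp only [Function.comp_def, hFσ] at h1 h2
  simp only [mul_add]
  rw [integral_add hG h2, h1, two_mul]

/-- Properties of the test kernel. -/
lemma F_props {d : ℕ} {β η : ℝ} (hβ : 0 ≤ β) (hη : 0 < η) {Γ : Set (Rd d)} (hΓopen : IsOpen Γ)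
    (hΓcone : ∀ x ∈ Γ, ∀ r : ℝ, r ≠ 0 → r • x ∈ Γ)
    (f : Rd d → ℝ) (hf : Measurable f)
    (hfb : ∀ R : ℝ, 0 < R → ∃ M, ∀ x ∈ ball (0 : Rd d) R, |f x| ≤ M)
    (g : Rd d → ℝ) (hg : Measurable g) (hgb : ∃ M, ∀ x, |g x| ≤ M) (hgs : HasCompactSupport g)
    (D : Set (Rd d × Rd d)) (hD : D = {q : Rd d × Rd d | η < ‖q.2‖ ∧ ‖q.2‖ < 1 / η ∧ q.2 ∈ Γ})
    (F : Rd d × Rd d → ℝ)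
    (hF : F = D.indicator (fun q => (f (q.1 + q.2) - f q.1) * (g (q.1 + q.2) - g q.1)
              / ‖q.2‖ ^ β)) :
    MeasurableSet D ∧ Measurable F ∧ (∃ M, ∀ q, |F q| ≤ M) ∧
      (∃ R, 0 < R ∧ ∀ q, R < ‖q‖ → F q = 0) ∧ ∀ q, F (q.1 + q.2, -q.2) = F q := by
  have hDm : MeasurableSet D := by
    rw [hD]
    refine (measurableSet_lt measurable_const measurable_snd.norm).inter
      ((measurableSet_lt measurable_snd.norm measurable_const).inter ?_)
    exact measurable_snd hΓopen.measurableSet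
  obtain ⟨R₀, hR₀, hgR⟩ := exists_radius hgs
  obtain ⟨Mg, hMg⟩ := hgb
  have hη' : 0 < 1 / η := by positivity
  set R := R₀ + 1 / η with hRdef
  have hRpos : 0 < R := by positivity
  obtain ⟨Mf, hMf⟩ := hfb (R + 1) (by positivity)
  have hMf0 : 0 ≤ Mf := (abs_nonneg _).trans (hMf 0 (mem_ball_self (by positivity)))
  have hMg0 : 0 ≤ Mg := (abs_nonneg _).trans (hMg 0)
  have key : ∀ q ∈ D, g (q.1 + q.2) - g q.1 ≠ 0 → ‖q.1‖ ≤ R ∧ ‖q.1 + q.2‖ ≤ R := by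
    intro q hq hne
    rw [hD] at hq
    have hz : ‖q.2‖ < 1 / η := hq.2.1
    have h1 : ‖q.1 + q.2‖ ≤ ‖q.1‖ + ‖q.2‖ := norm_add_le _ _
    have h2 : ‖q.1‖ ≤ ‖q.1 + q.2‖ + ‖q.2‖ := by
      have := norm_sub_le (q.1 + q.2) q.2
      simpa using this
    by_cases h3 : ‖q.1‖ ≤ R₀
    · constructor <;> linarith
    · by_cases h4 : ‖q.1 + q.2‖ ≤ R₀
      · constructor <;> linarith
      · exact absurd (by rw [hgR _ (not_le.1 h3), hgR _ (not_le.1 h4), sub_zero]) hne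
  refine ⟨hDm, ?_, ⟨(Mf + Mf) * (Mg + Mg) / η ^ β, fun q => ?_⟩, ⟨R, hRpos, fun q hq => ?_⟩,
    fun q => ?_⟩
  · rw [hF]
    refine Measurable.indicator ?_ hDm
    fun_prop
  · have hnn : 0 ≤ (Mf + Mf) * (Mg + Mg) / η ^ β := by positivity
    rw [hF]
    by_cases hq : q ∈ D
    · rw [indicator_of_mem hq]
      by_cases hne : g (q.1 + q.2) - g q.1 = 0
      · rw [hne]; simpa using hnn
      · obtain ⟨h1, h2⟩ := key q hq hne
        rw [hD] at hq
        have hz : η < ‖q.2‖ := hq.1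
        rw [abs_div, abs_mul, abs_of_nonneg (show 0 ≤ ‖q.2‖ ^ β by positivity)]
        have f1 := hMf q.1 (by rw [mem_ball, dist_zero_right]; linarith)
        have f2 := hMf (q.1 + q.2) (by rw [mem_ball, dist_zero_right]; linarith)
        have f3 : |f (q.1 + q.2) - f q.1| ≤ Mf + Mf := (abs_sub _ _).trans (add_le_add f2 f1)
        have f4 : |g (q.1 + q.2) - g q.1| ≤ Mg + Mg :=
          (abs_sub _ _).trans (add_le_add (hMg _) (hMg _))
        have f5 : η ^ β ≤ ‖q.2‖ ^ β := Real.rpow_le_rpow hη.le hz.le hβ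
        gcongr
    · rw [indicator_of_notMem hq, abs_zero]; exact hnn
  · rw [hF]
    by_cases hqD : q ∈ D
    · rw [indicator_of_mem hqD]
      by_cases hne : g (q.1 + q.2) - g q.1 = 0
      · rw [hne]; simp
      · exfalso
        have h1 := (key q hqD hne).1
        rw [hD] at hqD
        have hz : ‖q.2‖ < 1 / η := hqD.2.1
        rw [Prod.norm_def] at hq
        rcases lt_max_iff.1 hq with h | h <;> linarith
    · rw [indicator_of_notMem hqD]
  · have hΓ : -q.2 ∈ Γ ↔ q.2 ∈ Γ := by
      constructor
      · intro h; simpa using hΓcone _ h (-1) (by norm_num)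
      · intro h; simpa using hΓcone _ h (-1) (by norm_num)
    have hDD : (q.1 + q.2, -q.2) ∈ D ↔ q ∈ D := by
      rw [hD]
      show (η < ‖-q.2‖ ∧ ‖-q.2‖ < 1 / η ∧ -q.2 ∈ Γ) ↔ (η < ‖q.2‖ ∧ ‖q.2‖ < 1 / η ∧ q.2 ∈ Γ)
      rw [norm_neg, hΓ]
    rw [hF]
    by_cases hq : q ∈ D
    · rw [indicator_of_mem hq, indicator_of_mem (hDD.2 hq)]
      simp only [norm_neg, add_neg_cancel_right]
      ring
    · rw [indicator_of_notMem hq, indicator_of_notMem (fun h => hq (hDD.1 h))]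

/-- **Proposition 3.1(i)** (weak convergence of the truncated bilinear forms under
assumption (A1) and a one-sided `p`-moment bound).  Almost surely, for every `η > 0`,
every locally bounded measurable `f` and every bounded measurable compactly supported
`g`, the truncated bilinear form with kernel `κ(x/ε, (x+z)/ε; ω)` converges, as
`ε → 0`, to the one with kernel `ν̄(z) + ν̄(-z)`. -/
theorem truncated_form_convergence_summation
    {Ω : Type*} [MeasurableSpace Ω] (ℙ : Measure Ω) [IsProbabilityMeasure ℙ]
    (d : ℕ) (hd : 0 < d) (α : ℝ) (hα0 : 0 < α) (hα2 : α < 2)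
    -- the stationary ergodic group of transformations
    (τ : Rd d → Ω → Ω)
    (hτ0 : τ 0 = id)
    (hτadd : ∀ x y, τ x ∘ τ y = τ (x + y))
    (hτmeas : Measurable fun p : Rd d × Ω => τ p.1 p.2)
    (hτstat : ∀ x, MeasurePreserving (τ x) ℙ ℙ)
    (hτerg : ∀ A : Set Ω, MeasurableSet A → (∀ x, τ x ⁻¹' A = A) → ℙ A = 0 ∨ ℙ A = 1)
    -- the symmetric cone
    (Γ : Set (Rd d)) (hΓopen : IsOpen Γ) (hΓne : Γ.Nonempty)
    (hΓcone : ∀ x ∈ Γ, ∀ r : ℝ, r ≠ 0 → r • x ∈ Γ)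
    -- the coefficient κ
    (κ : Rd d → Rd d → Ω → ℝ)
    (hκmeas : Measurable fun p : Rd d × Rd d × Ω => κ p.1 p.2.1 p.2.2)
    (hκnn : ∀ x y ω, 0 ≤ κ x y ω)
    (hκsym : ∀ x y ω, κ x y ω = κ y x ω)
    (hκshift : ∀ x y z ω, κ (x + z) (y + z) ω = κ x y (τ z ω))
    -- Assumption (A1): summation form
    (ν : Rd d → Ω → ℝ) (hνmeas : Measurable fun p : Rd d × Ω => ν p.1 p.2)
    (hνnn : ∀ z ω, 0 ≤ ν z ω)
    (hA1rep : ∀ᵐ ω ∂ℙ, ∀ x y : Rd d, κ x y ω = ν (y - x) (τ x ω) + ν (x - y) (τ y ω))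
    -- Assumption (A1)(i): polynomial mixing of the truncations ν ∧ n
    (l : ℝ) (hl : 0 < l)
    (hA1mix : ∀ n : ℝ, 0 < n → ∃ C : ℝ, 0 < C ∧ ∀ x z₁ z₂ : Rd d,
      |(∫ ω, min (ν z₁ ω) n * min (ν z₂ (τ x ω)) n ∂ℙ)
          - (∫ ω, min (ν z₁ ω) n ∂ℙ) * (∫ ω, min (ν z₂ ω) n ∂ℙ)| ≤ C ∧
      (x ≠ 0 → |(∫ ω, min (ν z₁ ω) n * min (ν z₂ (τ x ω)) n ∂ℙ)
          - (∫ ω, min (ν z₁ ω) n ∂ℙ) * (∫ ω, min (ν z₂ ω) n ∂ℙ)| ≤ C * ‖x‖ ^ (-l)))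
    -- Assumption (A1)(ii): weak convergence of z ↦ 𝔼[ν(z/ε;⬝)] to ν̄ = ν'
    (ν' : Rd d → ℝ) (hν'meas : Measurable ν') (hν'nn : ∀ z, 0 ≤ ν' z)
    (hA1conv : ∀ h : Rd d → ℝ, Measurable h → (∃ M, ∀ z, |h z| ≤ M) →
      HasCompactSupport h →
      Tendsto (fun ε : ℝ => ∫ z, h z * ∫ ω, ν (ε⁻¹ • z) ω ∂ℙ)
        (𝓝[>] (0 : ℝ)) (𝓝 (∫ z, h z * ν' z)))
    -- the one-sided moment bound: κ(x,y;ω) ≤ Λ(τ_x ω) + Λ(τ_y ω) with 𝔼[Λ^p] < ∞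
    (Λ : Ω → ℝ) (hΛmeas : Measurable Λ) (hΛnn : ∀ ω, 0 ≤ Λ ω)
    (p : ℝ) (hp : 1 < p) (hΛmom : Integrable (fun ω => Λ ω ^ p) ℙ)
    (hκbound : ∀ ω : Ω, ∀ x y : Rd d, κ x y ω ≤ Λ (τ x ω) + Λ (τ y ω)) :
    ∃ Ω₁ : Set Ω, MeasurableSet Ω₁ ∧ ℙ Ω₁ = 1 ∧
      ∀ ω ∈ Ω₁, ∀ η : ℝ, 0 < η →
      ∀ f : Rd d → ℝ, Measurable f →
        (∀ R : ℝ, 0 < R → ∃ M, ∀ x ∈ ball (0 : Rd d) R, |f x| ≤ M) →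
      ∀ g : Rd d → ℝ, Measurable g → (∃ M, ∀ x, |g x| ≤ M) → HasCompactSupport g →
      Tendsto (fun ε : ℝ =>
          ∫ q in {q : Rd d × Rd d | η < ‖q.2‖ ∧ ‖q.2‖ < 1 / η ∧ q.2 ∈ Γ},
            (f (q.1 + q.2) - f q.1) * (g (q.1 + q.2) - g q.1)
              / ‖q.2‖ ^ ((d : ℝ) + α)
              * κ (ε⁻¹ • q.1) (ε⁻¹ • (q.1 + q.2)) ω)
        (𝓝[>] (0 : ℝ))
        (𝓝 (∫ q in {q : Rd d × Rd d | η < ‖q.2‖ ∧ ‖q.2‖ < 1 / η ∧ q.2 ∈ Γ},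
            (f (q.1 + q.2) - f q.1) * (g (q.1 + q.2) - g q.1)
              / ‖q.2‖ ^ ((d : ℝ) + α)
              * (ν' q.2 + ν' (-q.2)))) := by
  have hΛpm : Measurable fun ω => Λ ω ^ p := hΛmeas.pow_const p
  have hΛp0 : ∀ ω, 0 ≤ Λ ω ^ p := fun ω => Real.rpow_nonneg (hΛnn ω) p
  have hΛint : Integrable Λ ℙ := by
    refine ((integrable_const (1 : ℝ)).add hΛmom).mono' hΛmeas.aestronglyMeasurable
      (ae_of_all _ fun ω => ?_)
    rw [Real.norm_eq_abs, abs_of_nonneg (hΛnn ω)]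
    simp only [Pi.add_apply]
    rcases le_or_gt (Λ ω) 1 with h | h
    · linarith [hΛp0 ω]
    · have := Real.rpow_le_rpow_of_exponent_le h.le hp.le
      rw [Real.rpow_one] at this
      linarith
  -- the three almost sure properties
  have ae1 := max_ae ℙ hτadd hτmeas hτstat (X := fun ω => ENNReal.ofReal (Λ ω ^ p))
    hΛpm.ennreal_ofReal hΛmom.lintegral_lt_top.ne
  have ae2 : ∀ᵐ ω ∂ℙ, ∀ N : ℕ, ∀ F : Rd d × Rd d → ℝ, Integrable F →
      Tendsto (fun t : ℝ => ∫ q, F q * (min (ν (t • q.2) (τ (t • q.1) ω)) (2 * ((N : ℝ) + 1)) -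
        ∫ ω', min (ν (t • q.2) ω') (2 * ((N : ℝ) + 1)) ∂ℙ)) atTop (𝓝 0) := by
    rw [ae_all_iff]
    intro N
    exact trunc_ae' ℙ hd hτadd hτmeas hτstat ν hνmeas hνnn l hl _ (by positivity)
      (hA1mix _ (by positivity))
  have ae3 := (hA1rep.and ae1).and ae2
  obtain ⟨Ω₁, hΩ₁sub, hΩ₁m, hΩ₁⟩ := ae3.exists_measurable_mem
  refine ⟨Ω₁, hΩ₁m, (prob_compl_eq_zero_iff hΩ₁m).1 (mem_ae_iff.1 hΩ₁sub), ?_⟩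
  intro ω hω η hη f hf hfb g hg hgb hgs
  obtain ⟨⟨hrep, C, hC, hmaxω⟩, htr⟩ := hΩ₁ ω hω
  -- expectation bounds
  have hνm : ∀ z, Measurable (ν z) := fun z => hνmeas.comp (measurable_const.prodMk measurable_id)
  have hνle : ∀ z, ∀ᵐ ω ∂ℙ, ν z ω ≤ Λ ω + Λ (τ z ω) := by
    intro z
    filter_upwards [hA1rep] with ω' h
    have h1 := h 0 z
    have h2 := hκbound ω' 0 z
    simp only [hτ0, id, sub_zero] at h1 h2
    linarith [hνnn (0 - z) (τ z ω')]
  have hΛτ : ∀ z, Integrable (fun ω => Λ (τ z ω)) ℙ := fun z =>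
    (hτstat z).integrable_comp_of_integrable hΛint
  have hΛpτ : ∀ z, Integrable (fun ω => Λ (τ z ω) ^ p) ℙ := fun z =>
    (hτstat z).integrable_comp_of_integrable hΛmom
  have stat : ∀ (Y : Ω → ℝ), Measurable Y → ∀ z, ∫ ω, Y (τ z ω) ∂ℙ = ∫ ω, Y ω ∂ℙ := by
    intro Y hY z
    have h1 := integral_map (μ := ℙ) (φ := τ z) (f := Y) (hτstat z).measurable.aemeasurable
      hY.aestronglyMeasurable
    rw [(hτstat z).map_eq] at h1
    exact h1.symm
  have hνint : ∀ z, Integrable (ν z) ℙ := fun z => by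
    refine (hΛint.add (hΛτ z)).mono' (hνm z).aestronglyMeasurable ?_
    filter_upwards [hνle z] with ω' h
    rw [Real.norm_eq_abs, abs_of_nonneg (hνnn _ _)]
    exact h
  have hminint : ∀ (N : ℕ) z, Integrable (fun ω => min (ν z ω) (2 * ((N : ℝ) + 1))) ℙ := fun N z =>
    (hνint z).inf (integrable_const _)
  obtain ⟨C', hC', hmax'⟩ := max_scaled (fun x => ENNReal.ofReal (Λ (τ x ω) ^ p))
    (hΛpm.comp (hτmeas.comp (measurable_id.prodMk measurable_const))).ennreal_ofReal C hC hmaxω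
  have hKle : ∀ x z, ν z (τ x ω) ≤ Λ (τ x ω) + Λ (τ (x + z) ω) := by
    intro x z
    have h1 := hrep x (x + z)
    have h2 := hκbound ω x (x + z)
    rw [add_sub_cancel_left] at h1
    linarith [hνnn (x - (x + z)) (τ (x + z) ω)]
  set D := {q : Rd d × Rd d | η < ‖q.2‖ ∧ ‖q.2‖ < 1 / η ∧ q.2 ∈ Γ} with hDdef
  set F : Rd d × Rd d → ℝ := D.indicator
    (fun q => (f (q.1 + q.2) - f q.1) * (g (q.1 + q.2) - g q.1) / ‖q.2‖ ^ ((d : ℝ) + α)) with hFdef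
  obtain ⟨hDm, hFm, ⟨M, hM⟩, ⟨R, hR0, hR⟩, hFσ⟩ := F_props (β := (d : ℝ) + α) (by positivity) hη
    hΓopen hΓcone f hf hfb g hg hgb hgs D hDdef F hFdef
  have hDF : ∀ G : Rd d × Rd d → ℝ, ∫ q in D, (f (q.1 + q.2) - f q.1) * (g (q.1 + q.2) - g q.1)
      / ‖q.2‖ ^ ((d : ℝ) + α) * G q = ∫ q, F q * G q := by
    intro G
    rw [← integral_indicator hDm]
    congr 1; ext q
    rw [hFdef]
    by_cases hq : q ∈ D
    · rw [indicator_of_mem hq, indicator_of_mem hq]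
    · rw [indicator_of_notMem hq, indicator_of_notMem hq, zero_mul]
  obtain ⟨hI, hIν, hlim⟩ := assembly (fun q => ν q.2 (τ q.1 ω))
    (hνmeas.comp (measurable_snd.prodMk (hτmeas.comp (measurable_fst.prodMk measurable_const))))
    (fun q => hνnn _ _) (fun x => Λ (τ x ω) ^ p)
    (hΛpm.comp (hτmeas.comp (measurable_id.prodMk measurable_const))) (fun x => hΛp0 _)
    C' hC' hmax' p hp
    (fun N hN q => trunc_pt (hΛnn _) (hΛnn _) (hKle q.1 q.2) hN hp)
    (fun z => ∫ ω', ν z ω' ∂ℙ) hνmeas.stronglyMeasurable.integral_prod_right'.measurable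
    (fun z => integral_nonneg fun _ => hνnn _ _) (2 * ∫ ω', Λ ω' ∂ℙ)
    (fun z => by
      have h1 := integral_mono_ae (hνint z) (hΛint.add (hΛτ z)) (hνle z)
      have h2 := integral_add hΛint (hΛτ z)
      have h3 := stat Λ hΛmeas z
      simp only [Pi.add_apply] at h1
      linarith)
    (fun N z => ∫ ω', min (ν z ω') (2 * ((N : ℝ) + 1)) ∂ℙ)
    (fun N => (hνmeas.min measurable_const).stronglyMeasurable.integral_prod_right'.measurable)
    (fun N z => integral_nonneg fun _ => le_min (hνnn _ _) (by positivity))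
    (fun N z => integral_mono (hminint N z) (hνint z) fun _ => min_le_left _ _)
    (2 * ∫ ω', Λ ω' ^ p ∂ℙ)
    (fun N z => by
      have hN1 : (0 : ℝ) < (N : ℝ) + 1 := by positivity
      have h0 := integral_sub (hνint z) (hminint N z)
      have h1 : ∫ ω', (ν z ω' - min (ν z ω') (2 * ((N : ℝ) + 1))) ∂ℙ ≤
          ∫ ω', ((N : ℝ) + 1) ^ (1 - p) * (Λ ω' ^ p + Λ (τ z ω') ^ p) ∂ℙ := by
        refine integral_mono_ae ((hνint z).sub (hminint N z))
          ((hΛmom.add (hΛpτ z)).const_mul _) ?_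
        filter_upwards [hνle z] with ω' h
        exact trunc_pt (hΛnn _) (hΛnn _) h hN1 hp
      have h2 := integral_add hΛmom (hΛpτ z)
      have h3 := stat (fun ω => Λ ω ^ p) hΛpm z
      rw [integral_const_mul, h2, h3, ← two_mul] at h1
      rw [← h0]
      exact h1)
    (fun N F hF => htr N F hF) ν' hν'meas hν'nn hA1conv F hFm M hM R hR0 hR
  simp only [hDF]
  rw [sigma_int F hFσ (fun q => ν' q.2) hIν]
  refine (hlim.const_mul 2).congr' ?_
  filter_upwards [self_mem_nhdsWithin, mem_nhdsWithin_of_mem_nhds (Iio_mem_nhds hR0)] with ε hε hεR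
  have hε0 : 0 < ε := hε
  rw [← sigma_int F hFσ _ (hI ε hε0 (le_of_lt hεR))]
  congr 1; ext q
  rw [hrep]
  simp only [Prod.smul_fst, Prod.smul_snd, ← smul_sub, add_sub_cancel_left, sub_add_cancel_left]

end
end

section
/- Let ν₁ and ν₂ be non-negative random variables on (Ω,𝓕,ℙ) with 𝔼[ν₁^p + ν₂^p] < ∞ for some p > 1. Then there is a set Ω₂ ⊆ Ω of full ℙ-measure such that for every ω ∈ Ω₂, every η > 0, every locally bounded measurable f on ℝ^d and every bounded measurable compactly supported g on ℝ^d: lim_{ε→0} ∬_{{η<|x−y|<1/η, x−y∈Γ}} (f(y)−f(x))(g(y)−g(x))·|x−y|^{−(d+α)}·ν₁(τ_{x/ε}ω)ν₂(τ_{y/ε}ω) dx dy = 𝔼[ν₁]·𝔼[ν₂]·∬_{{η<|x−y|<1/η, x−y∈Γ}} (f(y)−f(x))(g(y)−g(x))·|x−y|^{−(d+α)} dx dy. -/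
open MeasureTheory Filter Metric Set
open scoped ENNReal Topology

noncomputable section

/-- Dyadic Hardy-Littlewood maximal inequality (Vitali). -/
theorem aux_HL {d : ℕ} (φ : Rd d → ℝ≥0∞) (N : ℕ) (L : ℝ) (lam : ℝ≥0∞) :
    lam * volume {x ∈ closedBall (0 : Rd d) L | ∃ k ≤ N,
        lam * volume (closedBall x ((2 : ℝ) ^ k)) ≤ ∫⁻ y in closedBall x ((2 : ℝ) ^ k), φ y}
      ≤ ENNReal.ofReal (5 ^ d) * ∫⁻ y in closedBall (0 : Rd d) (L + 2 ^ N), φ y := by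
  set E := {x ∈ closedBall (0 : Rd d) L | ∃ k ≤ N,
        lam * volume (closedBall x ((2 : ℝ) ^ k)) ≤ ∫⁻ y in closedBall x ((2 : ℝ) ^ k), φ y}
    with hE
  have hch : ∀ x : Rd d, ∃ k : ℕ, x ∈ E → k ≤ N ∧
      lam * volume (closedBall x ((2 : ℝ) ^ k)) ≤ ∫⁻ y in closedBall x ((2 : ℝ) ^ k), φ y := by
    intro x
    by_cases hx : x ∈ E
    · obtain ⟨k, hk⟩ := hx.2
      exact ⟨k, fun _ => hk⟩
    · exact ⟨0, fun h => absurd h hx⟩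
  choose k hk using hch
  obtain ⟨u, hut, hdisj, hcov⟩ := Vitali.exists_disjoint_subfamily_covering_enlargement_closedBall
    E (fun x => x) (fun x => (2 : ℝ) ^ k x) (2 ^ N)
    (fun a ha => pow_le_pow_right₀ (by norm_num) (hk a ha).1) 5 (by norm_num)
  have hucount : u.Countable := by
    refine hdisj.countable_of_nonempty_interior fun i _ => ?_
    exact ⟨i, ball_subset_interior_closedBall (mem_ball_self (by positivity))⟩
  have hsub : E ⊆ ⋃ b ∈ u, closedBall b (5 * 2 ^ k b) := by
    intro x hx
    obtain ⟨b, hb, hb'⟩ := hcov x hx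
    simp only [mem_iUnion]
    exact ⟨b, hb, hb' (mem_closedBall_self (by positivity))⟩
  have hvol : ∀ b : Rd d, volume (closedBall b (5 * 2 ^ k b))
      = ENNReal.ofReal (5 ^ d) * volume (closedBall b ((2 : ℝ) ^ k b)) := by
    intro b
    rw [Measure.addHaar_closedBall_mul _ _ (by norm_num) (by positivity)]
    rw [Measure.addHaar_closedBall_center volume b]
    simp
  calc lam * volume E ≤ lam * ∑' b : u, volume (closedBall (b : Rd d) (5 * 2 ^ k b)) := by
        gcongr
        exact (measure_mono hsub).trans (measure_biUnion_le volume hucount _)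
    _ = ENNReal.ofReal (5 ^ d) *
          ∑' b : u, lam * volume (closedBall (b : Rd d) ((2 : ℝ) ^ k b)) := by
        simp only [hvol]
        rw [ENNReal.tsum_mul_left, ENNReal.tsum_mul_left]
        ring
    _ ≤ ENNReal.ofReal (5 ^ d) *
          ∑' b : u, ∫⁻ y in closedBall (b : Rd d) ((2 : ℝ) ^ k b), φ y := by
        gcongr with b
        exact (hk b (hut b.2)).2
    _ = ENNReal.ofReal (5 ^ d) * ∫⁻ y in ⋃ b ∈ u, closedBall (b : Rd d) ((2 : ℝ) ^ k b), φ y := by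
        rw [lintegral_biUnion hucount (fun _ _ => measurableSet_closedBall) hdisj]
    _ ≤ _ := by
        gcongr
        refine iUnion₂_subset fun b hb => ?_
        refine closedBall_subset_closedBall' ?_
        have h1 := (hut hb).1
        rw [mem_closedBall] at h1
        have h2 : (2 : ℝ) ^ k b ≤ 2 ^ N := pow_le_pow_right₀ (by norm_num) (hk b (hut hb)).1
        linarith

section Dyn
variable {Ω : Type*} [MeasurableSpace Ω] {d : ℕ}

/-- dyadic ergodic maximal function -/
def Mx (τ : Rd d → Ω → Ω) (h : Ω → ℝ≥0∞) (ω : Ω) : ℝ≥0∞ :=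
  ⨆ k : ℕ, (∫⁻ x in closedBall (0 : Rd d) ((2 : ℝ) ^ k), h (τ x ω)) /
    volume (closedBall (0 : Rd d) ((2 : ℝ) ^ k))

theorem aux_vol_pos (x : Rd d) {r : ℝ} (hr : 0 < r) : volume (closedBall x r) ≠ 0 :=
  (measure_closedBall_pos volume x hr).ne'

theorem aux_vol_top (x : Rd d) {r : ℝ} : volume (closedBall x r) ≠ ∞ :=
  measure_closedBall_lt_top.ne

theorem aux_transfer (ℙ : Measure Ω) [IsProbabilityMeasure ℙ]
    (τ : Rd d → Ω → Ω)
    (hτadd : ∀ x y, τ x ∘ τ y = τ (x + y))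
    (hτmeas : Measurable fun p : Rd d × Ω => τ p.1 p.2)
    (hτstat : ∀ x, MeasurePreserving (τ x) ℙ ℙ)
    (h : Ω → ℝ≥0∞) (hh : Measurable h) (lam : ℝ≥0∞) (N : ℕ) :
    lam * ℙ {ω | ∃ k ≤ N, lam * volume (closedBall (0 : Rd d) ((2 : ℝ) ^ k))
        ≤ ∫⁻ x in closedBall (0 : Rd d) ((2 : ℝ) ^ k), h (τ x ω)}
      ≤ ENNReal.ofReal (10 ^ d) * ∫⁻ ω, h ω ∂ℙ := by
  set A := {ω | ∃ k ≤ N, lam * volume (closedBall (0 : Rd d) ((2 : ℝ) ^ k))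
        ≤ ∫⁻ x in closedBall (0 : Rd d) ((2 : ℝ) ^ k), h (τ x ω)} with hA
  have hjm : Measurable fun p : Ω × Rd d => h (τ p.2 p.1) :=
    hh.comp (hτmeas.comp measurable_swap)
  have hAm : MeasurableSet A := by
    have : A = ⋃ k : ℕ, ⋃ (_ : k ≤ N), {ω | lam * volume (closedBall (0 : Rd d) ((2 : ℝ) ^ k))
        ≤ ∫⁻ x in closedBall (0 : Rd d) ((2 : ℝ) ^ k), h (τ x ω)} := by
      ext ω; simp [hA]
    rw [this]
    refine MeasurableSet.iUnion fun k => MeasurableSet.iUnion fun _ => ?_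
    exact measurableSet_le measurable_const hjm.lintegral_prod_right'
  set B := closedBall (0 : Rd d) ((2 : ℝ) ^ N) with hB
  have hpt : ∀ ω, lam * volume {x ∈ B | τ x ω ∈ A} ≤
      ENNReal.ofReal (5 ^ d) * ∫⁻ y in closedBall (0 : Rd d) (2 ^ N + 2 ^ N), h (τ y ω) := by
    intro ω
    refine le_trans ?_ (aux_HL (fun y => h (τ y ω)) N (2 ^ N) lam)
    refine mul_le_mul_right (measure_mono ?_) _
    rintro x ⟨hx, k, hkN, hk⟩
    refine ⟨hx, k, hkN, ?_⟩
    rw [Measure.addHaar_closedBall_center]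
    refine hk.trans (le_of_eq ?_)
    have h1 : ∀ y, τ y (τ x ω) = τ (y + x) ω := fun y => congrFun (hτadd y x) ω
    simp only [h1]
    have hmp := (measurePreserving_add_right (volume : Measure (Rd d)) x)
    have := hmp.setLIntegral_comp_preimage_emb (MeasurableEquiv.addRight x).measurableEmbedding
      (fun y => h (τ y ω)) (closedBall x ((2 : ℝ) ^ k))
    rw [← this]
    congr 2
    ext y; simp [dist_eq_norm]
  have hintg : ∫⁻ ω, volume {x ∈ B | τ x ω ∈ A} ∂ℙ = volume B * ℙ A := by
    have e1 : ∀ ω, volume {x ∈ B | τ x ω ∈ A} =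
        ∫⁻ x in B, A.indicator 1 (τ x ω) := by
      intro ω
      have hm : MeasurableSet {x : Rd d | τ x ω ∈ A} :=
        (hτmeas.comp (measurable_id.prodMk measurable_const)) hAm
      have : (fun x => A.indicator (1 : Ω → ℝ≥0∞) (τ x ω)) =
          {x : Rd d | τ x ω ∈ A}.indicator 1 := by
        ext x; simp [indicator]
      rw [this, lintegral_indicator_one hm, Measure.restrict_apply hm, inter_comm]
      rfl
    simp only [e1]
    have hjmA : Measurable fun p : Ω × Rd d => A.indicator (1 : Ω → ℝ≥0∞) (τ p.2 p.1) :=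
      (measurable_one.indicator hAm).comp (hτmeas.comp measurable_swap)
    rw [lintegral_lintegral_swap hjmA.aemeasurable]
    have e2 : ∀ x, ∫⁻ ω, A.indicator (1 : Ω → ℝ≥0∞) (τ x ω) ∂ℙ = ℙ A := by
      intro x
      rw [(hτstat x).lintegral_comp (measurable_one.indicator hAm), lintegral_indicator_one hAm]
    simp only [e2, lintegral_const, Measure.restrict_apply_univ]
    rw [mul_comm]
  have hint2 : ∫⁻ ω, (∫⁻ y in closedBall (0 : Rd d) (2 ^ N + 2 ^ N), h (τ y ω)) ∂ℙ
      = volume (closedBall (0 : Rd d) (2 ^ N + 2 ^ N)) * ∫⁻ ω, h ω ∂ℙ := by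
    rw [lintegral_lintegral_swap hjm.aemeasurable]
    simp only [(hτstat _).lintegral_comp hh, lintegral_const, Measure.restrict_apply_univ]
    rw [mul_comm]
  have hvol2 : volume (closedBall (0 : Rd d) (2 ^ N + 2 ^ N)) =
      ENNReal.ofReal (2 ^ d) * volume B := by
    rw [← two_mul, Measure.addHaar_closedBall_mul _ _ (by norm_num) (by positivity)]
    simp [hB]
  have hmain : volume B * (lam * ℙ A) ≤
      volume B * (ENNReal.ofReal (10 ^ d) * ∫⁻ ω, h ω ∂ℙ) := by
    have hmm : Measurable fun ω => volume {x ∈ B | τ x ω ∈ A} := by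
      have : MeasurableSet {p : Ω × Rd d | p.2 ∈ B ∧ τ p.2 p.1 ∈ A} :=
        (measurable_snd measurableSet_closedBall).inter
          ((hτmeas.comp measurable_swap) hAm)
      exact measurable_measure_prodMk_left this
    have hmm2 : Measurable fun ω =>
        ∫⁻ y in closedBall (0 : Rd d) (2 ^ N + 2 ^ N), h (τ y ω) := hjm.lintegral_prod_right'
    calc volume B * (lam * ℙ A) = ∫⁻ ω, lam * volume {x ∈ B | τ x ω ∈ A} ∂ℙ := by
          rw [lintegral_const_mul _ hmm, hintg]; ring
      _ ≤ ∫⁻ ω, ENNReal.ofReal (5 ^ d) *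
            (∫⁻ y in closedBall (0 : Rd d) (2 ^ N + 2 ^ N), h (τ y ω)) ∂ℙ := lintegral_mono hpt
      _ = volume B * (ENNReal.ofReal (10 ^ d) * ∫⁻ ω, h ω ∂ℙ) := by
          rw [lintegral_const_mul _ hmm2, hint2, hvol2]
          have : ENNReal.ofReal ((10 : ℝ) ^ d) = ENNReal.ofReal (5 ^ d) * ENNReal.ofReal (2 ^ d) := by
            rw [← ENNReal.ofReal_mul (by positivity), ← mul_pow]; norm_num
          rw [this]; ring
  exact (ENNReal.mul_le_mul_iff_right (aux_vol_pos _ (by positivity)) (aux_vol_top _)).1 hmain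

theorem aux_maximal (ℙ : Measure Ω) [IsProbabilityMeasure ℙ]
    (τ : Rd d → Ω → Ω)
    (hτadd : ∀ x y, τ x ∘ τ y = τ (x + y))
    (hτmeas : Measurable fun p : Rd d × Ω => τ p.1 p.2)
    (hτstat : ∀ x, MeasurePreserving (τ x) ℙ ℙ)
    (h : Ω → ℝ≥0∞) (hh : Measurable h) (lam : ℝ≥0∞) :
    lam * ℙ {ω | lam < Mx τ h ω} ≤ ENNReal.ofReal (10 ^ d) * ∫⁻ ω, h ω ∂ℙ := by
  set A : ℕ → Set Ω := fun N => {ω | ∃ k ≤ N, lam * volume (closedBall (0 : Rd d) ((2 : ℝ) ^ k))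
        ≤ ∫⁻ x in closedBall (0 : Rd d) ((2 : ℝ) ^ k), h (τ x ω)} with hA
  have hmono : Monotone A := by
    rintro a b hab ω ⟨k, hk, h⟩
    exact ⟨k, hk.trans hab, h⟩
  have hsub : {ω | lam < Mx τ h ω} ⊆ ⋃ N, A N := by
    intro ω hω
    have hω' : lam < Mx τ h ω := hω
    rw [Mx] at hω'
    obtain ⟨k, hk⟩ := lt_iSup_iff.1 hω'
    refine mem_iUnion.2 ⟨k, k, le_rfl, ?_⟩
    have := hk.le
    rwa [ENNReal.le_div_iff_mul_le (Or.inl (aux_vol_pos _ (by positivity)))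
      (Or.inl (aux_vol_top _))] at this
  calc lam * ℙ {ω | lam < Mx τ h ω} ≤ lam * ℙ (⋃ N, A N) := by gcongr
    _ = ⨆ N, lam * ℙ (A N) := by rw [hmono.measure_iUnion, ENNReal.mul_iSup]
    _ ≤ _ := iSup_le fun N => aux_transfer ℙ τ hτadd hτmeas hτstat h hh lam N

theorem aux_Mx_bound (τ : Rd d → Ω → Ω) (R : ℝ) (hR : 1 ≤ R) :
    ∃ C : ℝ≥0∞, C ≠ ∞ ∧ ∀ (h : Ω → ℝ≥0∞) (ω : Ω) (T : ℝ), 1 ≤ T →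
      ∫⁻ x in closedBall (0 : Rd d) R, h (τ (T • x) ω) ≤ C * Mx τ h ω := by
  refine ⟨ENNReal.ofReal ((2 * R) ^ d) * volume (closedBall (0 : Rd d) 1),
    ENNReal.mul_ne_top ENNReal.ofReal_ne_top (aux_vol_top _), fun h ω T hT => ?_⟩
  have hT0 : 0 < T := by linarith
  have hR0 : 0 < R := by linarith
  obtain ⟨n, hn1, hn2⟩ := exists_nat_pow_near (x := T * R) (y := 2) (by nlinarith) (by norm_num)
  set k := n + 1
  -- change of variables
  have hcv : ∫⁻ x in closedBall (0 : Rd d) R, h (τ (T • x) ω) =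
      ENNReal.ofReal ((T ^ d)⁻¹) * ∫⁻ x in closedBall (0 : Rd d) (T * R), h (τ x ω) := by
    have hemb : MeasurableEmbedding (fun x : Rd d => T • x) :=
      (Homeomorph.smulOfNeZero T hT0.ne').measurableEmbedding
    have h1 : closedBall (0 : Rd d) R = (fun x : Rd d => T • x) ⁻¹' closedBall 0 (T * R) := by
      ext x
      simp [norm_smul, abs_of_pos hT0, hT0]
    rw [h1, ← hemb.lintegral_map (μ := volume.restrict _) (fun x => h (τ x ω)), ← hemb.restrict_map,
      Measure.map_addHaar_smul _ hT0.ne', Measure.restrict_smul, lintegral_smul_measure]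
    simp [abs_of_pos hT0]
  rw [hcv]
  have hV : volume (closedBall (0 : Rd d) ((2 : ℝ) ^ k)) =
      ENNReal.ofReal (((2 : ℝ) ^ k) ^ d) * volume (closedBall (0 : Rd d) 1) := by
    rw [Measure.addHaar_closedBall' _ _ (by positivity)]
    simp
  have hle : ∫⁻ x in closedBall (0 : Rd d) (T * R), h (τ x ω) ≤
      volume (closedBall (0 : Rd d) ((2 : ℝ) ^ k)) * Mx τ h ω := by
    calc _ ≤ ∫⁻ x in closedBall (0 : Rd d) ((2 : ℝ) ^ k), h (τ x ω) :=
          lintegral_mono_set (closedBall_subset_closedBall hn2.le)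
      _ = volume (closedBall (0 : Rd d) ((2 : ℝ) ^ k)) *
          ((∫⁻ x in closedBall (0 : Rd d) ((2 : ℝ) ^ k), h (τ x ω)) /
            volume (closedBall (0 : Rd d) ((2 : ℝ) ^ k))) := by
          rw [ENNReal.mul_div_cancel (aux_vol_pos _ (by positivity)) (aux_vol_top _)]
      _ ≤ _ := by
          gcongr
          exact le_iSup (fun k : ℕ => (∫⁻ x in closedBall (0 : Rd d) ((2 : ℝ) ^ k), h (τ x ω)) /
            volume (closedBall (0 : Rd d) ((2 : ℝ) ^ k))) k
  calc _ ≤ ENNReal.ofReal ((T ^ d)⁻¹) *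
        (ENNReal.ofReal (((2 : ℝ) ^ k) ^ d) * volume (closedBall (0 : Rd d) 1) * Mx τ h ω) := by
        rw [← hV]; gcongr
    _ = ENNReal.ofReal ((T ^ d)⁻¹ * ((2 : ℝ) ^ k) ^ d) * volume (closedBall (0 : Rd d) 1)
          * Mx τ h ω := by
        rw [ENNReal.ofReal_mul (by positivity)]; ring
    _ ≤ _ := by
        gcongr
        rw [inv_mul_le_iff₀ (by positivity), ← mul_pow]
        gcongr
        rw [pow_succ]; nlinarith

instance aux_haar : (volume : Measure (Rd d × Rd d)).IsAddHaarMeasure :=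
  inferInstanceAs ((volume : Measure (Rd d)).prod volume).IsAddHaarMeasure

theorem aux_translate (F : Rd d × Rd d → ℝ) (hF : Integrable F) :
    Tendsto (fun v : Rd d × Rd d => ∫⁻ q, ‖F (v + q) - F q‖ₑ) (𝓝 0) (𝓝 0) := by
  have hF1 : MemLp F 1 volume := memLp_one_iff_integrable.2 hF
  have : Fact ((1 : ℝ≥0∞) ≠ ∞) := ⟨by simp⟩
  let u : Lp ℝ 1 (volume : Measure (Rd d × Rd d)) := hF1.toLp F
  have hcv : ContinuousVAdd (Rd d × Rd d)ᵈᵃᵃ (Lp ℝ 1 (volume : Measure (Rd d × Rd d))) :=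
    Lp.instContinuousVAddDomAddAct (M := Rd d × Rd d) (X := Rd d × Rd d)
  have hc : Continuous fun v : Rd d × Rd d => (DomAddAct.mk v) +ᵥ u := by
    have h1 : Continuous fun v : Rd d × Rd d => DomAddAct.mk v := DomAddAct.continuous_mk
    exact h1.vadd continuous_const
  have h0 := (hc.edist (continuous_const (y := u))).tendsto (0 : Rd d × Rd d)
  have e : ∀ v : Rd d × Rd d, edist (DomAddAct.mk v +ᵥ u) u = ∫⁻ q, ‖F (v + q) - F q‖ₑ := by
    intro v
    have := DomAddAct.mk_vadd_toLp v hF1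
    rw [this, Lp.edist_toLp_toLp, eLpNorm_one_eq_lintegral_enorm]
    rfl
  simp only [e] at h0
  simpa using h0

/-- integrable times bounded measurable -/
theorem aux_int_bdd {F G : Rd d × Rd d → ℝ} (hF : Integrable F) (hG : Measurable G)
    {C : ℝ} (hC : ∀ q, |G q| ≤ C) : Integrable fun q => F q * G q :=
  hF.mul_bdd hG.aestronglyMeasurable (c := C) (Eventually.of_forall hC)

/-- Functions whose oscillation averages out. -/
def NiceP (τ : Rd d → Ω → Ω) (a : Ω → ℝ) (c : ℝ) : Prop :=
  Measurable a ∧ (∃ C, ∀ ω, |a ω| ≤ C) ∧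
    ∀ (ω : Ω) (F : Rd d × Rd d → ℝ), Integrable F → ∀ b : Ω → ℝ, Measurable b →
      (∃ C, ∀ ω, |b ω| ≤ C) →
      Tendsto (fun T : ℝ => ∫ q, F q * ((a (τ (T • q.1) ω) - c) * b (τ (T • q.2) ω)))
        atTop (𝓝 0)

theorem aux_meas1 {τ : Rd d → Ω → Ω} (hτmeas : Measurable fun p : Rd d × Ω => τ p.1 p.2)
    {β : Type*} [MeasurableSpace β] {a : Ω → β} (ha : Measurable a) (ω : Ω) (T : ℝ) :
    Measurable fun x : Rd d => a (τ (T • x) ω) :=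
  ha.comp (hτmeas.comp ((measurable_id.const_smul T).prodMk measurable_const))

theorem aux_int_ab {τ : Rd d → Ω → Ω} (hτmeas : Measurable fun p : Rd d × Ω => τ p.1 p.2)
    {F : Rd d × Rd d → ℝ} (hF : Integrable F) {a b : Ω → ℝ} (ha : Measurable a)
    (hb : Measurable b) (hab : ∃ C, ∀ ω, |a ω| ≤ C) (hbb : ∃ C, ∀ ω, |b ω| ≤ C) (ω : Ω) (T : ℝ) :
    Integrable fun q : Rd d × Rd d => F q * (a (τ (T • q.1) ω) * b (τ (T • q.2) ω)) := by
  obtain ⟨C, hC⟩ := hab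
  obtain ⟨C', hC'⟩ := hbb
  refine aux_int_bdd hF ?_ (C := C * C') fun q => ?_
  · exact ((aux_meas1 hτmeas ha ω T).comp measurable_fst).mul
      ((aux_meas1 hτmeas hb ω T).comp measurable_snd)
  · rw [abs_mul]
    exact mul_le_mul (hC _) (hC' _) (abs_nonneg _) ((abs_nonneg _).trans (hC (τ (T • q.1) ω)))

theorem aux_bdd_sub_const {a : Ω → ℝ} (h : ∃ C, ∀ ω, |a ω| ≤ C) (c : ℝ) :
    ∃ C, ∀ ω, |a ω - c| ≤ C := by
  obtain ⟨C, hC⟩ := h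
  exact ⟨C + |c|, fun ω => (abs_sub _ _).trans (by linarith [hC ω])⟩

theorem NiceP.add {τ : Rd d → Ω → Ω} (hτmeas : Measurable fun p : Rd d × Ω => τ p.1 p.2)
    {a₁ a₂ : Ω → ℝ} {c₁ c₂ : ℝ} (h₁ : NiceP τ a₁ c₁) (h₂ : NiceP τ a₂ c₂) :
    NiceP τ (fun ω => a₁ ω + a₂ ω) (c₁ + c₂) := by
  refine ⟨h₁.1.add h₂.1, ?_, fun ω F hF b hb hbb => ?_⟩
  · obtain ⟨C, hC⟩ := h₁.2.1
    obtain ⟨C', hC'⟩ := h₂.2.1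
    exact ⟨C + C', fun ω => (abs_add_le _ _).trans (add_le_add (hC ω) (hC' ω))⟩
  · have := (h₁.2.2 ω F hF b hb hbb).add (h₂.2.2 ω F hF b hb hbb)
    rw [add_zero] at this
    refine this.congr fun T => ?_
    rw [← integral_add]
    · congr 1; ext q; ring
    · exact aux_int_ab hτmeas hF (a := fun ω => a₁ ω - c₁) (h₁.1.sub_const _) hb
        (aux_bdd_sub_const h₁.2.1 _) hbb ω T
    · exact aux_int_ab hτmeas hF (a := fun ω => a₂ ω - c₂) (h₂.1.sub_const _) hb
        (aux_bdd_sub_const h₂.2.1 _) hbb ω T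

theorem NiceP.smul {τ : Rd d → Ω → Ω}
    {a : Ω → ℝ} {c : ℝ} (h : NiceP τ a c) (r : ℝ) :
    NiceP τ (fun ω => r * a ω) (r * c) := by
  refine ⟨h.1.const_mul r, ?_, fun ω F hF b hb hbb => ?_⟩
  · obtain ⟨C, hC⟩ := h.2.1
    exact ⟨|r| * C, fun ω => by rw [abs_mul]; exact mul_le_mul_of_nonneg_left (hC ω) (abs_nonneg _)⟩
  · have := (h.2.2 ω F hF b hb hbb).const_mul r
    rw [mul_zero] at this
    refine this.congr fun T => ?_
    rw [← integral_const_mul]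
    congr 1; ext q; ring

theorem NiceP.const (τ : Rd d → Ω → Ω) (c : ℝ) : NiceP τ (fun _ => c) c := by
  refine ⟨measurable_const, ⟨|c|, fun _ => le_rfl⟩, fun ω F hF b hb hbb => ?_⟩
  simp

theorem NiceP.cobound {τ : Rd d → Ω → Ω} (hτadd : ∀ x y, τ x ∘ τ y = τ (x + y))
    (hτmeas : Measurable fun p : Rd d × Ω => τ p.1 p.2) {g : Ω → ℝ} (hg : Measurable g)
    (hgb : ∃ C, ∀ ω, |g ω| ≤ C) (z : Rd d) : NiceP τ (fun ω => g ω - g (τ z ω)) 0 := by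
  have hτz : Measurable (τ z) := hτmeas.comp (measurable_const.prodMk measurable_id)
  obtain ⟨C, hC⟩ := hgb
  have hbd : ∀ ω, |g ω - g (τ z ω)| ≤ C + C := fun ω =>
    (abs_sub _ _).trans (add_le_add (hC _) (hC _))
  refine ⟨hg.sub (hg.comp hτz), ⟨_, hbd⟩, fun ω F hF b hb hbb => ?_⟩
  obtain ⟨C', hC'⟩ := hbb
  -- the key bound
  set v : ℝ → Rd d × Rd d := fun T => (-(T⁻¹ • z), 0) with hv
  have hv0 : Tendsto v atTop (𝓝 0) := by
    have h1 : Tendsto (fun T : ℝ => -(T⁻¹ • z)) atTop (𝓝 0) := by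
      have := ((tendsto_inv_atTop_zero (𝕜 := ℝ)).smul_const z).neg
      simpa using this
    exact h1.prodMk_nhds tendsto_const_nhds
  have hlim := ((aux_translate F hF).comp hv0)
  have hlim2 : Tendsto (fun T => ENNReal.ofReal (C * C') *
      ∫⁻ q, ‖F (v T + q) - F q‖ₑ) atTop (𝓝 0) := by
    have := ENNReal.Tendsto.const_mul (a := ENNReal.ofReal (C * C')) hlim
      (Or.inr ENNReal.ofReal_ne_top)
    rw [mul_zero] at this
    exact this
  rw [tendsto_zero_iff_enorm_tendsto_zero]
  refine tendsto_of_tendsto_of_tendsto_of_le_of_le' tendsto_const_nhds hlim2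
    (Eventually.of_forall fun _ => zero_le) ?_
  filter_upwards [eventually_gt_atTop 0] with T hT
  set G : Rd d × Rd d → ℝ := fun q => g (τ (T • q.1) ω) * b (τ (T • q.2) ω) with hG
  have hGm : Measurable G := ((aux_meas1 hτmeas hg ω T).comp measurable_fst).mul
      ((aux_meas1 hτmeas hb ω T).comp measurable_snd)
  have hGb : ∀ q, |G q| ≤ C * C' := fun q => by
    rw [hG, abs_mul]
    exact mul_le_mul (hC _) (hC' _) (abs_nonneg _) ((abs_nonneg _).trans (hC (τ (T • q.1) ω)))
  have hGs : ∀ q : Rd d × Rd d, g (τ z (τ (T • q.1) ω)) * b (τ (T • q.2) ω) = G (-(v T) + q) := by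
    intro q
    have h1 : τ z (τ (T • q.1) ω) = τ (T • (T⁻¹ • z + q.1)) ω := by
      rw [smul_add, smul_inv_smul₀ hT.ne']
      exact congrFun (hτadd _ _) ω
    simp [hG, hv, h1]
  have hI1 : Integrable fun q => F q * G q := aux_int_bdd hF hGm hGb
  have hI2 : Integrable fun q => F q * G (-(v T) + q) :=
    aux_int_bdd hF (hGm.comp (measurable_const_add _)) fun q => hGb _
  have hFs : Integrable fun q => F (v T + q) := hF.comp_add_left (v T)
  have hI3 : Integrable fun q => F (v T + q) * G q := aux_int_bdd hFs hGm hGb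
  have e1 : ∫ q : Rd d × Rd d, F q * ((g (τ (T • q.1) ω) - g (τ z (τ (T • q.1) ω)) - 0)
      * b (τ (T • q.2) ω)) = ∫ q, -((F (v T + q) - F q) * G q) := by
    calc _ = ∫ q, (F q * G q - F q * G (-(v T) + q)) := by
          congr 1; ext q; rw [← hGs q]; simp only [hG]; ring
      _ = (∫ q, F q * G q) - ∫ q, F (v T + q) * G q := by
          rw [integral_sub hI1 hI2]
          congr 1
          rw [← integral_add_left_eq_self (fun q => F q * G (-(v T) + q)) (v T)]
          simp
      _ = _ := by
          rw [← integral_sub hI1 hI3]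
          congr 1; ext q; ring
  rw [e1]
  refine (enorm_integral_le_lintegral_enorm _).trans ?_
  rw [← lintegral_const_mul' _ _ ENNReal.ofReal_ne_top]
  refine lintegral_mono fun q => ?_
  rw [enorm_neg, enorm_mul, mul_comm]
  gcongr
  rw [Real.enorm_eq_ofReal_abs]
  exact ENNReal.ofReal_le_ofReal (hGb q)

theorem NiceP.pair {τ : Rd d → Ω → Ω} (hτmeas : Measurable fun p : Rd d × Ω => τ p.1 p.2)
    {a₁ a₂ : Ω → ℝ} {c₁ c₂ : ℝ} (h₁ : NiceP τ a₁ c₁) (h₂ : NiceP τ a₂ c₂) (ω : Ω)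
    (F : Rd d × Rd d → ℝ) (hF : Integrable F) :
    Tendsto (fun T : ℝ => ∫ q, F q * (a₁ (τ (T • q.1) ω) * a₂ (τ (T • q.2) ω)))
        atTop (𝓝 (c₁ * c₂ * ∫ q, F q)) := by
  have hone : ∃ C : ℝ, ∀ ω : Ω, |(fun _ : Ω => (1 : ℝ)) ω| ≤ C := ⟨1, fun _ => by simp⟩
  have t1 := h₁.2.2 ω F hF a₂ h₂.1 h₂.2.1
  have t2 := h₂.2.2 ω (fun q => F q.swap) hF.swap (fun _ => 1) measurable_const hone
  have t3 := (t1.add (t2.const_mul c₁)).add_const (c₁ * c₂ * ∫ q, F q)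
  simp only [mul_zero, zero_add] at t3
  refine t3.congr fun T => ?_
  have es : ∫ q : Rd d × Rd d, F q.swap * ((a₂ (τ (T • q.1) ω) - c₂) * 1) =
      ∫ q : Rd d × Rd d, F q * (1 * (a₂ (τ (T • q.2) ω) - c₂)) := by
    have := integral_prod_swap (μ := (volume : Measure (Rd d))) (ν := (volume : Measure (Rd d)))
      (fun q : Rd d × Rd d => F q * (1 * (a₂ (τ (T • q.2) ω) - c₂)))
    simp only [Measure.volume_eq_prod]
    rw [← this]
    congr 1; ext q; simp
  rw [es, ← integral_const_mul, ← integral_const_mul]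
  have i1 := aux_int_ab hτmeas hF (a := fun ω => a₁ ω - c₁) (h₁.1.sub_const _) h₂.1
        (aux_bdd_sub_const h₁.2.1 _) h₂.2.1 ω T
  have i2 := (aux_int_ab hτmeas hF (a := fun _ => 1) (b := fun ω => a₂ ω - c₂) measurable_const
    (h₂.1.sub_const _) hone (aux_bdd_sub_const h₂.2.1 _) ω T).const_mul c₁
  rw [← integral_add i1 i2, ← integral_add (i1.fun_add i2) (hF.const_mul _)]
  congr 1; ext q; ring

theorem aux_invariant_null (ℙ : Measure Ω) [IsProbabilityMeasure ℙ]
    (τ : Rd d → Ω → Ω)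
    (hτadd : ∀ x y, τ x ∘ τ y = τ (x + y))
    (hτmeas : Measurable fun p : Rd d × Ω => τ p.1 p.2)
    (hτerg : ∀ A : Set Ω, MeasurableSet A → (∀ x, τ x ⁻¹' A = A) → ℙ A = 0 ∨ ℙ A = 1)
    (u : Ω → ℝ) (hu : Measurable u) (hui : Integrable u ℙ) (hu0 : ∫ ω, u ω ∂ℙ = 0)
    (hinv : ∀ z, ∀ᵐ ω ∂ℙ, u (τ z ω) = u ω) : ∀ᵐ ω ∂ℙ, u ω ≤ 0 := by
  set A : Set Ω := {ω | ∀ᵐ x : Rd d, 0 < u (τ x ω)} with hA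
  have hjm : Measurable fun p : Ω × Rd d => u (τ p.2 p.1) :=
    hu.comp (hτmeas.comp measurable_swap)
  have hAm : MeasurableSet A := by
    have hs : MeasurableSet {p : Ω × Rd d | ¬ 0 < u (τ p.2 p.1)} :=
      (measurableSet_lt measurable_const hjm).compl
    exact (measurable_measure_prodMk_left (ν := (volume : Measure (Rd d))) hs)
      (measurableSet_singleton 0)
  have hAinv : ∀ z, τ z ⁻¹' A = A := by
    intro z
    ext ω
    have h1 : ∀ x, τ x (τ z ω) = τ (x + z) ω := fun x => congrFun (hτadd x z) ω
    have hmp := measurePreserving_add_right (volume : Measure (Rd d)) z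
    simp only [hA, mem_preimage, mem_ofPred_eq, h1]
    constructor
    · intro h
      have hmp' := measurePreserving_add_right (volume : Measure (Rd d)) (-z)
      have := hmp'.quasiMeasurePreserving.ae h
      simpa using this
    · intro h
      exact hmp.quasiMeasurePreserving.ae h
  have hae : ∀ᵐ ω ∂ℙ, ∀ᵐ x : Rd d, u (τ x ω) = u ω := by
    have hs : MeasurableSet {p : Rd d × Ω | u (τ p.1 p.2) = u p.2} :=
      measurableSet_eq_fun (hu.comp hτmeas) (hu.comp measurable_snd)
    have h1 : ∀ᵐ x : Rd d, ∀ᵐ ω ∂ℙ, u (τ x ω) = u ω := Eventually.of_forall hinv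
    exact (Measure.ae_ae_comm hs).1 h1
  have hAu : ∀ᵐ ω ∂ℙ, (ω ∈ A ↔ 0 < u ω) := by
    filter_upwards [hae] with ω hω
    constructor
    · intro h
      obtain ⟨x, hx1, hx2⟩ := (hω.and h).exists
      rwa [hx1] at hx2
    · intro h
      filter_upwards [hω] with x hx
      rwa [hx]
  rcases hτerg A hAm hAinv with h0 | h1
  · have : ∀ᵐ ω ∂ℙ, ω ∉ A := measure_eq_zero_iff_ae_notMem.1 h0
    filter_upwards [this, hAu] with ω h1 h2
    exact not_lt.1 fun h => h1 (h2.2 h)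
  · have hA1 : ∀ᵐ ω ∂ℙ, ω ∈ A := (prob_compl_eq_zero_iff hAm).2 h1
    have hnn : 0 ≤ᵐ[ℙ] u := by
      filter_upwards [hA1, hAu] with ω h1 h2
      exact (h2.1 h1).le
    have := (integral_eq_zero_iff_of_nonneg_ae hnn hui).1 hu0
    filter_upwards [this] with ω h
    exact h.le

/-- the space of nice functions in L² -/
def niceSub (ℙ : Measure Ω) [IsProbabilityMeasure ℙ] (τ : Rd d → Ω → Ω)
    (hτmeas : Measurable fun p : Rd d × Ω => τ p.1 p.2) : Submodule ℝ (Lp ℝ 2 ℙ) where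
  carrier := {u | ∃ a, NiceP τ a (∫ ω, a ω ∂ℙ) ∧ u =ᵐ[ℙ] a}
  zero_mem' := by
    refine ⟨fun _ => 0, by simpa using NiceP.const τ 0, Lp.coeFn_zero _ _ _⟩
  add_mem' := by
    rintro u v ⟨a, ha, hua⟩ ⟨b, hb, hvb⟩
    refine ⟨fun ω => a ω + b ω, ?_, ?_⟩
    · have i : ∀ {a : Ω → ℝ} {c : ℝ}, NiceP τ a c → Integrable a ℙ := fun h => by
        obtain ⟨C, hC⟩ := h.2.1
        exact Integrable.of_bound h.1.aestronglyMeasurable C (Eventually.of_forall hC)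
      rw [integral_add (i ha) (i hb)]
      exact ha.add hτmeas hb
    · filter_upwards [Lp.coeFn_add u v, hua, hvb] with ω h1 h2 h3
      rw [h1, Pi.add_apply, h2, h3]
  smul_mem' := by
    rintro r u ⟨a, ha, hua⟩
    refine ⟨fun ω => r * a ω, ?_, ?_⟩
    · rw [integral_const_mul]
      exact ha.smul r
    · filter_upwards [Lp.coeFn_smul r u, hua] with ω h1 h2
      rw [h1, Pi.smul_apply, h2, smul_eq_mul]

theorem aux_nice_int {ℙ : Measure Ω} [IsProbabilityMeasure ℙ] {τ : Rd d → Ω → Ω}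
    {a : Ω → ℝ} {c : ℝ} (h : NiceP τ a c) (p : ℝ≥0∞) : MemLp a p ℙ := by
  obtain ⟨C, hC⟩ := h.2.1
  exact MemLp.of_bound h.1.aestronglyMeasurable C (Eventually.of_forall hC)

theorem aux_nice_dense (ℙ : Measure Ω) [IsProbabilityMeasure ℙ]
    (τ : Rd d → Ω → Ω)
    (hτ0 : τ 0 = id)
    (hτadd : ∀ x y, τ x ∘ τ y = τ (x + y))
    (hτmeas : Measurable fun p : Rd d × Ω => τ p.1 p.2)
    (hτstat : ∀ x, MeasurePreserving (τ x) ℙ ℙ)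
    (hτerg : ∀ A : Set Ω, MeasurableSet A → (∀ x, τ x ⁻¹' A = A) → ℙ A = 0 ∨ ℙ A = 1) :
    (niceSub ℙ τ hτmeas).topologicalClosure = ⊤ := by
  rw [Submodule.topologicalClosure_eq_top_iff, Submodule.eq_bot_iff]
  intro w hw
  obtain ⟨u, hum, hwu⟩ : ∃ u : Ω → ℝ, Measurable u ∧ w =ᵐ[ℙ] u :=
    ⟨_, (Lp.aestronglyMeasurable w).stronglyMeasurable_mk.measurable,
      (Lp.aestronglyMeasurable w).ae_eq_mk⟩
  have hu2 : MemLp u 2 ℙ := (memLp_congr_ae hwu).1 (Lp.memLp w)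
  have hui : Integrable u ℙ := hu2.integrable (by norm_num)
  have horth : ∀ a : Ω → ℝ, NiceP τ a (∫ ω, a ω ∂ℙ) → ∫ ω, u ω * a ω ∂ℙ = 0 := by
    intro a ha
    have h2 := aux_nice_int (ℙ := ℙ) ha 2
    have hm : h2.toLp a ∈ niceSub ℙ τ hτmeas := ⟨a, ha, h2.coeFn_toLp⟩
    have := (Submodule.mem_orthogonal _ _).1 hw _ hm
    rw [L2.inner_def] at this
    rw [← this]
    refine integral_congr_ae ?_
    filter_upwards [h2.coeFn_toLp, hwu] with ω e1 e2
    rw [e1, e2]; simp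
  have hu0 : ∫ ω, u ω ∂ℙ = 0 := by
    have := horth (fun _ => 1) (by simpa using NiceP.const τ 1)
    simpa using this
  have hinv : ∀ z, ∀ᵐ ω ∂ℙ, u (τ z ω) = u ω := by
    intro z
    have hcomp : Integrable (fun ω => u (τ z ω)) ℙ := (hτstat z).integrable_comp_of_integrable hui
    refine Integrable.ae_eq_of_forall_setIntegral_eq _ _ hcomp hui fun s hs _ => ?_
    set g : Ω → ℝ := fun ω => s.indicator 1 (τ (-z) ω) with hg
    have hi1 : Measurable (s.indicator (1 : Ω → ℝ)) := measurable_one.indicator hs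
    have hgm : Measurable g := hi1.comp (hτstat (-z)).measurable
    have hib : ∀ ω, |s.indicator (1 : Ω → ℝ) ω| ≤ 1 := fun ω => by
      by_cases h : ω ∈ s <;> simp [h]
    have hgz : ∀ ω, g (τ z ω) = s.indicator 1 ω := fun ω => by
      have : τ (-z) (τ z ω) = ω := by
        have := congrFun (hτadd (-z) z) ω
        simpa [hτ0] using this
      simp [hg, this]
    have hn := NiceP.cobound hτadd hτmeas hgm ⟨1, fun ω => hib _⟩ z
    have hgi : Integrable g ℙ := Integrable.of_bound hgm.aestronglyMeasurable 1
      (Eventually.of_forall fun ω => hib _)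
    have hii : Integrable (s.indicator (1 : Ω → ℝ)) ℙ :=
      Integrable.of_bound hi1.aestronglyMeasurable 1 (Eventually.of_forall fun ω => hib _)
    have e0 : ∫ ω, (g ω - g (τ z ω)) ∂ℙ = 0 := by
      simp only [hgz]
      rw [integral_sub hgi hii]
      have : ∫ ω, g ω ∂ℙ = ∫ ω, s.indicator 1 ω ∂ℙ := by
        have h := integral_map (μ := ℙ) (hτstat (-z)).measurable.aemeasurable
          (f := s.indicator (1 : Ω → ℝ)) hi1.aestronglyMeasurable
        rw [(hτstat (-z)).map_eq] at h
        exact h.symm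
      rw [this, sub_self]
    have ho := horth (fun ω => g ω - g (τ z ω)) (by rw [e0]; exact hn)
    have j1 : Integrable (fun ω => u ω * g ω) ℙ :=
      hui.mul_bdd hgm.aestronglyMeasurable (c := 1) (Eventually.of_forall fun ω => hib _)
    have j2 : Integrable (fun ω => u ω * s.indicator 1 ω) ℙ :=
      hui.mul_bdd hi1.aestronglyMeasurable (c := 1) (Eventually.of_forall fun ω => hib _)
    simp only [hgz, mul_sub] at ho
    rw [integral_sub j1 j2, sub_eq_zero] at ho
    have k : ∀ v : Ω → ℝ, ∫ ω, v ω * s.indicator 1 ω ∂ℙ = ∫ ω in s, v ω ∂ℙ := by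
      intro v
      rw [← integral_indicator hs]
      congr 1; ext ω
      by_cases h : ω ∈ s <;> simp [h]
    rw [← k, ← k u, ← ho]
    have h := integral_map (μ := ℙ) (hτstat z).measurable.aemeasurable
      (f := fun ω => u ω * g ω) (hum.mul hgm).aestronglyMeasurable
    rw [(hτstat z).map_eq] at h
    rw [h]
    simp only [hgz]
  have hle := aux_invariant_null ℙ τ hτadd hτmeas hτerg u hum hui hu0 hinv
  have hge := aux_invariant_null ℙ τ hτadd hτmeas hτerg (fun ω => -u ω) hum.neg hui.neg
    (by rw [integral_neg, hu0, neg_zero]) (fun z => by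
      filter_upwards [hinv z] with ω h; rw [h])
  rw [Lp.eq_zero_iff_ae_eq_zero]
  filter_upwards [hwu, hle, hge] with ω h1 h2 h3
  rw [h1, Pi.zero_apply]; linarith

theorem aux_approx (ℙ : Measure Ω) [IsProbabilityMeasure ℙ]
    (τ : Rd d → Ω → Ω)
    (hτ0 : τ 0 = id)
    (hτadd : ∀ x y, τ x ∘ τ y = τ (x + y))
    (hτmeas : Measurable fun p : Rd d × Ω => τ p.1 p.2)
    (hτstat : ∀ x, MeasurePreserving (τ x) ℙ ℙ)
    (hτerg : ∀ A : Set Ω, MeasurableSet A → (∀ x, τ x ⁻¹' A = A) → ℙ A = 0 ∨ ℙ A = 1)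
    (h : Ω → ℝ) (hi : Integrable h ℙ) (δ : ℝ≥0∞) (hδ : δ ≠ 0) :
    ∃ a, NiceP τ a (∫ ω, a ω ∂ℙ) ∧ ∫⁻ ω, ‖h ω - a ω‖ₑ ∂ℙ ≤ δ := by
  have hδ2 : δ / 2 ≠ 0 := (ENNReal.half_pos hδ).ne'
  obtain ⟨s, hs, hs1⟩ := (memLp_one_iff_integrable.2 hi).exists_simpleFunc_eLpNorm_sub_lt
    (by simp) hδ2
  have hs2 : MemLp s 2 ℙ := s.memLp_of_isFiniteMeasure 2 ℙ
  have hmem : hs2.toLp s ∈ closure (niceSub ℙ τ hτmeas : Set (Lp ℝ 2 ℙ)) := by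
    have := aux_nice_dense ℙ τ hτ0 hτadd hτmeas hτstat hτerg
    rw [← Submodule.topologicalClosure_coe, this]
    trivial
  obtain ⟨v, ⟨a, ha, hva⟩, hv⟩ := EMetric.mem_closure_iff.1 hmem (δ / 2) (pos_iff_ne_zero.2 hδ2)
  refine ⟨a, ha, ?_⟩
  have ha2 := aux_nice_int (ℙ := ℙ) ha 2
  have hva' : v = ha2.toLp a := by
    apply Lp.ext
    exact hva.trans ha2.coeFn_toLp.symm
  rw [hva', Lp.edist_toLp_toLp] at hv
  have h1 : eLpNorm (⇑s - a) 1 ℙ ≤ δ / 2 :=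
    (eLpNorm_le_eLpNorm_of_exponent_le (by norm_num) (hs2.sub ha2).1).trans hv.le
  rw [← eLpNorm_one_eq_lintegral_enorm]
  have e : (fun ω => h ω - a ω) = (h - ⇑s) + (⇑s - a) := by ext ω; simp
  rw [e]
  calc _ ≤ eLpNorm (h - ⇑s) 1 ℙ + eLpNorm (⇑s - a) 1 ℙ :=
        eLpNorm_add_le (hi.1.sub s.aestronglyMeasurable) (hs2.sub ha2).1 le_rfl
    _ ≤ δ / 2 + δ / 2 := add_le_add hs.le h1
    _ = δ := ENNReal.add_halves δ

theorem aux_seq (ℙ : Measure Ω) [IsProbabilityMeasure ℙ]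
    (τ : Rd d → Ω → Ω)
    (hτ0 : τ 0 = id)
    (hτadd : ∀ x y, τ x ∘ τ y = τ (x + y))
    (hτmeas : Measurable fun p : Rd d × Ω => τ p.1 p.2)
    (hτstat : ∀ x, MeasurePreserving (τ x) ℙ ℙ)
    (hτerg : ∀ A : Set Ω, MeasurableSet A → (∀ x, τ x ⁻¹' A = A) → ℙ A = 0 ∨ ℙ A = 1)
    (h : Ω → ℝ) (hm : Measurable h) (hi : Integrable h ℙ) :
    ∃ a : ℕ → Ω → ℝ, (∀ n, NiceP τ (a n) (∫ ω, a n ω ∂ℙ)) ∧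
      Tendsto (fun n => ∫ ω, a n ω ∂ℙ) atTop (𝓝 (∫ ω, h ω ∂ℙ)) ∧
      ∀ᵐ ω ∂ℙ, Mx τ (fun ω => ‖h ω‖ₑ) ω ≠ ∞ ∧
        Tendsto (fun n => Mx τ (fun ω => ‖h ω - a n ω‖ₑ) ω) atTop (𝓝 0) := by
  have hne : ∀ n : ℕ, ((2 : ℝ≥0∞)⁻¹) ^ n * (2⁻¹) ^ n ≠ 0 := fun n => by simp
  choose a ha hδ using fun n : ℕ => aux_approx ℙ τ hτ0 hτadd hτmeas hτstat hτerg h hi _ (hne n)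
  have hpow : Tendsto (fun n : ℕ => ((2 : ℝ≥0∞)⁻¹) ^ n) atTop (𝓝 0) :=
    ENNReal.tendsto_pow_atTop_nhds_zero_of_lt_one (by simp)
  have hpow1 : ∀ n : ℕ, ((2 : ℝ≥0∞)⁻¹) ^ n ≤ 1 := fun n => pow_le_one₀ (zero_le) (by simp)
  refine ⟨a, ha, ?_, ?_⟩
  · refine tendsto_integral_of_L1 h hi.1
      (Eventually.of_forall fun n => (aux_nice_int (ha n) 1).integrable le_rfl) ?_
    refine tendsto_of_tendsto_of_tendsto_of_le_of_le tendsto_const_nhds hpow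
      (fun _ => zero_le) fun n => ?_
    calc _ = ∫⁻ ω, ‖h ω - a n ω‖ₑ ∂ℙ := by
          congr 1; ext ω; rw [← enorm_neg, neg_sub]
      _ ≤ _ := hδ n
      _ ≤ 2⁻¹ ^ n * 1 := by gcongr; exact hpow1 n
      _ = _ := mul_one _
  · have hfin : ∀ᵐ ω ∂ℙ, Mx τ (fun ω => ‖h ω‖ₑ) ω ≠ ∞ := by
      rw [ae_iff]
      set B := {ω | ¬ Mx τ (fun ω => ‖h ω‖ₑ) ω ≠ ∞} with hB
      set K := ENNReal.ofReal (10 ^ d) * ∫⁻ ω, ‖h ω‖ₑ ∂ℙ with hK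
      have hKt : K ≠ ∞ := ENNReal.mul_ne_top ENNReal.ofReal_ne_top hi.2.ne
      have hb : ∀ n : ℕ, (n : ℝ≥0∞) * ℙ B ≤ K := fun n => by
        refine le_trans ?_ (aux_maximal ℙ τ hτadd hτmeas hτstat (fun ω => ‖h ω‖ₑ) hm.enorm n)
        gcongr
        intro ω hω
        have : Mx τ (fun ω => ‖h ω‖ₑ) ω = ∞ := not_not.1 hω
        simp [this]
      by_contra hne
      obtain ⟨n, hn⟩ := ENNReal.exists_nat_mul_gt hne hKt
      exact absurd (hb n) (not_le.2 hn)
    have hbc : ∀ᵐ ω ∂ℙ, ∀ᶠ n in atTop,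
        ω ∉ {ω | ((2 : ℝ≥0∞)⁻¹) ^ n < Mx τ (fun ω => ‖h ω - a n ω‖ₑ) ω} := by
      refine ae_eventually_notMem ?_
      have hle : ∀ n : ℕ, ℙ {ω | ((2 : ℝ≥0∞)⁻¹) ^ n < Mx τ (fun ω => ‖h ω - a n ω‖ₑ) ω} ≤
          ENNReal.ofReal (10 ^ d) * (2⁻¹) ^ n := fun n => by
        have h1 := (aux_maximal ℙ τ hτadd hτmeas hτstat (fun ω => ‖h ω - a n ω‖ₑ)
          (hm.sub (ha n).1).enorm ((2⁻¹) ^ n)).trans (mul_le_mul_right (hδ n) _)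
        rw [mul_left_comm] at h1
        exact (ENNReal.mul_le_mul_iff_right (by simp) ((hpow1 n).trans_lt (by simp)).ne).1 h1
      refine ne_top_of_le_ne_top ?_ (ENNReal.tsum_le_tsum hle)
      rw [ENNReal.tsum_mul_left, ENNReal.tsum_geometric]
      refine ENNReal.mul_ne_top ENNReal.ofReal_ne_top ?_
      simp
    filter_upwards [hfin, hbc] with ω h1 h2
    refine ⟨h1, tendsto_of_tendsto_of_tendsto_of_le_of_le' tendsto_const_nhds hpow
      (Eventually.of_forall fun _ => zero_le) ?_⟩
    filter_upwards [h2] with n hn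
    exact not_lt.1 hn

theorem aux_K (τ : Rd d → Ω → Ω)
    (hτmeas : Measurable fun p : Rd d × Ω => τ p.1 p.2)
    (F : Rd d × Rd d → ℝ) (M R : ℝ) (hR : 1 ≤ R) (hM : ∀ q, |F q| ≤ M)
    (hsupp : ∀ q, F q ≠ 0 → q ∈ closedBall (0 : Rd d) R ×ˢ closedBall (0 : Rd d) R) :
    ∃ K : ℝ≥0∞, K ≠ ∞ ∧ ∀ (φ ψ : Ω → ℝ≥0∞), Measurable φ → Measurable ψ → ∀ (ω : Ω) (T : ℝ), 1 ≤ T →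
      ∫⁻ q, ‖F q‖ₑ * (φ (τ (T • q.1) ω) * ψ (τ (T • q.2) ω)) ≤ K * (Mx τ φ ω * Mx τ ψ ω) := by
  obtain ⟨C, hC, hb⟩ := aux_Mx_bound τ R hR
  refine ⟨ENNReal.ofReal M * (C * C), ENNReal.mul_ne_top ENNReal.ofReal_ne_top
    (ENNReal.mul_ne_top hC hC), fun φ ψ hφ hψ ω T hT => ?_⟩
  set B := closedBall (0 : Rd d) R
  have hBm : MeasurableSet B := measurableSet_closedBall
  calc _ ≤ ∫⁻ q in B ×ˢ B, ENNReal.ofReal M * (φ (τ (T • q.1) ω) * ψ (τ (T • q.2) ω)) := by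
        rw [← lintegral_indicator (hBm.prod hBm)]
        refine lintegral_mono fun q => ?_
        by_cases hq : q ∈ B ×ˢ B
        · simp only [indicator_of_mem hq]
          gcongr
          rw [Real.enorm_eq_ofReal_abs]
          exact ENNReal.ofReal_le_ofReal (hM q)
        · have : F q = 0 := by
            by_contra h
            exact hq (hsupp q h)
          simp [this]
    _ = ENNReal.ofReal M * ((∫⁻ x in B, φ (τ (T • x) ω)) * ∫⁻ y in B, ψ (τ (T • y) ω)) := by
        rw [lintegral_const_mul' _ _ ENNReal.ofReal_ne_top, Measure.volume_eq_prod,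
          ← Measure.prod_restrict, lintegral_prod_mul (aux_meas1 hτmeas hφ ω T).aemeasurable
            (aux_meas1 hτmeas hψ ω T).aemeasurable]
    _ ≤ ENNReal.ofReal M * ((C * Mx τ φ ω) * (C * Mx τ ψ ω)) := by
        gcongr
        · exact hb φ ω T hT
        · exact hb ψ ω T hT
    _ = _ := by ring

theorem aux_determ (τ : Rd d → Ω → Ω)
    (hτmeas : Measurable fun p : Rd d × Ω => τ p.1 p.2)
    (h₁ h₂ : Ω → ℝ) (hm₁ : Measurable h₁) (hm₂ : Measurable h₂)
    (a₁ a₂ : ℕ → Ω → ℝ) (c₁ c₂ : ℕ → ℝ) (C₁ C₂ : ℝ)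
    (ha₁ : ∀ n, NiceP τ (a₁ n) (c₁ n)) (ha₂ : ∀ n, NiceP τ (a₂ n) (c₂ n))
    (hc₁ : Tendsto c₁ atTop (𝓝 C₁)) (hc₂ : Tendsto c₂ atTop (𝓝 C₂)) (ω : Ω)
    (hf₁ : Mx τ (fun ω => ‖h₁ ω‖ₑ) ω ≠ ∞) (hf₂ : Mx τ (fun ω => ‖h₂ ω‖ₑ) ω ≠ ∞)
    (ht₁ : Tendsto (fun n => Mx τ (fun ω => ‖h₁ ω - a₁ n ω‖ₑ) ω) atTop (𝓝 0))
    (ht₂ : Tendsto (fun n => Mx τ (fun ω => ‖h₂ ω - a₂ n ω‖ₑ) ω) atTop (𝓝 0))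
    (F : Rd d × Rd d → ℝ) (hFm : Measurable F) (M R : ℝ) (hR : 1 ≤ R) (hM : ∀ q, |F q| ≤ M)
    (hsupp : ∀ q, F q ≠ 0 → q ∈ closedBall (0 : Rd d) R ×ˢ closedBall (0 : Rd d) R) :
    Tendsto (fun T : ℝ => ∫ q, F q * (h₁ (τ (T • q.1) ω) * h₂ (τ (T • q.2) ω)))
      atTop (𝓝 (C₁ * C₂ * ∫ q, F q)) := by
  obtain ⟨K, hK, hKb⟩ := aux_K τ hτmeas F M R hR hM hsupp
  have hFi : Integrable F := by
    have hBm : MeasurableSet (closedBall (0 : Rd d) R ×ˢ closedBall (0 : Rd d) R) :=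
      measurableSet_closedBall.prod measurableSet_closedBall
    have : IntegrableOn F (closedBall (0 : Rd d) R ×ˢ closedBall (0 : Rd d) R) := by
      refine Measure.integrableOn_of_bounded (M := M) ?_ hFm.aestronglyMeasurable
        (Eventually.of_forall hM)
      rw [Measure.volume_eq_prod, Measure.prod_prod]
      exact ENNReal.mul_ne_top (aux_vol_top _) (aux_vol_top _)
    rwa [integrableOn_iff_integrable_of_support_subset] at this
    exact fun q hq => hsupp q hq
  set V₁ := Mx τ (fun ω => ‖h₁ ω‖ₑ) ω
  set V₂ := Mx τ (fun ω => ‖h₂ ω‖ₑ) ω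
  set m₁ := fun n => Mx τ (fun ω => ‖h₁ ω - a₁ n ω‖ₑ) ω
  set m₂ := fun n => Mx τ (fun ω => ‖h₂ ω - a₂ n ω‖ₑ) ω
  have hHm : ∀ (u v : Ω → ℝ), Measurable u → Measurable v → ∀ T : ℝ,
      Measurable fun q : Rd d × Rd d => u (τ (T • q.1) ω) * v (τ (T • q.2) ω) := fun u v hu hv T =>
    ((aux_meas1 hτmeas hu ω T).comp measurable_fst).mul
      ((aux_meas1 hτmeas hv ω T).comp measurable_snd)
  have hHi : ∀ T : ℝ, 1 ≤ T →
      Integrable fun q : Rd d × Rd d => F q * (h₁ (τ (T • q.1) ω) * h₂ (τ (T • q.2) ω)) := by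
    intro T hT
    refine ⟨(hFm.mul (hHm h₁ h₂ hm₁ hm₂ T)).aestronglyMeasurable, ?_⟩
    refine lt_of_le_of_lt ?_ (ENNReal.mul_lt_top hK.lt_top
      (ENNReal.mul_lt_top hf₁.lt_top hf₂.lt_top))
    refine le_trans (le_of_eq ?_) (hKb _ _ hm₁.enorm hm₂.enorm ω T hT)
    simp only [enorm_mul]
  have hdiff : ∀ n (T : ℝ), 1 ≤ T →
      ‖(∫ q, F q * (h₁ (τ (T • q.1) ω) * h₂ (τ (T • q.2) ω))) -
        ∫ q, F q * (a₁ n (τ (T • q.1) ω) * a₂ n (τ (T • q.2) ω))‖ₑ ≤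
      K * (m₁ n * V₂) + K * (V₁ * m₂ n) + K * (m₁ n * m₂ n) := by
    intro n T hT
    rw [← integral_sub (hHi T hT) (aux_int_ab hτmeas hFi (ha₁ n).1 (ha₂ n).1 (ha₁ n).2.1
      (ha₂ n).2.1 ω T)]
    refine (enorm_integral_le_lintegral_enorm _).trans ?_
    have hb₁ : Measurable fun ω => ‖h₁ ω - a₁ n ω‖ₑ := (hm₁.sub (ha₁ n).1).enorm
    have hb₂ : Measurable fun ω => ‖h₂ ω - a₂ n ω‖ₑ := (hm₂.sub (ha₂ n).1).enorm
    have q1 := hKb _ _ hb₁ hm₂.enorm ω T hT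
    have q2 := hKb _ _ hm₁.enorm hb₂ ω T hT
    have q3 := hKb _ _ hb₁ hb₂ ω T hT
    have hmm : ∀ (u v : Ω → ℝ≥0∞), Measurable u → Measurable v →
        Measurable fun q : Rd d × Rd d => ‖F q‖ₑ * (u (τ (T • q.1) ω) * v (τ (T • q.2) ω)) :=
      fun u v hu hv => hFm.enorm.mul (((aux_meas1 hτmeas hu ω T).comp measurable_fst).mul
      ((aux_meas1 hτmeas hv ω T).comp measurable_snd))
    refine le_trans ?_ (add_le_add (add_le_add q1 q2) q3)
    rw [← lintegral_add_left (hmm _ _ hb₁ hm₂.enorm),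
      ← lintegral_add_right _ (hmm _ _ hb₁ hb₂)]
    refine lintegral_mono fun q => ?_
    simp only [← enorm_mul]
    refine le_trans (le_of_eq ?_) ((enorm_sub_le (a := F q * ((h₁ (τ (T • q.1) ω) -
      a₁ n (τ (T • q.1) ω)) * h₂ (τ (T • q.2) ω)) + F q * (h₁ (τ (T • q.1) ω) *
      (h₂ (τ (T • q.2) ω) - a₂ n (τ (T • q.2) ω))))).trans (add_le_add (enorm_add_le _ _) le_rfl))
    congr 1
    ring
  have herr : Tendsto (fun n => K * (m₁ n * V₂) + K * (V₁ * m₂ n) + K * (m₁ n * m₂ n))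
      atTop (𝓝 0) := by
    have z1 : Tendsto (fun n => K * (m₁ n * V₂)) atTop (𝓝 (K * (0 * V₂))) :=
      ENNReal.Tendsto.const_mul (ENNReal.Tendsto.mul_const ht₁ (Or.inr hf₂)) (Or.inr hK)
    have z2 : Tendsto (fun n => K * (V₁ * m₂ n)) atTop (𝓝 (K * (V₁ * 0))) :=
      ENNReal.Tendsto.const_mul (ENNReal.Tendsto.const_mul ht₂ (Or.inr hf₁)) (Or.inr hK)
    have z3 : Tendsto (fun n => K * (m₁ n * m₂ n)) atTop (𝓝 (K * (0 * 0))) :=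
      ENNReal.Tendsto.const_mul (ENNReal.Tendsto.mul ht₁ (Or.inr (by simp)) ht₂ (Or.inr (by simp)))
        (Or.inr hK)
    simpa using (z1.add z2).add z3
  have hcc : Tendsto (fun n => c₁ n * c₂ n * ∫ q, F q) atTop (𝓝 (C₁ * C₂ * ∫ q, F q)) :=
    (hc₁.mul hc₂).mul_const _
  rw [Metric.tendsto_nhds]
  intro e he
  have he3 : 0 < e / 3 := by linarith
  obtain ⟨n, hn1, hn2⟩ := ((herr.eventually (gt_mem_nhds (ENNReal.ofReal_pos.2 he3))).and
    (Metric.tendsto_nhds.1 hcc (e / 3) he3)).exists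
  have hpair := NiceP.pair hτmeas (ha₁ n) (ha₂ n) ω F hFi
  filter_upwards [Metric.tendsto_nhds.1 hpair (e / 3) he3, eventually_ge_atTop 1] with T hT1 hT2
  have hd := (hdiff n T hT2).trans_lt hn1
  rw [← edist_eq_enorm_sub, edist_lt_ofReal] at hd
  calc _ ≤ _ := dist_triangle4 _ _ _ _
    _ < e / 3 + e / 3 + e / 3 := add_lt_add (add_lt_add hd hT1) hn2
    _ = e := by ring

end Dyn

/-- **Proposition 3.1(ii)** (weak convergence of the truncated bilinear forms for
product-form coefficients).  If `𝔼[ν₁^p + ν₂^p] < ∞` for some `p > 1`, then almost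
surely, for every `η > 0`, every locally bounded measurable `f` and every bounded
measurable compactly supported `g`, the truncated bilinear form with coefficient
`ν₁(τ_{x/ε}ω)ν₂(τ_{y/ε}ω)` converges, as `ε → 0`, to `𝔼[ν₁]𝔼[ν₂]` times the
corresponding deterministic form. -/
theorem truncated_form_convergence_product
    {Ω : Type*} [MeasurableSpace Ω] (ℙ : Measure Ω) [IsProbabilityMeasure ℙ]
    (d : ℕ) (hd : 0 < d) (α : ℝ) (hα0 : 0 < α) (hα2 : α < 2)
    -- the stationary ergodic group of transformations
    (τ : Rd d → Ω → Ω)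
    (hτ0 : τ 0 = id)
    (hτadd : ∀ x y, τ x ∘ τ y = τ (x + y))
    (hτmeas : Measurable fun p : Rd d × Ω => τ p.1 p.2)
    (hτstat : ∀ x, MeasurePreserving (τ x) ℙ ℙ)
    (hτerg : ∀ A : Set Ω, MeasurableSet A → (∀ x, τ x ⁻¹' A = A) → ℙ A = 0 ∨ ℙ A = 1)
    -- the symmetric cone
    (Γ : Set (Rd d)) (hΓopen : IsOpen Γ) (hΓne : Γ.Nonempty)
    (hΓcone : ∀ x ∈ Γ, ∀ r : ℝ, r ≠ 0 → r • x ∈ Γ)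
    -- the random variables ν₁, ν₂ and the moment assumption
    (ν₁ ν₂ : Ω → ℝ) (hν₁meas : Measurable ν₁) (hν₂meas : Measurable ν₂)
    (hν₁nn : ∀ ω, 0 ≤ ν₁ ω) (hν₂nn : ∀ ω, 0 ≤ ν₂ ω)
    (p : ℝ) (hp : 1 < p)
    (hν₁mom : Integrable (fun ω => ν₁ ω ^ p) ℙ)
    (hν₂mom : Integrable (fun ω => ν₂ ω ^ p) ℙ) :
    ∃ Ω₂ : Set Ω, MeasurableSet Ω₂ ∧ ℙ Ω₂ = 1 ∧
      ∀ ω ∈ Ω₂, ∀ η : ℝ, 0 < η →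
      ∀ f : Rd d → ℝ, Measurable f →
        (∀ R : ℝ, 0 < R → ∃ M, ∀ x ∈ ball (0 : Rd d) R, |f x| ≤ M) →
      ∀ g : Rd d → ℝ, Measurable g → (∃ M, ∀ x, |g x| ≤ M) → HasCompactSupport g →
      Tendsto (fun ε : ℝ =>
          ∫ q in {q : Rd d × Rd d |
              η < ‖q.1 - q.2‖ ∧ ‖q.1 - q.2‖ < 1 / η ∧ q.1 - q.2 ∈ Γ},
            (f q.2 - f q.1) * (g q.2 - g q.1) / ‖q.1 - q.2‖ ^ ((d : ℝ) + α)
              * (ν₁ (τ (ε⁻¹ • q.1) ω) * ν₂ (τ (ε⁻¹ • q.2) ω)))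
        (𝓝[>] (0 : ℝ))
        (𝓝 ((∫ ω', ν₁ ω' ∂ℙ) * (∫ ω', ν₂ ω' ∂ℙ) *
          ∫ q in {q : Rd d × Rd d |
              η < ‖q.1 - q.2‖ ∧ ‖q.1 - q.2‖ < 1 / η ∧ q.1 - q.2 ∈ Γ},
            (f q.2 - f q.1) * (g q.2 - g q.1) / ‖q.1 - q.2‖ ^ ((d : ℝ) + α))) := by
  have hintg : ∀ ν : Ω → ℝ, Measurable ν → (∀ ω, 0 ≤ ν ω) →
      Integrable (fun ω => ν ω ^ p) ℙ → Integrable ν ℙ := by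
    intro ν hν hnn hmom
    refine (hmom.add (integrable_const (1 : ℝ))).mono' hν.aestronglyMeasurable
      (Eventually.of_forall fun ω => ?_)
    rw [Real.norm_eq_abs, abs_of_nonneg (hnn ω), Pi.add_apply]
    rcases le_total (ν ω) 1 with h | h
    · have := Real.rpow_nonneg (hnn ω) p
      linarith
    · have := Real.self_le_rpow_of_one_le h hp.le
      linarith
  obtain ⟨a₁, ha₁, hc₁, hae₁⟩ := aux_seq ℙ τ hτ0 hτadd hτmeas hτstat hτerg ν₁ hν₁meas
    (hintg ν₁ hν₁meas hν₁nn hν₁mom)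
  obtain ⟨a₂, ha₂, hc₂, hae₂⟩ := aux_seq ℙ τ hτ0 hτadd hτmeas hτstat hτerg ν₂ hν₂meas
    (hintg ν₂ hν₂meas hν₂nn hν₂mom)
  obtain ⟨s, hs1, hsm, hs⟩ := (hae₁.and hae₂).exists_measurable_mem
  refine ⟨s, hsm, (prob_compl_eq_zero_iff hsm).1 hs1, fun ω hω η hη f hf hfb g hg hgb hgc => ?_⟩
  obtain ⟨⟨hf₁, ht₁⟩, hf₂, ht₂⟩ := hs ω hω
  set S : Set (Rd d × Rd d) := {q : Rd d × Rd d |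
              η < ‖q.1 - q.2‖ ∧ ‖q.1 - q.2‖ < 1 / η ∧ q.1 - q.2 ∈ Γ} with hS
  have hsubm : Measurable fun q : Rd d × Rd d => q.1 - q.2 := measurable_fst.sub measurable_snd
  have hSm : MeasurableSet S :=
    (measurableSet_lt measurable_const hsubm.norm).inter
      ((measurableSet_lt hsubm.norm measurable_const).inter (hsubm hΓopen.measurableSet))
  set F₀ : Rd d × Rd d → ℝ := fun q =>
    (f q.2 - f q.1) * (g q.2 - g q.1) / ‖q.1 - q.2‖ ^ ((d : ℝ) + α) with hF₀
  have hF₀m : Measurable F₀ :=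
    (((hf.comp measurable_snd).sub (hf.comp measurable_fst)).mul
      ((hg.comp measurable_snd).sub (hg.comp measurable_fst))).div
      (hsubm.norm.pow_const _)
  set F : Rd d × Rd d → ℝ := S.indicator F₀ with hF
  have hFm : Measurable F := hF₀m.indicator hSm
  obtain ⟨R₀, hR₀⟩ := hgc.isCompact.isBounded.subset_closedBall (0 : Rd d)
  have hη1 : 0 < 1 / η := by positivity
  set R : ℝ := max 1 (|R₀| + 1 / η) with hR
  have hR1 : 1 ≤ R := le_max_left _ _
  have hR2 : |R₀| + 1 / η ≤ R := le_max_right _ _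
  have hgR : ∀ x, g x ≠ 0 → ‖x‖ ≤ |R₀| := fun x hx => by
    have := hR₀ (subset_tsupport g hx)
    rw [mem_closedBall_zero_iff] at this
    exact this.trans (le_abs_self _)
  have hsupp : ∀ q, F q ≠ 0 → q ∈ closedBall (0 : Rd d) R ×ˢ closedBall (0 : Rd d) R := by
    intro q hq
    have hqS : q ∈ S := by
      by_contra h
      exact hq (indicator_of_notMem h _)
    have hFq : F q = F₀ q := indicator_of_mem hqS _
    have hg0 : g q.1 ≠ 0 ∨ g q.2 ≠ 0 := by
      by_contra! h
      apply hq
      rw [hFq, hF₀]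
      simp [h.1, h.2]
    have hlt : ‖q.1 - q.2‖ < 1 / η := hqS.2.1
    simp only [mem_prod, mem_closedBall_zero_iff]
    rcases hg0 with h | h
    · have h1 := hgR _ h
      have h2 : ‖q.2‖ ≤ ‖q.1‖ + ‖q.1 - q.2‖ := by
        have := norm_sub_le q.1 (q.1 - q.2)
        rwa [sub_sub_cancel] at this
      constructor <;> linarith
    · have h1 := hgR _ h
      have h2 : ‖q.1‖ ≤ ‖q.2‖ + ‖q.1 - q.2‖ := by
        have := norm_add_le q.2 (q.1 - q.2)
        rwa [add_sub_cancel] at this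
      constructor <;> linarith
  obtain ⟨Mf, hMf⟩ := hfb (R + 1) (by linarith)
  obtain ⟨Mg, hMg⟩ := hgb
  have hMf0 : 0 ≤ Mf := (abs_nonneg _).trans (hMf 0 (mem_ball_self (by linarith)))
  have hMg0 : 0 ≤ Mg := (abs_nonneg _).trans (hMg 0)
  have hMF : ∀ q, |F q| ≤ (Mf + Mf) * (Mg + Mg) / η ^ ((d : ℝ) + α) := by
    intro q
    by_cases hq : F q = 0
    · rw [hq, abs_zero]; positivity
    · have hB := hsupp q hq
      have hqS : q ∈ S := by
        by_contra h
        exact hq (indicator_of_notMem h _)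
      have hFq : F q = F₀ q := indicator_of_mem hqS _
      have hsb : closedBall (0 : Rd d) R ⊆ ball 0 (R + 1) := closedBall_subset_ball (by linarith)
      rw [hFq, hF₀, abs_div, abs_mul, abs_of_nonneg (Real.rpow_nonneg (norm_nonneg _) _)]
      have h1 : |f q.2 - f q.1| ≤ Mf + Mf :=
        (abs_sub _ _).trans (add_le_add (hMf _ (hsb hB.2)) (hMf _ (hsb hB.1)))
      have h2 : |g q.2 - g q.1| ≤ Mg + Mg :=
        (abs_sub _ _).trans (add_le_add (hMg _) (hMg _))
      have h3 : η ^ ((d : ℝ) + α) ≤ ‖q.1 - q.2‖ ^ ((d : ℝ) + α) :=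
        Real.rpow_le_rpow hη.le hqS.1.le (by positivity)
      have h4 : 0 < η ^ ((d : ℝ) + α) := Real.rpow_pos_of_pos hη _
      gcongr
  have hmain := aux_determ τ hτmeas ν₁ ν₂ hν₁meas hν₂meas a₁ a₂ _ _ _ _ ha₁ ha₂ hc₁ hc₂ ω
    hf₁ hf₂ ht₁ ht₂ F hFm _ R hR1 hMF hsupp
  have hfin := hmain.comp tendsto_inv_nhdsGT_zero
  rw [hF, integral_indicator hSm] at hfin
  refine hfin.congr fun ε => ?_
  rw [← integral_indicator hSm]
  simp only [Function.comp]
  congr 1; ext q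
  by_cases hq : q ∈ S <;> simp [hq, hF₀]

end
end
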